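/- Let G be a finite non-abelian group. If the average degree of the non-linear irreducible complex characters of G is strictly less than 29/8, then G is solvable. -/

import Mathlib

open scoped BigOperators Classical
open CategoryTheory

/-- `χ : G → ℂ` is the character of an irreducible complex representation of `G`. -/
def IsIrrChar (G : Type) [Group G] (χ : G → ℂ) : Prop :=
  ∃ V : FDRep ℂ G, Simple V ∧ ∀ g, V.character g = χ g

/-- A character is rational-valued if all its values lie in `ℚ`. -/
def RatValued {G : Type} (χ : G → ℂ) : Prop := ∀ g, ∃ q : ℚ, χ g = (q : ℂ)

/-- A character is real-valued if all its values lie in `ℝ`. -/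
def RealValued {G : Type} (χ : G → ℂ) : Prop := ∀ g, (χ g).im = 0

/-- A character has even degree. -/
def EvenDeg {G : Type} [One G] (χ : G → ℂ) : Prop := ∃ k : ℕ, χ 1 = ((2 * k : ℕ) : ℂ)

/-- The kernel of the character `χ` contains the subgroup `N`. -/
def KerContains {G : Type} [Group G] (χ : G → ℂ) (N : Subgroup G) : Prop :=
  ∀ n ∈ N, χ n = χ 1

/-- The induced class function `f ^ G` of `f : N → ℂ`. -/
noncomputable def Ind {G : Type} [Group G] [Fintype G] (N : Subgroup G) (f : ↥N → ℂ) : G → ℂ :=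
  fun g => (Nat.card N : ℂ)⁻¹ *
    ∑ x : G, if h : x⁻¹ * g * x ∈ N then f ⟨x⁻¹ * g * x, h⟩ else 0

/-- The standard inner product of class functions on a finite group. -/
noncomputable def cInner {G : Type} [Fintype G] (f g : G → ℂ) : ℂ :=
  (Fintype.card G : ℂ)⁻¹ * ∑ x : G, f x * (starRingEnd ℂ) (g x)

/-- `χ` is an irreducible constituent of the class function `f`. -/
def IsConstituent {G : Type} [Group G] [Fintype G] (f χ : G → ℂ) : Prop :=
  IsIrrChar G χ ∧ cInner f χ ≠ 0

lemma lam_congr {G : Type} [Group G] {N : Subgroup G} (lam : ↥N → ℂ)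
    {x y : G} (px : x ∈ N) (py : y ∈ N) (h : x = y) : lam ⟨x, px⟩ = lam ⟨y, py⟩ := by
  subst h; rfl

/-- The inertia group `I_G(λ)` of a character `λ` of a normal subgroup `N` of `G`. -/
def inertia {G : Type} [Group G] (N : Subgroup G) [hN : N.Normal] (lam : ↥N → ℂ) :
    Subgroup G where
  carrier := {g | ∀ n : ↥N, lam ⟨g * n * g⁻¹, hN.conj_mem n n.2 g⟩ = lam n}
  one_mem' := by
    intro n
    exact lam_congr lam _ n.2 (by group)
  mul_mem' := by
    intro a b ha hb n
    have h1 := ha ⟨(b : G) * n * b⁻¹, hN.conj_mem _ n.2 b⟩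
    calc lam ⟨(a * b) * n * (a * b)⁻¹, _⟩
        = lam ⟨a * ((b : G) * n * b⁻¹) * a⁻¹, hN.conj_mem _ (hN.conj_mem _ n.2 b) a⟩ :=
          lam_congr lam _ _ (by group)
      _ = lam ⟨(b : G) * n * b⁻¹, hN.conj_mem _ n.2 b⟩ := h1
      _ = lam n := hb n
  inv_mem' := by
    intro a ha n
    have h1 := ha ⟨a⁻¹ * (n : G) * a⁻¹⁻¹, hN.conj_mem _ n.2 a⁻¹⟩
    have h2 : lam ⟨a * (a⁻¹ * (n : G) * a⁻¹⁻¹) * a⁻¹,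
        hN.conj_mem _ (hN.conj_mem _ n.2 a⁻¹) a⟩ = lam n :=
      lam_congr lam _ n.2 (by group)
    exact h1.symm.trans h2

set_option linter.unusedSectionVars false
set_option linter.unusedVariables false
namespace ACD
open Module

section base
variable {G : Type} [Group G] [Fintype G]

/-- bilinear inner product -/
noncomputable def ip (f h : G → ℂ) : ℂ := (Nat.card G : ℂ)⁻¹ * ∑ g, f g * h g⁻¹

/-- contragredient function -/
def dl (f : G → ℂ) : G → ℂ := fun g => f g⁻¹

lemma cardne : (Nat.card G : ℂ) ≠ 0 := by
  exact_mod_cast Nat.card_pos.ne'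

lemma ip_add_left (a b c : G → ℂ) : ip (a + b) c = ip a c + ip b c := by
  simp [ip, add_mul, Finset.sum_add_distrib, mul_add]
lemma ip_add_right (a b c : G → ℂ) : ip c (a + b) = ip c a + ip c b := by
  simp [ip, Finset.sum_add_distrib, mul_add]
lemma ip_sub_left (a b c : G → ℂ) : ip (a - b) c = ip a c - ip b c := by
  simp [ip, sub_mul, Finset.sum_sub_distrib, mul_sub]
lemma ip_sub_right (a b c : G → ℂ) : ip c (a - b) = ip c a - ip c b := by
  simp [ip, Finset.sum_sub_distrib, mul_sub]
lemma ip_smul_left (r : ℂ) (a c : G → ℂ) : ip (r • a) c = r * ip a c := by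
  simp only [ip, Pi.smul_apply, smul_eq_mul, Finset.mul_sum]
  exact Finset.sum_congr rfl fun _ _ => by ring
lemma ip_smul_right (r : ℂ) (a c : G → ℂ) : ip c (r • a) = r * ip c a := by
  simp only [ip, Pi.smul_apply, smul_eq_mul, Finset.mul_sum]
  exact Finset.sum_congr rfl fun _ _ => by ring
lemma ip_sum_left {ι : Type*} (s : Finset ι) (f : ι → G → ℂ) (c : G → ℂ) :
    ip (∑ i ∈ s, f i) c = ∑ i ∈ s, ip (f i) c := by
  induction s using Finset.induction_on with
  | empty => simp [ip]
  | insert a s ha ih => rw [Finset.sum_insert ha, Finset.sum_insert ha, ip_add_left, ih]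
lemma ip_sum_right {ι : Type*} (s : Finset ι) (f : ι → G → ℂ) (c : G → ℂ) :
    ip c (∑ i ∈ s, f i) = ∑ i ∈ s, ip c (f i) := by
  induction s using Finset.induction_on with
  | empty => simp [ip]
  | insert a s ha ih => rw [Finset.sum_insert ha, Finset.sum_insert ha, ip_add_right, ih]
lemma ip_zero_left (c : G → ℂ) : ip 0 c = 0 := by simp [ip]
lemma ip_zero_right (c : G → ℂ) : ip c 0 = 0 := by simp [ip]
lemma ip_comm (a b : G → ℂ) : ip a b = ip b a := by
  unfold ip
  congr 1
  rw [← Equiv.sum_comp (Equiv.inv G)]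
  exact Finset.sum_congr rfl fun g _ => by simp [mul_comm]
lemma ip_mul_left (a b c : G → ℂ) : ip (a * b) c = ip a (dl b * c) := by
  unfold ip dl
  congr 1
  exact Finset.sum_congr rfl fun g _ => by simp [mul_assoc]
lemma ip_mul_right (a b c : G → ℂ) : ip a (b * c) = ip (a * dl b) c := by
  unfold ip dl
  congr 1
  exact Finset.sum_congr rfl fun g _ => by simp [mul_assoc]
lemma ip_dl (a b : G → ℂ) : ip (dl a) (dl b) = ip a b := by
  rw [ip_comm]; unfold ip dl
  congr 1
  exact Finset.sum_congr rfl fun g _ => by simp [mul_comm]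

@[simp] lemma dl_dl (a : G → ℂ) : dl (dl a) = a := by funext g; simp [dl]
@[simp] lemma dl_one : dl (1 : G → ℂ) = 1 := by funext g; simp [dl]
@[simp] lemma dl_mul (a b : G → ℂ) : dl (a * b) = dl a * dl b := rfl
@[simp] lemma dl_add (a b : G → ℂ) : dl (a + b) = dl a + dl b := rfl
@[simp] lemma dl_sub (a b : G → ℂ) : dl (a - b) = dl a - dl b := rfl
@[simp] lemma dl_zero : dl (0 : G → ℂ) = 0 := rfl
lemma dl_at_one (a : G → ℂ) : dl a 1 = a 1 := by simp [dl]

/-- irreducible characters -/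
abbrev Irr (χ : G → ℂ) : Prop := IsIrrChar G χ

/-- characters of representations on arbitrary spaces -/
def RCh (φ : G → ℂ) : Prop :=
  ∃ (V : Type) (_ : AddCommGroup V) (_ : Module ℂ V) (_ : FiniteDimensional ℂ V)
    (ρ : Representation ℂ G V), ρ.character = φ

/-- characters, as sums of irreducible characters -/
def IsChar (φ : G → ℂ) : Prop := ∃ s : Multiset (G → ℂ), (∀ χ ∈ s, Irr χ) ∧ φ = s.sum

lemma RCh.fdrep {φ : G → ℂ} (h : RCh φ) : ∃ V : FDRep ℂ G, V.character = φ := by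
  obtain ⟨V, _, _, _, ρ, rfl⟩ := h
  exact ⟨FDRep.of ρ, by funext g; rfl⟩

lemma rch_of_fdrep (V : FDRep ℂ G) : RCh V.character :=
  ⟨V, _, _, inferInstance, V.ρ, by funext g; rfl⟩

lemma Irr.rch {χ : G → ℂ} (h : Irr χ) : RCh χ := by
  obtain ⟨V, _, hV⟩ := h
  have : V.character = χ := funext hV
  exact this ▸ rch_of_fdrep V

lemma ip_irr_self {χ : G → ℂ} (h : Irr χ) : ip χ χ = 1 := by
  obtain ⟨V, hs, hV⟩ := h
  have : V.character = χ := funext hV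
  subst this
  rw [FDRep.simple_iff_char_is_norm_one] at hs
  rw [ip, hs, inv_mul_cancel₀ cardne]

lemma irr_of_rch {χ : G → ℂ} (h : RCh χ) (h1 : ip χ χ = 1) : Irr χ := by
  obtain ⟨V, rfl⟩ := h.fdrep
  refine ⟨V, ?_, fun g => rfl⟩
  rw [FDRep.simple_iff_char_is_norm_one]
  rw [ip, inv_mul_eq_one₀ cardne] at h1
  exact h1.symm

lemma ip_irr_ne {χ ψ : G → ℂ} (h : Irr χ) (h' : Irr ψ) (hne : χ ≠ ψ) : ip χ ψ = 0 := by
  obtain ⟨V, hs, hV⟩ := h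
  obtain ⟨W, hs', hW⟩ := h'
  have e1 : V.character = χ := funext hV
  have e2 : W.character = ψ := funext hW
  subst e1 e2
  have := invertibleOfNonzero (cardne (G := G))
  have := FDRep.char_orthonormal V W
  rw [if_neg] at this
  · simpa [ip] using this
  · rintro ⟨i⟩
    exact hne (FDRep.char_iso i)

lemma ip_irr {χ ψ : G → ℂ} (h : Irr χ) (h' : Irr ψ) : ip χ ψ = if χ = ψ then 1 else 0 := by
  split_ifs with e
  · subst e; exact ip_irr_self h
  · exact ip_irr_ne h h' e

lemma rch_mul {a b : G → ℂ} (ha : RCh a) (hb : RCh b) : RCh (a * b) := by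
  obtain ⟨V, rfl⟩ := ha.fdrep
  obtain ⟨W, rfl⟩ := hb.fdrep
  rw [← FDRep.char_tensor]
  exact rch_of_fdrep _

lemma rch_dl {a : G → ℂ} (ha : RCh a) : RCh (dl a) := by
  obtain ⟨V, _, _, _, ρ, rfl⟩ := ha
  exact ⟨Module.Dual ℂ V, _, _, inferInstance, ρ.dual, by funext g; exact ρ.char_dual g⟩

lemma ischar_zero : IsChar (0 : G → ℂ) := ⟨0, by simp, by simp⟩
lemma Irr.ischar {χ : G → ℂ} (h : Irr χ) : IsChar χ := ⟨{χ}, by simpa using h, by simp⟩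
lemma IsChar.add {a b : G → ℂ} (ha : IsChar a) (hb : IsChar b) : IsChar (a + b) := by
  obtain ⟨s, hs, rfl⟩ := ha
  obtain ⟨t, ht, rfl⟩ := hb
  refine ⟨s + t, ?_, by simp⟩
  intro χ hχ
  rcases Multiset.mem_add.1 hχ with h | h
  exacts [hs _ h, ht _ h]

lemma irr_of_isIrreducible {V : Type} [AddCommGroup V] [Module ℂ V] [FiniteDimensional ℂ V]
    (ρ : Representation ℂ G V) [ρ.IsIrreducible] : Irr ρ.character := by
  apply irr_of_rch ⟨V, _, _, inferInstance, ρ, rfl⟩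
  have := invertibleOfNonzero (cardne (G := G))
  have := ρ.card_inv_mul_sum_char_mul_char_eq_finrank ρ
  rw [ip, this]
  simp

lemma rch_ischar_aux (n : ℕ) : ∀ (V : Type) [AddCommGroup V] [Module ℂ V] [FiniteDimensional ℂ V]
    (ρ : Representation ℂ G V), finrank ℂ V ≤ n → IsChar ρ.character := by
  induction n with
  | zero =>
    intro V _ _ _ ρ h
    have : Subsingleton V := finrank_zero_iff.1 (Nat.le_zero.1 h)
    have : ρ.character = 0 := by
      funext g
      have : ρ g = 0 := Subsingleton.elim _ _
      simp [Representation.character, this]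
    rw [this]; exact ischar_zero
  | succ n ih =>
    intro V _ _ _ ρ h
    by_cases hi : ρ.IsIrreducible
    · exact (irr_of_isIrreducible ρ).ischar
    by_cases hn : Subsingleton V
    · have : ρ.character = 0 := by
        funext g
        have : ρ g = 0 := Subsingleton.elim _ _
        simp [Representation.character, this]
      rw [this]; exact ischar_zero
    have hnt : Nontrivial V := not_subsingleton_iff_nontrivial.1 hn
    have hnt' : Nontrivial (Subrepresentation ρ) := by
      refine ⟨⊥, ⊤, fun hh => ?_⟩
      have := congrArg Subrepresentation.toSubmodule hh
      exact bot_ne_top (α := Submodule ℂ V) this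
    have : ∃ σ : Subrepresentation ρ, σ ≠ ⊥ ∧ σ ≠ ⊤ := by
      by_contra hcon
      push Not at hcon
      exact hi ⟨fun a => or_iff_not_imp_left.2 (hcon a)⟩
    obtain ⟨σ, hb, ht⟩ := this
    have : NeZero (Nat.card G : ℂ) := ⟨cardne⟩
    obtain ⟨τ, hτ⟩ := exists_isCompl σ
    have hc : IsCompl σ.toSubmodule τ.toSubmodule := by
      constructor
      · rw [disjoint_iff]
        exact congrArg Subrepresentation.toSubmodule (disjoint_iff.1 hτ.1)
      · rw [codisjoint_iff]
        exact congrArg Subrepresentation.toSubmodule (codisjoint_iff.1 hτ.2)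
    have hfr := Submodule.finrank_add_eq_of_isCompl hc
    have h1 : finrank ℂ σ.toSubmodule ≠ 0 := by
      intro h0
      exact hb (Subrepresentation.toSubmodule_injective (Submodule.finrank_eq_zero.1 h0))
    have h2 : finrank ℂ τ.toSubmodule ≠ 0 := by
      intro h0
      have : τ.toSubmodule = ⊥ := Submodule.finrank_eq_zero.1 h0
      rw [this] at hc
      have := hc.sup_eq_top
      rw [sup_bot_eq] at this
      exact ht (Subrepresentation.toSubmodule_injective this)
    have key : ρ.character = σ.toRepresentation.character + τ.toRepresentation.character := by
      funext g
      let N : Bool → Submodule ℂ V := fun b => if b then σ.toSubmodule else τ.toSubmodule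
      have hN : DirectSum.IsInternal N := by
        rw [DirectSum.isInternal_submodule_iff_isCompl N (i := true) (j := false) (by simp)
          (by ext b; cases b <;> simp)]
        simpa [N] using hc
      have hm : ∀ b, Set.MapsTo (ρ g) (N b) (N b) := by
        intro b v hv
        cases b
        · exact τ.apply_mem_toSubmodule g hv
        · exact σ.apply_mem_toSubmodule g hv
      have := LinearMap.trace_eq_sum_trace_restrict hN (f := ρ g) hm
      rw [Fintype.sum_bool] at this
      exact this
    rw [key]
    exact (ih _ _ (by omega)).add (ih _ _ (by omega))

lemma RCh.ischar {φ : G → ℂ} (h : RCh φ) : IsChar φ := by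
  obtain ⟨V, _, _, _, ρ, rfl⟩ := h
  exact rch_ischar_aux _ V ρ le_rfl

end base
end ACD

set_option linter.unusedSectionVars false
set_option linter.unusedVariables false
namespace ACD
open Module

section base2
variable {G : Type} [Group G] [Fintype G]

@[elab_as_elim]
lemma IsChar.ind {P : ∀ φ : G → ℂ, IsChar φ → Prop} (h0 : P 0 ischar_zero)
    (hadd : ∀ χ φ (hχ : Irr χ) (hφ : IsChar φ), P φ hφ → P (χ + φ) (hχ.ischar.add hφ))
    {φ : G → ℂ} (hφ : IsChar φ) : P φ hφ := by
  obtain ⟨s, hs, rfl⟩ := hφ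
  induction s using Multiset.induction_on with
  | empty => simpa using h0
  | cons a s ih =>
    have h1 := hadd _ _ (hs a (by simp)) ⟨s, fun χ h => hs χ (by simp [h]), rfl⟩
      (ih fun χ h => hs χ (by simp [h]))
    have e : (a ::ₘ s).sum = a + s.sum := Multiset.sum_cons a s
    have : ∀ (ψ : G → ℂ) (hψ : IsChar ψ) (ψ' : G → ℂ) (hψ' : IsChar ψ'), ψ = ψ' → P ψ hψ →
        P ψ' hψ' := by
      rintro ψ hψ _ hψ' rfl h; exact h
    exact this _ _ _ _ e.symm h1

lemma irr_dl {χ : G → ℂ} (h : Irr χ) : Irr (dl χ) :=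
  irr_of_rch (rch_dl h.rch) (by rw [ip_dl, ip_irr_self h])

lemma ischar_dl {φ : G → ℂ} (h : IsChar φ) : IsChar (dl φ) := by
  induction h using IsChar.ind with
  | h0 => exact ischar_zero
  | hadd χ φ hχ hφ ih => exact (irr_dl hχ).ischar.add ih

lemma IsChar.mul {a b : G → ℂ} (ha : IsChar a) (hb : IsChar b) : IsChar (a * b) := by
  induction ha using IsChar.ind with
  | h0 => rw [zero_mul]; exact ischar_zero
  | hadd χ φ hχ hφ ih =>
    rw [add_mul]
    refine IsChar.add ?_ ih
    clear ih
    induction hb using IsChar.ind with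
    | h0 => rw [mul_zero]; exact ischar_zero
    | hadd χ' φ' hχ' hφ' ih' =>
      rw [mul_add]
      exact (rch_mul hχ.rch hχ'.rch).ischar.add ih'

/-- a matrix representation gives a character -/
lemma rch_of_mat {ι : Type} [Fintype ι] [DecidableEq ι] (ρ : G →* Matrix ι ι ℂ) :
    RCh (fun g => (ρ g).trace) := by
  refine ⟨ι → ℂ, _, _, inferInstance,
    ((Matrix.toLinAlgEquiv' : Matrix ι ι ℂ ≃ₐ[ℂ] _) : Matrix ι ι ℂ →* _).comp ρ, ?_⟩
  funext g
  exact Matrix.trace_toLin'_eq (ρ g)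

lemma RCh.mat {φ : G → ℂ} (h : RCh φ) : ∃ (n : ℕ) (ρ : G →* Matrix (Fin n) (Fin n) ℂ),
    (∀ g, φ g = (ρ g).trace) := by
  obtain ⟨V, _, _, _, ρ, rfl⟩ := h
  let b := Module.finBasis ℂ V
  refine ⟨_, (LinearMap.toMatrixAlgEquiv b).toRingEquiv.toMulEquiv.toMonoidHom.comp ρ, ?_⟩
  intro g
  exact LinearMap.trace_eq_matrix_trace ℂ b (ρ g)

lemma schur_mat {n : ℕ} (ρ : G →* Matrix (Fin n) (Fin n) ℂ)
    (h : ip (fun g => (ρ g).trace) (fun g => (ρ g).trace) = 1)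
    (A : Matrix (Fin n) (Fin n) ℂ) (hA : ∀ g, A * ρ g = ρ g * A) : ∃ c : ℂ, A = c • 1 := by
  let e : Matrix (Fin n) (Fin n) ℂ ≃ₐ[ℂ] ((Fin n → ℂ) →ₗ[ℂ] (Fin n → ℂ)) :=
    Matrix.toLinAlgEquiv'
  let σ : Representation ℂ G (Fin n → ℂ) := (e : _ →* _).comp ρ
  have hσ : ∀ g, σ g = e (ρ g) := fun g => rfl
  have hch : σ.character = fun g => (ρ g).trace := by
    funext g
    exact Matrix.trace_toLin'_eq (ρ g)
  have := invertibleOfNonzero (cardne (G := G))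
  have h1 := σ.card_inv_mul_sum_char_mul_char_eq_finrank σ
  rw [hch] at h1
  have h2 : ((finrank ℂ (Representation.IntertwiningMap σ σ) : ℕ) : ℂ) = 1 := by
    rw [← h1]; exact h
  have h3 : finrank ℂ (Representation.IntertwiningMap σ σ) = 1 := by exact_mod_cast h2
  let f : Representation.IntertwiningMap σ σ := ⟨e A, fun g => by
    have := congrArg e (hA g)
    rw [map_mul, map_mul] at this
    exact this⟩
  let i : Representation.IntertwiningMap σ σ := ⟨e 1, fun g => by
    have : e (1 * ρ g) = e (ρ g * 1) := by rw [one_mul, mul_one]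
    rw [map_mul, map_mul] at this
    exact this⟩
  by_cases hi : i = 0
  · have h0 : e 1 = 0 := congrArg (fun x => x.toLinearMap) hi
    rw [map_eq_zero_iff _ e.injective] at h0
    exact ⟨0, by rw [← mul_one A, h0]; simp⟩
  · obtain ⟨c, hc⟩ := (finrank_eq_one_iff_of_nonzero' i hi).1 h3 f
    refine ⟨c, e.injective ?_⟩
    rw [map_smul]
    exact (congrArg (fun x => x.toLinearMap) hc).symm

lemma Irr.mat {χ : G → ℂ} (h : Irr χ) : ∃ (n : ℕ) (ρ : G →* Matrix (Fin n) (Fin n) ℂ),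
    (∀ g, χ g = (ρ g).trace) ∧ (χ 1 = n) ∧
    ∀ A : Matrix (Fin n) (Fin n) ℂ, (∀ g, A * ρ g = ρ g * A) → ∃ c : ℂ, A = c • 1 := by
  obtain ⟨n, ρ, hρ⟩ := h.rch.mat
  have : χ = fun g => (ρ g).trace := funext hρ
  refine ⟨n, ρ, hρ, by rw [hρ]; simp, schur_mat ρ ?_⟩
  rw [← this, ip_irr_self h]

lemma irr_ne_zero {χ : G → ℂ} (h : Irr χ) : χ ≠ 0 := by
  rintro rfl
  have := ip_irr_self h
  rw [ip_zero_left] at this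
  exact zero_ne_one this

lemma Irr.deg {χ : G → ℂ} (h : Irr χ) : ∃ n : ℕ, 0 < n ∧ χ 1 = n := by
  obtain ⟨n, ρ, hρ, h1, -⟩ := h.mat
  refine ⟨n, Nat.pos_of_ne_zero ?_, h1⟩
  rintro rfl
  apply irr_ne_zero h
  funext g
  rw [hρ]
  simp [Matrix.trace]

lemma IsChar.deg {φ : G → ℂ} (h : IsChar φ) : ∃ n : ℕ, φ 1 = n := by
  induction h using IsChar.ind with
  | h0 => exact ⟨0, by simp⟩
  | hadd χ φ hχ hφ ih =>
    obtain ⟨n, hn⟩ := ih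
    obtain ⟨m, -, hm⟩ := hχ.deg
    exact ⟨m + n, by rw [Pi.add_apply, hn, hm]; push_cast; rfl⟩

lemma IsChar.eq_zero {φ : G → ℂ} (h : IsChar φ) (h0 : φ 1 = 0) : φ = 0 := by
  induction h using IsChar.ind with
  | h0 => rfl
  | hadd χ φ hχ hφ ih =>
    obtain ⟨n, hn⟩ := hφ.deg
    obtain ⟨m, hm0, hm⟩ := hχ.deg
    rw [Pi.add_apply, hn, hm] at h0
    exfalso
    have : m + n = 0 := by exact_mod_cast h0
    omega

lemma ip_nat_irr {φ χ : G → ℂ} (h : IsChar φ) (hχ : Irr χ) : ∃ n : ℕ, ip φ χ = n := by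
  induction h using IsChar.ind with
  | h0 => exact ⟨0, by simp [ip_zero_left]⟩
  | hadd ψ φ hψ hφ ih =>
    obtain ⟨n, hn⟩ := ih
    rw [ip_add_left, hn, ip_irr hψ hχ]
    split_ifs
    · exact ⟨1 + n, by push_cast; rfl⟩
    · exact ⟨n, by simp⟩

lemma ip_nat {φ ψ : G → ℂ} (h : IsChar φ) (h' : IsChar ψ) : ∃ n : ℕ, ip φ ψ = n := by
  induction h' using IsChar.ind with
  | h0 => exact ⟨0, by simp [ip_zero_right]⟩
  | hadd χ ψ hχ hψ ih =>
    obtain ⟨n, hn⟩ := ih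
    obtain ⟨m, hm⟩ := ip_nat_irr h hχ
    exact ⟨m + n, by rw [ip_add_right, hn, hm]; push_cast; rfl⟩

lemma peel {φ χ : G → ℂ} (h : IsChar φ) (hχ : Irr χ) (hne : ip φ χ ≠ 0) : IsChar (φ - χ) := by
  obtain ⟨s, hs, rfl⟩ := h
  have : χ ∈ s := by
    by_contra hcon
    apply hne
    induction s using Multiset.induction_on with
    | empty => simp [ip_zero_left]
    | cons a s ih =>
      rw [Multiset.sum_cons, ip_add_left, ip_irr_ne (hs a (by simp)) hχ (by
        rintro rfl; exact hcon (by simp)), zero_add]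
      by_contra h0
      exact h0 (ih (fun χ h => hs χ (by simp [h])) (by simpa [ip_add_left, ip_irr_ne (hs a (by simp)) hχ (by
        rintro rfl; exact hcon (by simp))] using h0) (fun h => hcon (by simp [h])))
  obtain ⟨t, rfl⟩ := Multiset.exists_cons_of_mem this
  refine ⟨t, fun χ h => hs χ (by simp [h]), ?_⟩
  rw [Multiset.sum_cons]; abel

/-- dichotomy: zero, or splits off an irreducible -/
lemma IsChar.cases {φ : G → ℂ} (h : IsChar φ) : φ = 0 ∨ ∃ χ ψ, Irr χ ∧ IsChar ψ ∧ φ = χ + ψ := by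
  induction h using IsChar.ind with
  | h0 => exact Or.inl rfl
  | hadd χ φ hχ hφ ih => exact Or.inr ⟨χ, φ, hχ, hφ, rfl⟩

lemma IsChar.exists_const {φ : G → ℂ} (h : IsChar φ) (h0 : φ ≠ 0) : ∃ χ, Irr χ ∧ ip φ χ ≠ 0 := by
  rcases h.cases with h | ⟨χ, ψ, hχ, hψ, rfl⟩
  · exact absurd h h0
  · refine ⟨χ, hχ, ?_⟩
    obtain ⟨n, hn⟩ := ip_nat_irr hψ hχ
    rw [ip_add_left, hn, ip_irr_self hχ]
    norm_cast; omega

/-- Splitting off a constituent of small degree. -/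
lemma IsChar.split {φ : G → ℂ} (h : IsChar φ) (h0 : φ ≠ 0) :
    Irr φ ∨ ∃ (A B : G → ℂ) (a b : ℕ), Irr A ∧ IsChar B ∧ φ = A + B ∧ A 1 = a ∧ B 1 = b ∧
      0 < a ∧ a ≤ b := by
  rcases h.cases with h | ⟨χ, ψ, hχ, hψ, rfl⟩
  · exact absurd h h0
  rcases hψ.cases with h | ⟨χ', ψ', hχ', hψ', rfl⟩
  · left; rw [h, add_zero]; exact hχ
  right
  obtain ⟨a, ha0, ha⟩ := hχ.deg
  obtain ⟨b, hb0, hb⟩ := hχ'.deg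
  obtain ⟨c, hc⟩ := hψ'.deg
  rcases le_total a b with hab | hab
  · exact ⟨χ, χ' + ψ', a, b + c, hχ, hψ, rfl, ha, by rw [Pi.add_apply, hb, hc]; push_cast; rfl,
      ha0, by omega⟩
  · exact ⟨χ', χ + ψ', b, a + c, hχ', hχ.ischar.add hψ', by abel, hb,
      by rw [Pi.add_apply, ha, hc]; push_cast; rfl, hb0, by omega⟩

lemma irr_of_norm {φ : G → ℂ} (h : IsChar φ) (h1 : ip φ φ = 1) : Irr φ := by
  rcases h.cases with rfl | ⟨χ, ψ, hχ, hψ, rfl⟩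
  · rw [ip_zero_left] at h1; exact absurd h1 zero_ne_one
  · obtain ⟨n, hn⟩ := ip_nat_irr hψ hχ
    have hψ0 : ψ = 0 := by
      by_contra h0
      obtain ⟨ξ, hξ, hne⟩ := hψ.exists_const h0
      have hp := peel hψ hξ hne
      set ω := ψ - ξ with hω
      have : ψ = ξ + ω := by rw [hω]; abel
      rw [this] at h1 hn
      obtain ⟨m, hm⟩ := ip_nat (hχ.ischar) hξ.ischar
      obtain ⟨k, hk⟩ := ip_nat (hχ.ischar) hp
      obtain ⟨l, hl⟩ := ip_nat hξ.ischar hp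
      obtain ⟨r, hr⟩ := ip_nat hp hp
      simp only [ip_add_left, ip_add_right, ip_comm ξ χ, ip_comm ω χ, ip_comm ω ξ, hm, hk, hl, hr,
        ip_irr_self hχ, ip_irr_self hξ] at h1
      have : 1 + (m + k) + (m + (1 + l) + (k + (l + r))) = 1 := by
        have h1' : ((1 + (m + k) + (m + (1 + l) + (k + (l + r))) : ℕ) : ℂ) = (1 : ℕ) := by
          push_cast; linear_combination h1
        exact_mod_cast h1'
      omega
    rw [hψ0, add_zero]; exact hχ

/-- no small constituents implies irreducible -/
lemma irr_of_no_small {φ : G → ℂ} (d : ℕ) (h : IsChar φ) (hd : φ 1 = d) (hd0 : 0 < d)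
    (hs : ∀ χ (k : ℕ), Irr χ → χ 1 = k → 2 * k ≤ d → ip φ χ = 0) : Irr φ := by
  have h0 : φ ≠ 0 := by
    rintro rfl
    rw [Pi.zero_apply] at hd
    have : d = 0 := by exact_mod_cast hd.symm
    omega
  rcases h.split h0 with h | ⟨A, B, a, b, hA, hB, rfl, ha, hb, ha0, hab⟩
  · exact h
  · exfalso
    rw [Pi.add_apply, ha, hb] at hd
    have : a + b = d := by exact_mod_cast hd
    have := hs A a hA ha (by omega)
    obtain ⟨n, hn⟩ := ip_nat_irr hB hA
    rw [ip_add_left, hn, ip_irr_self hA] at this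
    norm_cast at this; omega

lemma irr_one : Irr (1 : G → ℂ) := by
  have : (1 : G → ℂ) = fun g => ((1 : G →* Matrix (Fin 1) (Fin 1) ℂ) g).trace := by
    funext g; simp
  apply irr_of_rch
  · rw [this]; exact rch_of_mat _
  · simp [ip, ← Nat.card_eq_fintype_card]

/-- class functions -/
def Cls (f : G → ℂ) : Prop := ∀ g h, f (g * h) = f (h * g)

lemma IsChar.cls {φ : G → ℂ} (h : IsChar φ) : Cls φ := by
  induction h using IsChar.ind with
  | h0 => intro g h; rfl
  | hadd χ φ hχ hφ ih =>
    intro g h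
    obtain ⟨n, ρ, hρ, -⟩ := hχ.mat
    rw [Pi.add_apply, Pi.add_apply, ih g h, hρ, hρ, map_mul, map_mul, Matrix.trace_mul_comm]

/-- Convolution of class functions with irreducible characters. -/
lemma conv_irr {χ f : G → ℂ} (hχ : Irr χ) (hf : Cls f) (h : G) :
    χ 1 * ∑ g, f g * χ (g⁻¹ * h) = Nat.card G * ip f χ * χ h := by
  obtain ⟨n, ρ, hρ, h1, hsch⟩ := hχ.mat
  obtain ⟨c, hc⟩ := hsch (∑ g, f g • ρ g⁻¹) (by
    intro x
    rw [Finset.sum_mul, Finset.mul_sum, ← Equiv.sum_comp (MulAut.conj x).toEquiv]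
    refine Finset.sum_congr rfl fun g _ => ?_
    have e1 : f ((MulAut.conj x).toEquiv g) = f g := by
      show f (x * g * x⁻¹) = f g
      rw [hf, ← mul_assoc, inv_mul_cancel, one_mul]
    rw [e1, smul_mul_assoc, mul_smul_comm, ← map_mul, ← map_mul]
    congr 2
    show (x * g * x⁻¹)⁻¹ * x = _
    group)
  have ht := congrArg Matrix.trace hc
  simp only [Matrix.trace_sum, Matrix.trace_smul, ← hρ, smul_eq_mul, Matrix.trace_one,
    Fintype.card_fin] at ht
  have ht' : (Nat.card G : ℂ) * ip f χ = c * n := by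
    rw [ip, mul_inv_cancel_left₀ cardne, ht]
  rw [ht']
  have h2 : ∑ g, f g * χ (g⁻¹ * h) = c * χ h := by
    have := congrArg (fun M => (M * ρ h).trace) hc
    simp only [Finset.sum_mul, Matrix.trace_sum, smul_mul_assoc, one_mul, ← map_mul,
      Matrix.trace_smul, ← hρ, smul_eq_mul] at this
    exact this
  rw [h2, h1]; ring

/-- regular character -/
lemma ischar_reg : IsChar (fun g : G => if g = 1 then (Nat.card G : ℂ) else 0) := by
  let ρ : G →* Matrix G G ℂ :=
    { toFun := fun g => Matrix.of fun x y => if x = g * y then 1 else 0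
      map_one' := by
        ext x y
        simp [Matrix.one_apply]
      map_mul' := by
        intro a b
        ext x y
        simp [Matrix.mul_apply, mul_assoc] }
  have : (fun g : G => if g = 1 then (Nat.card G : ℂ) else 0) = fun g => (ρ g).trace := by
    funext g
    simp only [Matrix.trace, Matrix.diag, ρ, MonoidHom.coe_mk, OneHom.coe_mk, Matrix.of_apply]
    split_ifs with h
    · simp [h, Nat.card_eq_fintype_card]
    · simp [h]
  rw [this]
  exact (rch_of_mat ρ).ischar

lemma cls_eq_zero {f : G → ℂ} (hf : Cls f) (h0 : ∀ χ, Irr χ → ip f χ = 0) : f = 0 := by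
  funext h
  have key : ∀ φ : G → ℂ, IsChar φ → ∑ g, f g * φ (g⁻¹ * h) = 0 := by
    intro φ hφ
    induction hφ using IsChar.ind with
    | h0 => simp
    | hadd χ φ hχ hφ ih =>
      have h1 := conv_irr hχ hf h
      rw [h0 χ hχ, mul_zero, zero_mul] at h1
      obtain ⟨n, hn0, hn⟩ := hχ.deg
      rw [hn] at h1
      have h2 := (mul_eq_zero.1 h1).resolve_left (by exact_mod_cast hn0.ne')
      simp only [Pi.add_apply, mul_add, Finset.sum_add_distrib, h2, ih, add_zero]
  have := key _ ischar_reg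
  simp only [inv_mul_eq_one, mul_ite, mul_zero] at this
  rw [Finset.sum_ite_eq'] at this
  simpa [cardne] using this

lemma irr_finite : Set.Finite {χ : G → ℂ | Irr χ} := by
  have hli : LinearIndependent ℂ (fun χ : {χ : G → ℂ | Irr χ} => (χ : G → ℂ)) := by
    rw [linearIndependent_iff']
    intro s c hs χ hχ
    have := congrArg (fun f => ip f χ.1) hs
    simp only [ip_sum_left, ip_smul_left, ip_zero_left] at this
    rw [Finset.sum_eq_single χ] at this
    · rwa [ip_irr_self χ.2, mul_one] at this
    · intro ψ _ hne
      rw [ip_irr_ne ψ.2 χ.2 (fun h => hne (Subtype.ext h)), mul_zero]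
    · intro h; exact absurd hχ h
  exact hli.set_finite_of_isNoetherian
end base2
end ACD

set_option linter.unusedSectionVars false
set_option linter.unusedVariables false
namespace ACD
open Module

section base3
variable {G : Type} [Group G] [Fintype G]

variable (G) in
/-- The finite set of irreducible characters. -/
noncomputable def IF : Finset (G → ℂ) := (irr_finite (G := G)).toFinset

@[simp] lemma mem_IF {χ : G → ℂ} : χ ∈ IF G ↔ Irr χ := by simp [IF]

lemma cls_sum {ι : Type*} (s : Finset ι) (f : ι → G → ℂ) (h : ∀ i ∈ s, Cls (f i)) :
    Cls (∑ i ∈ s, f i) := by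
  intro g h'
  rw [Finset.sum_apply, Finset.sum_apply]
  exact Finset.sum_congr rfl fun i hi => h i hi g h'
lemma cls_smul {f : G → ℂ} (c : ℂ) (h : Cls f) : Cls (c • f) := by
  intro a b; simp [h a b]
lemma cls_sub {f f' : G → ℂ} (h : Cls f) (h' : Cls f') : Cls (f - f') := by
  intro a b; simp [h a b, h' a b]
lemma cls_mul {f f' : G → ℂ} (h : Cls f) (h' : Cls f') : Cls (f * f') := by
  intro a b; simp [h a b, h' a b]

lemma expand {f : G → ℂ} (hf : Cls f) : f = ∑ χ ∈ IF G, ip f χ • χ := by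
  rw [← sub_eq_zero]
  apply cls_eq_zero
  · exact cls_sub hf (cls_sum _ _ fun i hi => cls_smul _ (mem_IF.1 hi).ischar.cls)
  · intro χ hχ
    rw [ip_sub_left, ip_sum_left, Finset.sum_eq_single χ]
    · rw [ip_smul_left, ip_irr_self hχ, mul_one, sub_self]
    · intro ψ hψ hne
      rw [ip_smul_left, ip_irr_ne (mem_IF.1 hψ) hχ hne, mul_zero]
    · intro h; exact absurd (mem_IF.2 hχ) h

/-- two class functions with the same multiplicities agree -/
lemma cls_ext {f f' : G → ℂ} (h : Cls f) (h' : Cls f') (he : ∀ χ, Irr χ → ip f χ = ip f' χ) :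
    f = f' := by
  rw [← sub_eq_zero]
  exact cls_eq_zero (cls_sub h h') fun χ hχ => by rw [ip_sub_left, he χ hχ, sub_self]

lemma ischar_of_ip {f : G → ℂ} (hf : Cls f) (h : ∀ χ, Irr χ → ∃ n : ℕ, ip f χ = n) : IsChar f := by
  rw [expand hf]
  have : ∀ s : Finset (G → ℂ), (∀ χ ∈ s, Irr χ) → IsChar (∑ χ ∈ s, ip f χ • χ) := by
    intro s
    induction s using Finset.induction_on with
    | empty => intro _; simpa using ischar_zero
    | insert a s ha ih =>
      intro hs
      rw [Finset.sum_insert ha]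
      refine IsChar.add ?_ (ih fun χ hχ => hs χ (by simp [hχ]))
      obtain ⟨n, hn⟩ := h a (hs a (by simp))
      rw [hn]
      induction n generalizing f with
      | zero => simpa using ischar_zero
      | succ n ihn =>
        have : ((n + 1 : ℕ) : ℂ) • a = (n : ℂ) • a + a := by push_cast; rw [add_smul, one_smul]
        rw [this]
        refine IsChar.add ?_ (hs a (by simp)).ischar
        clear ihn this hn
        induction n with
        | zero => simpa using ischar_zero
        | succ n ihn =>
          have : ((n + 1 : ℕ) : ℂ) • a = (n : ℂ) • a + a := by push_cast; rw [add_smul, one_smul]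
          rw [this]
          exact ihn.add (hs a (by simp)).ischar
  exact this _ fun χ hχ => mem_IF.1 hχ

/-- restriction -/
def rs (N : Subgroup G) (f : G → ℂ) : N → ℂ := fun n => f n

variable (N : Subgroup G)
@[simp] lemma rs_add (a b : G → ℂ) : rs N (a + b) = rs N a + rs N b := rfl
@[simp] lemma rs_sub (a b : G → ℂ) : rs N (a - b) = rs N a - rs N b := rfl
@[simp] lemma rs_mul (a b : G → ℂ) : rs N (a * b) = rs N a * rs N b := rfl
@[simp] lemma rs_one : rs N (1 : G → ℂ) = 1 := rfl
@[simp] lemma rs_dl (a : G → ℂ) : rs N (dl a) = dl (rs N a) := rfl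
lemma rs_at_one (a : G → ℂ) : rs N a 1 = a 1 := rfl
lemma rs_sum {ι : Type*} (s : Finset ι) (f : ι → G → ℂ) : rs N (∑ i ∈ s, f i) = ∑ i ∈ s, rs N (f i) := by
  funext n; simp [rs]
lemma rs_smul (c : ℂ) (a : G → ℂ) : rs N (c • a) = c • rs N a := rfl

lemma rch_rs {a : G → ℂ} (h : RCh a) : RCh (rs N a) := by
  obtain ⟨V, _, _, _, ρ, rfl⟩ := h
  exact ⟨V, _, _, inferInstance, ρ.comp N.subtype, by funext g; rfl⟩

lemma ischar_rs {a : G → ℂ} (h : IsChar a) : IsChar (rs N a) := by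
  induction h using IsChar.ind with
  | h0 => exact ischar_zero
  | hadd χ φ hχ hφ ih => exact (rch_rs N hχ.rch).ischar.add ih

lemma cls_rs {f : G → ℂ} (h : Cls f) : Cls (rs N f) := fun a b => h a b

/-- `N` is in the kernel of `χ`. -/
def Tr (χ : G → ℂ) : Prop := ∀ n ∈ N, χ n = χ 1

lemma sum_sub (f : G → ℂ) : ∑ n : N, f n = ∑ g : G, if g ∈ N then f g else 0 := by
  rw [← Finset.sum_filter]
  exact (Finset.sum_subtype (p := fun g => g ∈ N) _ (by simp) f).symm

lemma ip_rs_one (f : G → ℂ) : ip (rs N f) 1 = (Nat.card N : ℂ)⁻¹ * ∑ n : N, f n := by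
  simp [ip, rs]

lemma irrN_cases [hN : N.Normal] {ψ : G → ℂ} (h : Irr ψ) :
    (Tr N ψ ∧ ip (rs N ψ) 1 = ψ 1 ∧ ∀ n ∈ N, ∀ g, ψ (n * g) = ψ g) ∨
    (¬ Tr N ψ ∧ ip (rs N ψ) 1 = 0) := by
  obtain ⟨d, ρ, hρ, h1, hsch⟩ := h.mat
  obtain ⟨c, hc⟩ := hsch (∑ n : N, ρ n) (by
    intro x
    rw [Finset.sum_mul, Finset.mul_sum, ← Equiv.sum_comp (MulAut.conjNormal (H := N) x).toEquiv]
    refine Finset.sum_congr rfl fun n _ => ?_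
    rw [← map_mul, ← map_mul]
    congr 1
    show ((MulAut.conjNormal x n : N) : G) * x = x * n
    rw [MulAut.conjNormal_apply]
    group)
  obtain ⟨d', hd0, hd'⟩ := h.deg
  have hdd : d = d' := by
    rw [h1] at hd'; exact_mod_cast hd'
  have hdne : (d : ℂ) ≠ 0 := by rw [hdd]; exact_mod_cast hd0.ne'
  -- trace
  have ht := congrArg Matrix.trace hc
  simp only [Matrix.trace_sum, ← hρ, Matrix.trace_smul, Matrix.trace_one, smul_eq_mul,
    Fintype.card_fin] at ht
  have hip : ip (rs N ψ) 1 = (Nat.card N : ℂ)⁻¹ * (c * d) := by rw [ip_rs_one, ht]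
  have hmul : ∀ m : N, c • ρ m = c • 1 := by
    intro m
    have : ρ m * (∑ n : N, ρ n) = ∑ n : N, ρ n := by
      rw [Finset.mul_sum]
      conv_rhs => rw [← Equiv.sum_comp (Equiv.mulLeft m)]
      exact Finset.sum_congr rfl fun n _ => by rw [← map_mul]; rfl
    rw [hc] at this
    simpa using this
  by_cases hc0 : c = 0
  · right
    have h0 : ip (rs N ψ) 1 = 0 := by rw [hip, hc0]; simp
    refine ⟨fun htr => ?_, h0⟩
    rw [ip_rs_one] at h0
    have : ∑ n : N, ψ n = Nat.card N * d := by
      rw [Finset.sum_congr rfl (fun (n : N) _ => htr n n.2)]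
      simp [h1, Nat.card_eq_fintype_card]
    rw [this, inv_mul_cancel_left₀ (cardne (G := N))] at h0
    exact hdne h0
  · left
    have hone : ∀ n ∈ N, ρ n = 1 := fun n hn => smul_right_injective _ hc0 (hmul ⟨n, hn⟩)
    have htr : Tr N ψ := fun n hn => by rw [hρ, hρ, hone n hn, map_one]
    refine ⟨htr, ?_, fun n hn g => ?_⟩
    · rw [ip_rs_one, Finset.sum_congr rfl (fun (n : N) _ => htr n n.2)]
      simp only [Finset.sum_const, Finset.card_univ, ← Nat.card_eq_fintype_card, nsmul_eq_mul]
      rw [inv_mul_cancel_left₀ (cardne (G := N))]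
    · rw [hρ, hρ, map_mul, hone n hn, one_mul]

lemma tr_coset [hN : N.Normal] {ψ : G → ℂ} (h : Irr ψ) (ht : Tr N ψ) : ∀ n ∈ N, ∀ g, ψ (n * g) = ψ g := by
  rcases irrN_cases N h with h | h
  · exact h.2.2
  · exact absurd ht h.1
lemma tr_ip [hN : N.Normal] {ψ : G → ℂ} (h : Irr ψ) (ht : Tr N ψ) : ip (rs N ψ) 1 = ψ 1 := by
  rcases irrN_cases N h with h | h
  · exact h.2.1
  · exact absurd ht h.1
lemma not_tr_ip [hN : N.Normal] {ψ : G → ℂ} (h : Irr ψ) (ht : ¬ Tr N ψ) : ip (rs N ψ) 1 = 0 := by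
  rcases irrN_cases N h with h | h
  · exact absurd h.1 ht
  · exact h.2

/-- irreducible characters with `N` in the kernel -/
noncomputable def IN : Finset (G → ℂ) := (IF G).filter (Tr N)

@[simp] lemma mem_IN {χ : G → ℂ} : χ ∈ IN N ↔ Irr χ ∧ Tr N χ := by simp [IN]

lemma ip_comm_rn (f : G → ℂ) :
    ip f (fun g => if g ∈ N then (Nat.card G : ℂ) * (Nat.card N : ℂ)⁻¹ else 0) = ip (rs N f) 1 := by
  rw [ip_rs_one, sum_sub, ip, Finset.mul_sum, Finset.mul_sum]
  refine Finset.sum_congr rfl fun g _ => ?_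
  rw [inv_mem_iff]
  split_ifs
  · field_simp [cardne (G := G)]
  · simp

lemma Q2 [hN : N.Normal] {φ : G → ℂ} :
    ∑ β ∈ IN N, β 1 * ip φ β = ip (rs N φ) 1 := by
  rw [← ip_comm_rn]
  set r : G → ℂ := fun g => if g ∈ N then (Nat.card G : ℂ) * (Nat.card N : ℂ)⁻¹ else 0 with hr
  have hcl : Cls r := by
    intro a b
    simp only [hr, hN.mem_comm_iff (a := a) (b := b)]
  rw [expand hcl, ip_sum_right, IN, Finset.sum_filter]
  refine Finset.sum_congr rfl fun χ hχ => ?_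
  have hχ := mem_IF.1 hχ
  rw [ip_smul_right, ip_comm r χ, hr, ip_comm_rn]
  split_ifs with h
  · rw [tr_ip N hχ h]
  · rw [not_tr_ip N hχ h, zero_mul]

/-- conjugate of a function on `N` -/
def cj [hN : N.Normal] (g : G) (θ : N → ℂ) : N → ℂ := fun n => θ (MulAut.conjNormal g n)

lemma irr_cj [hN : N.Normal] (g : G) {θ : N → ℂ} (h : Irr θ) : Irr (cj N g θ) := by
  apply irr_of_rch
  · obtain ⟨V, _, _, _, ρ, rfl⟩ := h.rch
    exact ⟨V, _, _, inferInstance, ρ.comp (MulAut.conjNormal g : N ≃* N).toMonoidHom,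
      by funext g; rfl⟩
  · rw [← ip_irr_self h, ip, ip]
    congr 1
    conv_rhs => rw [← Equiv.sum_comp (MulAut.conjNormal (H := N) g).toEquiv]
    refine Finset.sum_congr rfl fun n _ => ?_
    simp [cj]

lemma clifford_inv [hN : N.Normal] {χ : G → ℂ} (hχ : Irr χ) {α θ θ' : N → ℂ}
    (hα : ∀ g : G, cj N g α = α) (hθ : Irr θ) (hθ' : Irr θ')
    (h1 : ip (rs N χ) θ ≠ 0) (h2 : ip (rs N χ) θ' ≠ 0) : ip α θ * θ' 1 = ip α θ' * θ 1 := by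
  set f : G → ℂ := fun g => if h : g ∈ N then α ⟨g, h⟩ else 0 with hf
  have hcl : Cls f := by
    intro a b
    by_cases hab : a * b ∈ N
    · have hba : b * a ∈ N := hN.mem_comm hab
      simp only [hf, hab, hba, dif_pos]
      conv_lhs => rw [← hα b]
      unfold cj
      congr 1
      ext
      simp [MulAut.conjNormal_apply, mul_assoc]
    · have hba : ¬ b * a ∈ N := fun h => hab (hN.mem_comm h)
      simp only [hf, hab, hba, dif_neg, not_false_eq_true]
  obtain ⟨d, hd0, hd⟩ := hχ.deg
  have hdne : (χ 1) ≠ 0 := by rw [hd]; exact_mod_cast hd0.ne'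
  obtain ⟨c, hc⟩ : ∃ c : ℂ, ∀ h : N, ∑ n : N, α n * χ ((n : G)⁻¹ * h) = c * χ h := by
    refine ⟨Nat.card G * ip f χ / χ 1, fun h => ?_⟩
    have := conv_irr hχ hcl h
    have e : ∑ n : N, α n * χ ((n : G)⁻¹ * h) = ∑ g, f g * χ (g⁻¹ * h) := by
      have := sum_sub N (fun g => f g * χ (g⁻¹ * h))
      have h3 : ∀ n : N, f n = α n := fun n => by simp [hf]
      simp only [h3] at this
      rw [this]
      refine Finset.sum_congr rfl fun g _ => ?_
      split_ifs with hg
      · rfl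
      · simp [hf, hg]
    rw [e]
    field_simp
    linear_combination this
  have key : ∀ η : N → ℂ, Irr η → ip (rs N χ) η ≠ 0 → (Nat.card N : ℂ) * ip α η = c * η 1 := by
    intro η hη hne
    have hcη : ∀ n : N, η 1 * ∑ m, rs N χ m * η (m⁻¹ * n⁻¹) = Nat.card N * ip (rs N χ) η * η n⁻¹ :=
      fun n => conv_irr hη (cls_rs N hχ.ischar.cls) n⁻¹
    have e1 : ∑ h : N, (∑ n : N, α n * χ ((n : G)⁻¹ * h)) * η h⁻¹ =
        ∑ n : N, α n * ∑ m, rs N χ m * η (m⁻¹ * n⁻¹) := by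
      simp only [Finset.sum_mul]
      rw [Finset.sum_comm]
      refine Finset.sum_congr rfl fun n _ => ?_
      rw [Finset.mul_sum, ← Equiv.sum_comp (Equiv.mulLeft n)]
      refine Finset.sum_congr rfl fun m _ => ?_
      simp [rs, mul_assoc]
    have e2 : ∑ h : N, (∑ n : N, α n * χ ((n : G)⁻¹ * h)) * η h⁻¹ = c * (Nat.card N * ip (rs N χ) η) := by
      simp only [hc, ip, rs]
      rw [mul_inv_cancel_left₀ (cardne (G := N)), Finset.mul_sum]
      exact Finset.sum_congr rfl fun h _ => by ring
    have e3 : η 1 * ∑ n : N, α n * ∑ m, rs N χ m * η (m⁻¹ * n⁻¹) =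
        Nat.card N * ip (rs N χ) η * (Nat.card N * ip α η) := by
      rw [Finset.mul_sum]
      have : ∀ n : N, η 1 * (α n * ∑ m, rs N χ m * η (m⁻¹ * n⁻¹)) =
          Nat.card N * ip (rs N χ) η * (α n * η n⁻¹) := fun n => by
        linear_combination α n * hcη n
      simp only [this, ← Finset.mul_sum]
      congr 1
      rw [ip, mul_inv_cancel_left₀ (cardne (G := N))]
    rw [← e1, e2] at e3
    have hN0 := cardne (G := N)
    apply mul_left_cancel₀ (mul_ne_zero hN0 hne)
    linear_combination -e3
  have k1 := key θ hθ h1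
  have k2 := key θ' hθ' h2
  apply mul_left_cancel₀ (cardne (G := N))
  linear_combination θ' 1 * k1 - θ 1 * k2

lemma cj_cj [hN : N.Normal] (g h : G) (θ : N → ℂ) (hgh : h * g = 1) : cj N g (cj N h θ) = θ := by
  funext n
  simp only [cj, ← MulAut.mul_apply, ← map_mul, hgh, map_one, MulAut.one_apply]

lemma clifford_deg [hN : N.Normal] {χ : G → ℂ} (hχ : Irr χ) {θ θ' : N → ℂ}
    (hθ : Irr θ) (hθ' : Irr θ')
    (h1 : ip (rs N χ) θ ≠ 0) (h2 : ip (rs N χ) θ' ≠ 0) : θ' 1 = θ 1 := by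
  set S := (IF N).filter (fun η => η 1 = θ 1) with hS
  have hcj1 : ∀ (g : G) (η : N → ℂ), cj N g η 1 = η 1 := fun g η => by simp [cj]
  have hinv : ∀ g : G, cj N g (∑ η ∈ S, η) = ∑ η ∈ S, η := by
    intro g
    have : cj N g (∑ η ∈ S, η) = ∑ η ∈ S, cj N g η := by
      funext n; simp [cj]
    rw [this]
    refine Finset.sum_bij' (fun η _ => cj N g η) (fun η _ => cj N g⁻¹ η) ?_ ?_ ?_ ?_ ?_
    · intro η hη
      simp only [hS, Finset.mem_filter, mem_IF, hcj1] at hη ⊢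
      exact ⟨irr_cj N g hη.1, hη.2⟩
    · intro η hη
      simp only [hS, Finset.mem_filter, mem_IF, hcj1] at hη ⊢
      exact ⟨irr_cj N _ hη.1, hη.2⟩
    · intro η _; exact cj_cj N _ _ _ (by simp)
    · intro η _; exact cj_cj N _ _ _ (by simp)
    · intro η _; rfl
  have ipS : ∀ η, Irr η → ip (∑ η ∈ S, η) η = if η 1 = θ 1 then 1 else 0 := by
    intro η hη
    rw [ip_sum_left]
    split_ifs with h
    · rw [Finset.sum_eq_single η, ip_irr_self hη]
      · intro b hb hne
        exact ip_irr_ne (mem_IF.1 (Finset.mem_filter.1 hb).1) hη hne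
      · intro hn; exact absurd (by simp [hS, hη, h]) hn
    · apply Finset.sum_eq_zero
      intro b hb
      apply ip_irr_ne (mem_IF.1 (Finset.mem_filter.1 hb).1) hη
      rintro rfl
      exact h (Finset.mem_filter.1 hb).2
  have := clifford_inv N hχ hinv hθ hθ' h1 h2
  rw [ipS θ hθ, ipS θ' hθ', if_pos rfl] at this
  split_ifs at this with h
  · exact h
  · obtain ⟨d, hd0, hd⟩ := hθ'.deg
    rw [hd] at this
    simp at this; omega

lemma exists_const_over {Φ : G → ℂ} (hΦ : IsChar Φ) {A : N → ℂ} (h : ip (rs N Φ) A ≠ 0) :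
    ∃ χ, Irr χ ∧ IsChar (Φ - χ) ∧ ip (rs N χ) A ≠ 0 := by
  induction hΦ using IsChar.ind with
  | h0 => exact absurd (ip_zero_left A) h
  | hadd χ φ hχ hφ ih =>
    by_cases h0 : ip (rs N χ) A = 0
    · rw [rs_add, ip_add_left, h0, zero_add] at h
      obtain ⟨ψ, hψ, hc, hne⟩ := ih h
      exact ⟨ψ, hψ, by rw [add_sub_assoc]; exact hχ.ischar.add hc, hne⟩
    · exact ⟨χ, hχ, by rw [add_sub_cancel_left]; exact hφ, h0⟩

lemma ip_mono {φ ψ χ : G → ℂ} (h : IsChar (φ - ψ)) (hψ : IsChar ψ) (hχ : IsChar χ) (h0 : ip φ χ = 0) :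
    ip ψ χ = 0 := by
  obtain ⟨n, hn⟩ := ip_nat h hχ
  obtain ⟨m, hm⟩ := ip_nat hψ hχ
  rw [ip_sub_left, h0, hm] at hn
  have : (m : ℂ) + n = 0 := by rw [← hn]; ring
  have : m + n = 0 := by exact_mod_cast this
  rw [hm]
  have : m = 0 := by omega
  simp [this]

/-- extension lemma -/
lemma ext_irr [hN : N.Normal] {Φ : G → ℂ} (hΦ : IsChar Φ) {A : N → ℂ} (hA : Irr A)
    (h1 : ip (rs N Φ) A = 1)
    (h2 : ∀ B, Irr B → B 1 = A 1 → B ≠ A → ip (rs N Φ) B = 0) : ∃ χ, Irr χ ∧ rs N χ = A := by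
  obtain ⟨χ, hχ, hc, hne⟩ := exists_const_over N hΦ (A := A) (by rw [h1]; exact one_ne_zero)
  refine ⟨χ, hχ, ?_⟩
  have hp := peel (ischar_rs N hχ.ischar) hA hne
  by_contra hcon
  obtain ⟨B, hB, hBne⟩ := hp.exists_const (sub_ne_zero.2 hcon)
  have hBχ : ip (rs N χ) B ≠ 0 := by
    intro h0
    exact hBne (ip_mono (by rw [sub_sub_cancel]; exact hA.ischar) hp hB.ischar h0)
  have hdeg := clifford_deg N hχ hA hB hne hBχ
  have hc' : IsChar (rs N Φ - rs N χ) := ischar_rs N hc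
  by_cases hBA : B = A
  · subst hBA
    obtain ⟨n, hn⟩ := ip_nat hp hB.ischar
    obtain ⟨m, hm⟩ := ip_nat hc' hB.ischar
    rw [hn] at hBne
    rw [ip_sub_left, ip_irr_self hB] at hn
    rw [ip_sub_left, h1] at hm
    have : (m : ℂ) + n = 0 := by rw [← hn, ← hm]; ring
    have : m + n = 0 := by exact_mod_cast this
    apply hBne
    have : n = 0 := by omega
    simp [this]
  · exact hBχ (ip_mono hc' (ischar_rs N hχ.ischar) hB.ischar (h2 B hB hdeg hBA))

open scoped ComplexOrder in
/-- inverse = complex conjugate -/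
lemma irr_inv_conj {χ : G → ℂ} (hχ : Irr χ) (g : G) : χ g⁻¹ = (starRingEnd ℂ) (χ g) := by
  obtain ⟨n, ρ, hρ, -⟩ := hχ.mat
  set H : Matrix (Fin n) (Fin n) ℂ := ∑ x : G, (ρ x).conjTranspose * ρ x with hH
  have hpos : H.PosDef := by
    have h1 : H = 1 + ∑ x ∈ Finset.univ.erase (1 : G), (ρ x).conjTranspose * ρ x := by
      rw [hH, ← Finset.add_sum_erase _ _ (Finset.mem_univ (1 : G))]
      simp
    rw [h1]
    refine Matrix.PosDef.one.add_posSemidef (Matrix.posSemidef_sum _ fun x _ => ?_)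
    exact Matrix.posSemidef_conjTranspose_mul_self _
  have hu : IsUnit H := hpos.isUnit
  have hinv : (ρ g).conjTranspose * H * ρ g = H := by
    rw [hH, Finset.mul_sum, Finset.sum_mul]
    conv_rhs => rw [← Equiv.sum_comp (Equiv.mulRight g)]
    refine Finset.sum_congr rfl fun x _ => ?_
    simp [Matrix.conjTranspose_mul, mul_assoc]
  have h2 : (ρ g).conjTranspose * H = H * ρ g⁻¹ := by
    have : (ρ g).conjTranspose * H * ρ g * ρ g⁻¹ = H * ρ g⁻¹ := by rw [hinv]
    rwa [mul_assoc _ (ρ g), ← map_mul, mul_inv_cancel, map_one, mul_one] at this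
  rw [hρ, hρ, starRingEnd_apply, ← Matrix.trace_conjTranspose]
  obtain ⟨u, hu⟩ := hu
  rw [← hu] at h2
  have h3 : ρ g⁻¹ = (↑u⁻¹ : Matrix _ _ ℂ) * ((ρ g).conjTranspose * (u : Matrix _ _ ℂ)) := by
    rw [h2, ← mul_assoc, Units.inv_mul, one_mul]
  rw [h3, Matrix.trace_mul_comm, mul_assoc, Units.mul_inv, mul_one]

lemma ischar_inv_conj {φ : G → ℂ} (h : IsChar φ) (g : G) : φ g⁻¹ = (starRingEnd ℂ) (φ g) := by
  induction h using IsChar.ind with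
  | h0 => simp
  | hadd χ φ hχ hφ ih => simp [irr_inv_conj hχ, ih]

lemma ip_zero_of_mul_zero {a b : G → ℂ} (hb : ∀ g, b g⁻¹ = (starRingEnd ℂ) (b g))
    (h : ∀ g, a g * b g = 0) : ip a b = 0 := by
  rw [ip, Finset.sum_eq_zero, mul_zero]
  intro g _
  rw [hb]
  rcases mul_eq_zero.1 (h g) with h | h <;> simp [h]

end base3
end ACD

set_option linter.unusedSectionVars false
set_option linter.unusedVariables false
namespace ACD
open Module

section perf
variable {G : Type} [Group G] [Fintype G]

lemma ip_deg {a b : G → ℂ} (ha : Irr a) (hb : Irr b) (h : a 1 ≠ b 1) : ip a b = 0 :=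
  ip_irr_ne ha hb (by rintro rfl; exact h rfl)

lemma ip_mul_mul (a b c d : G → ℂ) : ip (a * b) (c * d) = ip (a * dl c) (dl b * d) := by
  unfold ip dl
  congr 1
  exact Finset.sum_congr rfl fun g _ => by simp; ring

lemma ip_pos_add {a b c : G → ℂ} (ha : IsChar a) (hb : IsChar b) (hc : IsChar c)
    (h : ip a c ≠ 0) : ip (a + b) c ≠ 0 := by
  intro h0
  exact h (ip_mono (φ := a + b) (by rw [add_sub_cancel_left]; exact hb) ha hc h0)

/-- matrix representation with fixed vector -/
lemma ip_one_ne_of_fixed {ι : Type} [Fintype ι] [DecidableEq ι] (ρ : G →* Matrix ι ι ℂ)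
    (w : ι → ℂ) (hw : w ≠ 0) (h : ∀ g, (ρ g).mulVec w = w) :
    ip (fun g => (ρ g).trace) 1 ≠ 0 := by
  let σ : Representation ℂ G (ι → ℂ) :=
    ((Matrix.toLinAlgEquiv' : Matrix ι ι ℂ ≃ₐ[ℂ] _) : Matrix ι ι ℂ →* _).comp ρ
  have hch : σ.character = fun g => (ρ g).trace := by
    funext g
    exact Matrix.trace_toLin'_eq (ρ g)
  have := invertibleOfNonzero (cardne (G := G))
  have h1 := σ.card_inv_mul_sum_char_eq_finrank
  rw [hch] at h1
  have h2 : ip (fun g => (ρ g).trace) 1 = (finrank ℂ σ.invariants : ℂ) := by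
    rw [← h1]; simp [ip]
  rw [h2]
  have hmem : w ∈ σ.invariants := fun g => h g
  have : finrank ℂ σ.invariants ≠ 0 := by
    intro h0
    have h3 : σ.invariants = ⊥ := Submodule.finrank_eq_zero.1 h0
    rw [h3] at hmem
    exact hw ((Submodule.mem_bot ℂ).1 hmem)
  exact_mod_cast this

lemma ip_ne_one {a : G → ℂ} (ha : Irr a) (h : a 1 ≠ 1) : ip a 1 = 0 :=
  ip_irr_ne ha irr_one (by rintro rfl; exact h rfl)


lemma det_one (hP : commutator G = ⊤) {n : ℕ} (ρ : G →* Matrix (Fin n) (Fin n) ℂ) (g : G) : (ρ g).det = 1 := by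
  let f : G →* ℂ := (Matrix.detMonoidHom).comp ρ
  have h : commutator G ≤ f.toHomUnits.ker := Abelianization.commutator_subset_ker _
  rw [hP] at h
  have := h (Subgroup.mem_top g)
  rw [MonoidHom.mem_ker] at this
  have := congrArg Units.val this
  simpa [f] using this

lemma lin_triv (hP : commutator G = ⊤) {χ : G → ℂ} (h : Irr χ) (h1 : χ 1 = 1) : χ = 1 := by
  obtain ⟨n, ρ, hρ, hn, -⟩ := h.mat
  have : n = 1 := by rw [h1] at hn; exact_mod_cast hn.symm
  subst this
  funext g
  have := det_one hP ρ g
  rw [Matrix.det_fin_one] at this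
  rw [hρ, Matrix.trace_fin_one, this]; rfl

lemma inv_adj (hP : commutator G = ⊤) {n : ℕ} (ρ : G →* Matrix (Fin n) (Fin n) ℂ) (g : G) : ρ g⁻¹ = (ρ g).adjugate := by
  have h1 : (ρ g).adjugate * ρ g = 1 := by rw [Matrix.adjugate_mul, det_one hP, one_smul]
  have h2 : (ρ g).adjugate * ρ g * ρ g⁻¹ = ρ g⁻¹ := by rw [h1, one_mul]
  rw [mul_assoc, ← map_mul, mul_inv_cancel, map_one, mul_one] at h2
  exact h2.symm

lemma deg2 (hP : commutator G = ⊤) {τ : G → ℂ} (h : Irr τ) (h1 : τ 1 = 2) :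
    dl τ = τ ∧ ∀ g, τ (g * g) = τ g ^ 2 - 2 := by
  obtain ⟨n, ρ, hρ, hn, -⟩ := h.mat
  have : n = 2 := by rw [h1] at hn; exact_mod_cast hn.symm
  subst this
  constructor
  · funext g
    rw [dl, hρ, hρ, inv_adj hP, Matrix.adjugate_fin_two]
    simp [Matrix.trace_fin_two, add_comm]
  · intro g
    have := det_one hP ρ g
    rw [Matrix.det_fin_two] at this
    rw [hρ, hρ, map_mul]
    simp only [Matrix.trace_fin_two, Matrix.mul_apply, Fin.sum_univ_two]
    linear_combination -2 * this

lemma deg3 (hP : commutator G = ⊤) {θ : G → ℂ} (h : Irr θ) (h1 : θ 1 = 3) :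
    ∀ g, θ (g * g) = θ g ^ 2 - 2 * θ g⁻¹ := by
  obtain ⟨n, ρ, hρ, hn, -⟩ := h.mat
  have : n = 3 := by rw [h1] at hn; exact_mod_cast hn.symm
  subst this
  intro g
  rw [hρ, hρ, hρ, inv_adj hP, map_mul, Matrix.adjugate_fin_three]
  simp [Matrix.trace_fin_three, Matrix.mul_apply, Fin.sum_univ_three]
  ring

/-- the alternating tensor -/
noncomputable def eps (p : Fin 3 × Fin 3 × Fin 3) : ℂ :=
  (((p.2.1 : ℕ) : ℂ) - ((p.1 : ℕ) : ℂ)) * (((p.2.2 : ℕ) : ℂ) - ((p.1 : ℕ) : ℂ)) *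
    (((p.2.2 : ℕ) : ℂ) - ((p.2.1 : ℕ) : ℂ)) / 2

lemma lemmaX (hP : commutator G = ⊤) {θ : G → ℂ} (h : Irr θ) (h1 : θ 1 = 3) : ip (θ * θ) (dl θ) ≠ 0 := by
  obtain ⟨n, ρ, hρ, hn, -⟩ := h.mat
  have : n = 3 := by rw [h1] at hn; exact_mod_cast hn.symm
  subst this
  let K : G →* Matrix (Fin 3 × Fin 3 × Fin 3) (Fin 3 × Fin 3 × Fin 3) ℂ :=
    { toFun := fun g => Matrix.kroneckerMap (· * ·) (ρ g) (Matrix.kroneckerMap (· * ·) (ρ g) (ρ g))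
      map_one' := by
        rw [map_one]
        ext ⟨a, b, c⟩ ⟨a', b', c'⟩
        simp [Matrix.one_apply]
        split_ifs <;> simp_all
      map_mul' := by
        intro g h
        rw [map_mul, Matrix.mul_kronecker_mul, Matrix.mul_kronecker_mul] }
  have hK := ip_one_ne_of_fixed K eps (by
      intro h0
      have := congrFun h0 (0, 1, 2)
      norm_num [eps] at this) (by
    intro g
    have hd := det_one hP ρ g
    rw [Matrix.det_fin_three] at hd
    funext ⟨i, j, k⟩
    simp only [K, MonoidHom.coe_mk, OneHom.coe_mk, Matrix.mulVec, dotProduct,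
      Fintype.sum_prod_type, Fin.sum_univ_three, Matrix.kroneckerMap_apply, eps]
    generalize ρ g = A at hd ⊢
    have h2 : ∀ p, (⟨2, p⟩ : Fin 3) = 2 := fun _ => rfl
    fin_cases i <;> fin_cases j <;> fin_cases k <;> norm_num [h2] <;>
      first
        | ring1
        | linear_combination hd
        | linear_combination -hd)
  have he : (fun g => (K g).trace) = θ * (θ * θ) := by
    funext g
    simp only [Pi.mul_apply, hρ]
    show (Matrix.kroneckerMap (· * ·) (ρ g) (Matrix.kroneckerMap (· * ·) (ρ g) (ρ g))).trace = _
    rw [Matrix.trace_kronecker, Matrix.trace_kronecker]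
  rw [he, mul_comm, ip_mul_left, mul_one] at hK
  exact hK

lemma irr_small (hP : commutator G = ⊤) (d : ℕ) {φ : G → ℂ} (h : IsChar φ) (hd : φ 1 = d) (hd0 : 0 < d)
    (h1 : 2 ≤ d → ip φ 1 = 0)
    (h2 : 4 ≤ d → ∀ χ, Irr χ → χ 1 = 2 → ip φ χ = 0)
    (h3 : 6 ≤ d → ∀ χ, Irr χ → χ 1 = 3 → ip φ χ = 0) (hd8 : d < 8) : Irr φ := by
  apply irr_of_no_small d h hd hd0
  intro χ k hχ hk hkd
  obtain ⟨k', hk0, hk'⟩ := hχ.deg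
  have : k = k' := by rw [hk] at hk'; exact_mod_cast hk'
  subst this
  have hk4 : k < 4 := by omega
  interval_cases k
  · rw [lin_triv hP hχ (by exact_mod_cast hk)]; exact h1 (by omega)
  · exact h2 (by omega) χ hχ (by exact_mod_cast hk)
  · exact h3 (by omega) χ hχ (by exact_mod_cast hk)

lemma irr3_of (hP : commutator G = ⊤) {φ : G → ℂ} (h : IsChar φ) (hd : φ 1 = 3) (h1 : ip φ 1 = 0) : Irr φ :=
  irr_small hP 3 h (by exact_mod_cast hd) (by norm_num) (fun _ => h1) (by norm_num) (by norm_num)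
    (by norm_num)

lemma irr2_of (hP : commutator G = ⊤) {φ : G → ℂ} (h : IsChar φ) (hd : φ 1 = 2) (h1 : ip φ 1 = 0) : Irr φ :=
  irr_small hP 2 h (by exact_mod_cast hd) (by norm_num) (fun _ => h1) (by norm_num) (by norm_num)
    (by norm_num)

/-! ### degree two -/

/-- data attached to a degree two irreducible character -/
lemma sigma_irr (hP : commutator G = ⊤) {τ : G → ℂ} (h : Irr τ) (h1 : τ 1 = 2) :
    Irr (τ * τ - 1) ∧ (τ * τ - 1) 1 = 3 ∧ dl (τ * τ - 1) = τ * τ - 1 := by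
  have hd := (deg2 hP h h1).1
  have e1 : ip (τ * τ) 1 = 1 := by rw [ip_mul_left, mul_one, hd, ip_irr_self h]
  have hv : (τ * τ - 1) 1 = 3 := by simp [h1]; norm_num
  refine ⟨irr3_of hP (peel (h.ischar.mul h.ischar) irr_one (by rw [e1]; exact one_ne_zero)) hv ?_,
    hv, by simp [hd]⟩
  rw [ip_sub_left, e1, ip_irr_self irr_one, sub_self]

/-- norms of products of two degree two characters -/
lemma norm22 (hP : commutator G = ⊤) {τ τ' : G → ℂ} (h : Irr τ) (h1 : τ 1 = 2) (h' : Irr τ') (h1' : τ' 1 = 2) :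
    ip (τ * τ') (τ * τ') = 1 + ip (τ * τ - 1) (τ' * τ' - 1) := by
  have hd := (deg2 hP h h1).1
  have hd' := (deg2 hP h' h1').1
  obtain ⟨s1, s2, s3⟩ := sigma_irr hP h h1
  obtain ⟨s1', s2', s3'⟩ := sigma_irr hP h' h1'
  rw [ip_mul_mul, hd, hd']
  have e : τ * τ = (τ * τ - 1) + 1 := by abel
  have e' : τ' * τ' = (τ' * τ' - 1) + 1 := by abel
  conv_lhs => rw [e, e', ip_add_left, ip_add_right, ip_add_right, ip_ne_one s1 (by rw [s2]; norm_num),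
    ip_comm 1 _, ip_ne_one s1' (by rw [s2']; norm_num), ip_irr_self irr_one]
  ring

lemma sigma_inj (hP : commutator G = ⊤) {τ τ' : G → ℂ} (h : Irr τ) (h1 : τ 1 = 2) (h' : Irr τ') (h1' : τ' 1 = 2)
    (hs : τ * τ - 1 = τ' * τ' - 1) : τ = τ' := by
  by_contra hne
  have hd := (deg2 hP h h1).1
  have hd' := (deg2 hP h' h1').1
  obtain ⟨s1, s2, s3⟩ := sigma_irr hP h h1
  have hn : ip (τ * τ') (τ * τ') = 2 := by
    rw [norm22 hP h h1 h' h1', ← hs, ip_irr_self s1]; norm_num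
  have hone : ip (τ * τ') 1 = 0 := by
    rw [ip_mul_left, mul_one, hd', ip_irr_ne h h' hne]
  have hch : IsChar (τ * τ') := h.ischar.mul h'.ischar
  have hdeg : (τ * τ') 1 = 4 := by simp [h1, h1']; norm_num
  -- constituents of degree two have the same square
  have key : ∀ α, Irr α → α 1 = 2 → ip (τ * τ') α ≠ 0 → α * α = τ * τ := by
    intro α hα hα1 hαne
    have hαd := (deg2 hP hα hα1).1
    by_contra hcon
    have hσ : ip (α * α - 1) (τ * τ - 1) = 0 :=
      ip_irr_ne (sigma_irr hP hα hα1).1 s1 (fun hh => hcon (sub_left_injective hh))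
    have hirr : Irr (α * τ) := irr_of_norm (hα.ischar.mul h.ischar) (by
      rw [norm22 hP hα hα1 h h1, hσ, add_zero])
    apply hαne
    rw [mul_comm, ip_mul_left, hd, ip_comm, mul_comm]
    exact ip_deg hirr h' (by simp [hα1, h1, h1'])
  have hpt : ∃ a b : G → ℂ, τ * τ' = a + b ∧ a * a = τ * τ ∧ b * b = τ * τ := by
    rcases hch.split (by intro h0; rw [h0] at hdeg; norm_num at hdeg) with hi | ⟨A, B, a, b, hA, hB, e, ha, hb, ha0, hab⟩
    · rw [ip_irr_self hi] at hn; norm_num at hn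
    · have hab4 : a + b = 4 := by
        rw [e, Pi.add_apply, ha, hb] at hdeg; exact_mod_cast hdeg
      have hBo : ip B 1 = 0 := ip_mono (φ := τ * τ') (by rw [e, add_sub_cancel_right]; exact hA.ischar)
        hB irr_one.ischar hone
      have hAo : ip A 1 = 0 := ip_mono (φ := τ * τ') (by rw [e, add_sub_cancel_left]; exact hB)
        hA.ischar irr_one.ischar hone
      have ha1 : a ≠ 1 := by
        rintro rfl
        rw [lin_triv hP hA (by exact_mod_cast ha), ip_irr_self irr_one] at hAo
        exact one_ne_zero hAo
      have ha2 : a = 2 := by omega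
      have hb2 : b = 2 := by omega
      subst ha2 hb2
      have hBi := irr2_of hP hB (by exact_mod_cast hb) hBo
      refine ⟨A, B, e, key A hA (by exact_mod_cast ha) ?_, key B hBi (by exact_mod_cast hb) ?_⟩
      · rw [e]; exact ip_pos_add hA.ischar hB hA.ischar (by rw [ip_irr_self hA]; exact one_ne_zero)
      · rw [e, add_comm]
        exact ip_pos_add hB hA.ischar hB (by rw [ip_irr_self hBi]; exact one_ne_zero)
  obtain ⟨a, b, e, ea, eb⟩ := hpt
  have hsq : τ' * τ' = τ * τ := (sub_left_injective hs).symm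
  have hfin : (τ * τ) * (τ * τ) = (4 : ℂ) • (τ * τ) := by
    funext g
    have e0 := congrFun e g
    have ea0 := congrFun ea g
    have eb0 := congrFun eb g
    have es0 := congrFun hsq g
    simp only [Pi.mul_apply, Pi.add_apply, Pi.smul_apply, smul_eq_mul] at *
    have hab : (a g - b g) * (a g + b g) = 0 := by linear_combination ea0 - eb0
    have h4 : τ g * τ g * (τ g * τ g) = (a g + b g) ^ 2 := by
      rw [← e0]; linear_combination - τ g * τ g * es0
    rcases mul_eq_zero.1 hab with h0 | h0
    · have : a g = b g := by linear_combination h0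
      rw [h4, this]; rw [this] at ea0; linear_combination 4 * ea0
    · rw [h0] at h4
      have : τ g * τ g = 0 := by
        have : (τ g * τ g) ^ 2 = 0 := by linear_combination h4
        exact pow_eq_zero_iff (two_ne_zero) |>.1 this
      rw [this]; ring
  have h2 : ip ((τ * τ) * (τ * τ)) 1 = ip ((4 : ℂ) • (τ * τ)) 1 := by rw [hfin]
  rw [ip_smul_left, ip_mul_left τ τ 1, mul_one, hd, ip_irr_self h, ip_mul_left, mul_one, dl_mul, hd,
    ] at h2
  have h3 := norm22 hP h h1 h h1
  rw [h2, ip_irr_self s1] at h3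
  norm_num at h3

lemma mul22_irr (hP : commutator G = ⊤) {τ τ' : G → ℂ} (h : Irr τ) (h1 : τ 1 = 2) (h' : Irr τ') (h1' : τ' 1 = 2)
    (hne : τ ≠ τ') : Irr (τ * τ') := by
  apply irr_of_norm (h.ischar.mul h'.ischar)
  rw [norm22 hP h h1 h' h1', ip_irr_ne (sigma_irr hP h h1).1 (sigma_irr hP h' h1').1, add_zero]
  exact fun hh => hne (sigma_inj hP h h1 h' h1' hh)

/-- `χ₃ = τσ - τ` -/
lemma chi3_irr (hP : commutator G = ⊤) {τ : G → ℂ} (h : Irr τ) (h1 : τ 1 = 2) :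
    Irr (τ * (τ * τ - 1) - τ) ∧ (τ * (τ * τ - 1) - τ) 1 = 4 := by
  have hd := (deg2 hP h h1).1
  obtain ⟨s1, s2, s3⟩ := sigma_irr hP h h1
  set σ := τ * τ - 1 with hσ
  have e : τ * τ = σ + 1 := by rw [hσ]; abel
  have e1 : ip (τ * σ) τ = 1 := by
    rw [mul_comm, ip_mul_left, hd, e, ip_add_right, ip_irr_self s1,
      ip_ne_one s1 (by rw [s2]; norm_num), add_zero]
  have hv : (τ * σ - τ) 1 = 4 := by simp [h1, s2]; norm_num
  refine ⟨?_, hv⟩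
  apply irr_small hP 4 (peel (h.ischar.mul s1.ischar) h (by rw [e1]; exact one_ne_zero))
    (by exact_mod_cast hv) (by norm_num) _ _ (by norm_num) (by norm_num)
  · intro _
    rw [ip_sub_left, ip_mul_left, mul_one, s3, ip_deg h s1 (by rw [h1, s2]; norm_num),
      ip_ne_one h (by rw [h1]; norm_num), sub_self]
  · intro _ τ' hτ' hτ'1
    by_cases hne : τ = τ'
    · subst hne; rw [ip_sub_left, e1, ip_irr_self h, sub_self]
    · rw [ip_sub_left, ip_irr_ne h hτ' hne, mul_comm, ip_mul_left, hd,
        ip_deg s1 (mul22_irr hP h h1 hτ' hτ'1 hne) (by simp [s2, h1, hτ'1]; norm_num), sub_self]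

end perf
end ACD

set_option linter.unusedSectionVars false
set_option linter.unusedVariables false
namespace ACD
open Module

section perf2
variable {G : Type} [Group G] [Fintype G]

lemma ip_self_ne {a : G → ℂ} (ha : Irr a) : ip a a ≠ 0 := by
  rw [ip_irr_self ha]; exact one_ne_zero

lemma eq_of_ip {a b : G → ℂ} (ha : Irr a) (hb : Irr b) (h : ip a b ≠ 0) : a = b := by
  by_contra hne; exact h (ip_irr_ne ha hb hne)


lemma lemP1 (hP : commutator G = ⊤) {θ τ : G → ℂ} (h : Irr θ) (h1 : θ 1 = 3) (ht : Irr τ) (ht1 : τ 1 = 2)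
    (hne : ip (θ * dl θ) τ ≠ 0) :
    ∃ κ, Irr κ ∧ κ 1 = 3 ∧ dl κ = κ ∧ κ ≠ τ * τ - 1 ∧ θ * dl θ = 1 + τ + (τ * τ - 1) + κ ∧
      ip (τ * κ) κ ≠ 0 := by
  have hd := (deg2 hP ht ht1).1
  obtain ⟨s1, s2, s3⟩ := sigma_irr hP ht ht1
  obtain ⟨c1, c2⟩ := chi3_irr hP ht ht1
  set σ := τ * τ - 1 with hσ
  have eττ : τ * τ = σ + 1 := by rw [hσ]; ring
  have hdI := irr_dl h
  have hθθ : IsChar (θ * dl θ) := h.ischar.mul hdI.ischar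
  have e0 : ip (θ * dl θ) 1 = 1 := by rw [ip_mul_left, mul_one, dl_dl, ip_irr_self h]
  have zτ1 : ip τ 1 = 0 := ip_ne_one ht (by rw [ht1]; norm_num)
  have zσ1 : ip σ 1 = 0 := ip_ne_one s1 (by rw [s2]; norm_num)
  have zστ : ip σ τ = 0 := ip_deg s1 ht (by rw [s2, ht1]; norm_num)
  have eκ : ip (θ * τ) θ = ip (θ * dl θ) τ := by
    rw [ip_mul_left θ (dl θ), dl_dl, ip_mul_left, hd, mul_comm]
  have hκ : IsChar (θ * τ - θ) := peel (h.ischar.mul ht.ischar) h (by rwa [eκ])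
  have hκi : Irr (θ * τ - θ) := irr3_of hP hκ (by simp [h1, ht1]; norm_num) (by
    rw [ip_sub_left, ip_mul_left, mul_one, hd, ip_deg h ht (by rw [h1, ht1]; norm_num),
      ip_ne_one h (by rw [h1]; norm_num), sub_self])
  have hn : ip (θ * τ) (θ * τ) = ip (θ * dl θ) σ + 1 := by
    rw [ip_mul_mul, hd, eττ, ip_add_right, e0]
  have hσne : ip (θ * dl θ) σ ≠ 0 := by
    intro h0
    rw [h0, zero_add] at hn
    have hi := irr_of_norm (h.ischar.mul ht.ischar) hn
    rw [← eκ] at hne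
    exact hne (ip_deg hi h (by simp [h1, ht1]))
  have p1 : IsChar (θ * dl θ - 1) := peel hθθ irr_one (by rw [e0]; exact one_ne_zero)
  have p2 : IsChar (θ * dl θ - 1 - τ) := peel p1 ht (by
    rwa [ip_sub_left, ip_comm 1 τ, zτ1, sub_zero])
  have p3 : IsChar (θ * dl θ - 1 - τ - σ) := peel p2 s1 (by
    rwa [ip_sub_left, ip_sub_left, ip_comm 1 σ, zσ1, sub_zero, ip_comm τ, zστ, sub_zero])
  have k1 : (θ * dl θ - 1 - τ - σ) 1 = 3 := by simp [h1, dl_at_one, ht1, s2]; norm_num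
  have ki : Irr (θ * dl θ - 1 - τ - σ) := irr3_of hP p3 k1 (by
    rw [ip_sub_left, ip_sub_left, ip_sub_left, e0, ip_irr_self irr_one, zτ1, zσ1]; norm_num)
  have kd : dl (θ * dl θ - 1 - τ - σ) = θ * dl θ - 1 - τ - σ := by
    simp only [dl_sub, dl_mul, dl_dl, dl_one, hd, s3]; ring
  set κ := θ * dl θ - 1 - τ - σ with hκ'
  have dec : θ * dl θ = 1 + τ + σ + κ := by rw [hκ']; ring
  have hκσ : κ ≠ σ := by
    intro hh
    have e2 : ip (θ * dl θ) σ = 2 := by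
      rw [dec, hh, ip_add_left, ip_add_left, ip_add_left, ip_comm 1 σ, zσ1, ip_comm τ, zστ,
        ip_irr_self s1]; norm_num
    have e3 : θ * τ = θ + (θ * τ - θ) := by ring
    have e4 : ip (θ * τ) (θ * τ) = 2 + 2 * ip θ (θ * τ - θ) := by
      rw [e3]
      generalize θ * τ - θ = κ at hκi
      rw [ip_add_left, ip_add_right, ip_add_right, ip_irr_self h, ip_comm κ θ,
        add_sub_cancel_left, ip_irr_self hκi]; ring
    rw [hn, e2, ip_irr h hκi] at e4
    split_ifs at e4 <;> norm_num at e4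
  refine ⟨κ, ki, k1, kd, hκσ, dec, ?_⟩
  have zκ1 : ip 1 κ = 0 := by rw [ip_comm]; exact ip_ne_one ki (by rw [k1]; norm_num)
  have zτκ : ip τ κ = 0 := ip_deg ht ki (by rw [k1, ht1]; norm_num)
  have zσκ : ip σ κ = 0 := ip_irr_ne s1 ki (Ne.symm hκσ)
  have f1 : ip (θ * dl θ) κ = 1 := by
    rw [dec, ip_add_left, ip_add_left, ip_add_left, zκ1, zτκ, zσκ, ip_irr_self ki]; norm_num
  have f2 : τ * (θ * dl θ) = θ * dl θ + (θ * τ - θ) * dl θ := by ring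
  have f3 : τ * (θ * dl θ) = τ + (σ + 1) + (τ + (τ * σ - τ)) + τ * κ := by
    rw [dec]; linear_combination eττ
  have f4 : ip (τ + (σ + 1) + (τ + (τ * σ - τ)) + τ * κ) κ
      = ip (θ * dl θ + (θ * τ - θ) * dl θ) κ := by rw [← f2, f3]
  simp only [ip_add_left] at f4
  rw [zκ1, zτκ, zσκ, f1, ip_deg c1 ki (by rw [c2, k1]; norm_num)] at f4
  obtain ⟨m, hm⟩ := ip_nat_irr (hκi.ischar.mul hdI.ischar) ki
  rw [hm] at f4
  intro h0
  rw [h0] at f4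
  have : (1 + m : ℂ) = 0 := by rw [← f4]; ring
  have : 1 + m = 0 := by exact_mod_cast this
  omega

lemma lemP (hP : commutator G = ⊤) {θ τ : G → ℂ} (h : Irr θ) (h1 : θ 1 = 3) (ht : Irr τ) (ht1 : τ 1 = 2) :
    ip (θ * dl θ) τ = 0 := by
  by_contra hne
  obtain ⟨κ, ki, k1, kd, kσ, -, kne⟩ := lemP1 hP h h1 ht ht1 hne
  obtain ⟨κ', ki', k1', kd', kσ', dec, -⟩ := lemP1 hP ki k1 ht ht1 (by
    rw [ip_mul_left] at kne; rw [ip_comm, mul_comm]; exact kne)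
  obtain ⟨s1, s2, s3⟩ := sigma_irr hP ht ht1
  have hd := (deg2 hP ht ht1).1
  have zκ1 : ip 1 κ = 0 := by rw [ip_comm]; exact ip_ne_one ki (by rw [k1]; norm_num)
  have zτκ : ip τ κ = 0 := ip_deg ht ki (by rw [k1, ht1]; norm_num)
  have hX := lemmaX hP ki k1
  rw [kd] at hX dec
  rw [dec, ip_add_left, ip_add_left, ip_add_left, zκ1, zτκ, ip_irr_ne s1 ki (Ne.symm kσ)] at hX
  have : κ' = κ := eq_of_ip ki' ki (by simpa using hX)
  subst this
  have hfun : (τ * τ - 1 + τ) * (τ + 1 - κ') = 0 := by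
    funext g
    have a1 := congrFun dec g
    have a2 := congrFun dec (g * g)
    have a3 := (deg2 hP ht ht1).2 g
    have a4 := deg3 hP ki k1 g
    have a5 : κ' g⁻¹ = κ' g := congrFun kd g
    simp only [Pi.mul_apply, Pi.add_apply, Pi.sub_apply, Pi.one_apply, Pi.zero_apply] at *
    rw [a3, a4, a5] at a2
    generalize τ g = t at *
    generalize κ' g = k at *
    linear_combination (1/2 : ℂ) * a2 - (1/2:ℂ) * (k^2 - 3 * k + t + t^2) * a1
  have : ip _ 1 = ip _ 1 := congrArg (fun f => ip f 1) hfun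
  rw [ip_zero_left] at this
  have e : (τ * τ - 1 + τ) * (τ + 1 - κ') = (τ * τ - 1) * τ + (τ * τ - 1) - (τ * τ - 1) * κ'
    + (τ * τ - 1) + 1 + τ - τ * κ' := by ring
  rw [e] at this
  set σ := τ * τ - 1 with hσ
  simp only [ip_add_left, ip_sub_left] at this
  rw [ip_mul_left, ip_mul_left, ip_mul_left, mul_one, mul_one, hd, kd, ip_ne_one s1 (by rw [s2]; norm_num),
    ip_deg s1 ht (by rw [s2, ht1]; norm_num), ip_irr_ne s1 ki (Ne.symm kσ), ip_ne_one ht (by rw [ht1]; norm_num), zτκ,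
    ip_irr_self irr_one] at this
  norm_num at this

end perf2
end ACD

set_option linter.unusedSectionVars false
set_option linter.unusedVariables false
namespace ACD
open Module

section perf3
variable {G : Type} [Group G] [Fintype G]

lemma eta_irr (hP : commutator G = ⊤) {σ : G → ℂ} (h : Irr σ) (h1 : σ 1 = 3) (hd : dl σ = σ) :
    Irr (σ * σ - 1 - σ) ∧ (σ * σ - 1 - σ) 1 = 5 ∧ dl (σ * σ - 1 - σ) = σ * σ - 1 - σ ∧
      ip (σ * σ) σ = 1 := by
  have e1 : ip (σ * σ) 1 = 1 := by rw [ip_mul_left, mul_one, hd, ip_irr_self h]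
  have z1 : ip σ 1 = 0 := ip_ne_one h (by rw [h1]; norm_num)
  have hX := lemmaX hP h h1
  rw [hd] at hX
  have p1 : IsChar (σ * σ - 1) := peel (h.ischar.mul h.ischar) irr_one (by rw [e1]; exact one_ne_zero)
  have p2 : IsChar (σ * σ - 1 - σ) := peel p1 h (by rwa [ip_sub_left, ip_comm 1, z1, sub_zero])
  have v : (σ * σ - 1 - σ) 1 = 5 := by simp [h1]; norm_num
  have hi : Irr (σ * σ - 1 - σ) := by
    apply irr_small hP 5 p2 (by exact_mod_cast v) (by norm_num) _ _ (by norm_num) (by norm_num)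
    · intro _
      rw [ip_sub_left, ip_sub_left, e1, z1, ip_irr_self irr_one]; norm_num
    · intro _ τ ht ht1
      have := lemP hP h h1 ht ht1
      rw [hd] at this
      rw [ip_sub_left, ip_sub_left, this, ip_comm 1, ip_ne_one ht (by rw [ht1]; norm_num),
        ip_deg h ht (by rw [h1, ht1]; norm_num)]; norm_num
  refine ⟨hi, v, by simp [hd], ?_⟩
  have := ip_deg hi h (by rw [v, h1]; norm_num)
  rw [ip_sub_left, ip_sub_left, ip_irr_self h, ip_comm 1, z1] at this
  linear_combination this

lemma deg_one_false (hP : commutator G = ⊤) {φ : G → ℂ} (h : IsChar φ) (h1 : φ 1 = 1) (h0 : ip φ 1 = 0) : False := by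
  have hi : Irr φ := irr_small hP 1 h (by exact_mod_cast h1) (by norm_num) (by norm_num)
    (by norm_num) (by norm_num) (by norm_num)
  rw [lin_triv hP hi h1, ip_irr_self irr_one] at h0
  exact one_ne_zero h0

lemma psi_irr (hP : commutator G = ⊤) {τ : G → ℂ} (h : Irr τ) (h1 : τ 1 = 2) (σ : G → ℂ) (hσ : σ = τ * τ - 1) :
    Irr (τ * (σ * σ - 1 - σ) - (τ * σ - τ)) ∧ (τ * (σ * σ - 1 - σ) - (τ * σ - τ)) 1 = 6 := by
  have hd := (deg2 hP h h1).1
  obtain ⟨s1, s2, s3⟩ := sigma_irr hP h h1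
  obtain ⟨c1, c2⟩ := chi3_irr hP h h1
  rw [← hσ] at s1 s2 s3 c1 c2
  obtain ⟨n1, n2, n3, n4⟩ := eta_irr hP s1 s2 s3
  set η := σ * σ - 1 - σ with hη
  have e1 : ip (τ * η) (τ * σ - τ) = 1 := by
    rw [mul_comm, ip_mul_left, hd]
    have : τ * (τ * σ - τ) = σ + η := by rw [hη, hσ]; ring
    rw [this, ip_add_right, ip_irr_self n1, ip_deg n1 s1 (by rw [n2, s2]; norm_num), zero_add]
  have v : (τ * η - (τ * σ - τ)) 1 = 6 := by
    have c2' := c2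
    rw [Pi.sub_apply, c2, Pi.mul_apply, h1, n2]; norm_num
  refine ⟨?_, v⟩
  have hc : IsChar (τ * η - (τ * σ - τ)) := peel (h.ischar.mul n1.ischar) c1 (by rw [e1]; exact one_ne_zero)
  apply irr_small hP 6 hc (by exact_mod_cast v) (by norm_num) _ _ _ (by norm_num)
  · intro _
    rw [ip_sub_left, ip_mul_left, mul_one, n3, ip_deg h n1 (by rw [h1, n2]; norm_num),
      ip_ne_one c1 (by rw [c2]; norm_num), sub_self]
  · intro _ τ' ht' ht1'
    rw [ip_sub_left, ip_deg c1 ht' (by rw [c2, ht1']; norm_num), sub_zero, mul_comm, ip_mul_left, hd]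
    by_cases hne : τ = τ'
    · subst hne
      have : τ * τ = σ + 1 := by rw [hσ]; ring
      rw [this, ip_add_right, ip_deg n1 s1 (by rw [n2, s2]; norm_num),
        ip_ne_one n1 (by rw [n2]; norm_num), add_zero]
    · exact ip_deg n1 (mul22_irr hP h h1 ht' ht1' hne) (by rw [n2, Pi.mul_apply, h1, ht1']; norm_num)
  · intro _ κ hκ hκ1
    rw [ip_sub_left, ip_deg c1 hκ (by rw [c2, hκ1]; norm_num), sub_zero]
    by_contra hne
    rw [mul_comm, ip_mul_left, hd, ip_comm] at hne
    refine deg_one_false hP (peel (h.ischar.mul hκ.ischar) n1 hne)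
      (by rw [Pi.sub_apply, Pi.mul_apply, n2, h1, hκ1]; norm_num) ?_
    rw [ip_sub_left, ip_ne_one n1 (by rw [n2]; norm_num), ip_mul_left, mul_one,
      ip_deg h (irr_dl hκ) (by rw [dl_at_one, h1, hκ1]; norm_num), sub_self]

lemma delta_cases (hP : commutator G = ⊤) {θ : G → ℂ} (h : Irr θ) (h1 : θ 1 = 3) :
    IsChar (θ * dl θ - 1) ∧
    (Irr (θ * dl θ - 1) ∨ ip (θ * dl θ - 1) (θ * dl θ - 1) = 2 ∨
      ∃ X, Irr X ∧ X 1 = 4 ∧ dl X = X ∧ θ * dl θ - 1 = X + X) := by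
  have hdI := irr_dl h
  have e0 : ip (θ * dl θ) 1 = 1 := by rw [ip_mul_left, mul_one, dl_dl, ip_irr_self h]
  have hc : IsChar (θ * dl θ - 1) := peel (h.ischar.mul hdI.ischar) irr_one (by rw [e0]; exact one_ne_zero)
  refine ⟨hc, ?_⟩
  have v : (θ * dl θ - 1) 1 = 8 := by simp [h1, dl_at_one]; norm_num
  have z1 : ip (θ * dl θ - 1) 1 = 0 := by rw [ip_sub_left, e0, ip_irr_self irr_one, sub_self]
  have z2 : ∀ τ, Irr τ → τ 1 = 2 → ip (θ * dl θ - 1) τ = 0 := by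
    intro τ ht ht1
    rw [ip_sub_left, lemP hP h h1 ht ht1, ip_comm, ip_ne_one ht (by rw [ht1]; norm_num), sub_self]
  have hdd : dl (θ * dl θ - 1) = θ * dl θ - 1 := by simp [mul_comm]
  set δ := θ * dl θ - 1 with hδ
  rcases hc.split (by intro h0; rw [h0] at v; norm_num at v) with hi | ⟨A, B, a, b, hA, hB, e, ha, hb, ha0, hab⟩
  · exact Or.inl hi
  right
  have hab8 : a + b = 8 := by rw [e, Pi.add_apply, ha, hb] at v; exact_mod_cast v
  have mA : ∀ χ, IsChar χ → ip δ χ = 0 → ip A χ = 0 := fun χ hχ h0 =>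
    ip_mono (φ := δ) (by rw [e, add_sub_cancel_left]; exact hB) hA.ischar hχ h0
  have mB : ∀ χ, IsChar χ → ip δ χ = 0 → ip B χ = 0 := fun χ hχ h0 =>
    ip_mono (φ := δ) (by rw [e, add_sub_cancel_right]; exact hA.ischar) hB hχ h0
  have ha1 : a ≠ 1 := by
    rintro rfl
    exact deg_one_false hP hA.ischar (by exact_mod_cast ha) (mA 1 irr_one.ischar z1)
  have ha2 : a ≠ 2 := by
    rintro rfl
    exact ip_self_ne hA (mA A hA.ischar (z2 A hA (by exact_mod_cast ha)))
  have hBi : Irr B := irr_small hP b hB hb (by omega) (fun _ => mB _ irr_one.ischar z1)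
    (fun _ χ hχ h2 => mB χ hχ.ischar (z2 χ hχ h2)) (fun h => by omega) (by omega)
  by_cases hABe : A = B
  · right
    subst hABe
    have : a = b := by rw [ha] at hb; exact_mod_cast hb
    have : a = 4 := by omega
    subst this
    refine ⟨A, hA, by exact_mod_cast ha, ?_, e⟩
    rw [e, dl_add] at hdd
    funext g
    have := congrFun hdd g
    simp only [Pi.add_apply] at this
    linear_combination this / 2
  · left
    rw [e, ip_add_left, ip_add_right, ip_add_right, ip_irr_self hA, ip_irr_self hBi,
      ip_irr_ne hA hBi hABe, ip_comm, ip_irr_ne hA hBi hABe]; norm_num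

lemma nsd2 (hP : commutator G = ⊤) {θ τ : G → ℂ} (h : Irr θ) (h1 : θ 1 = 3) (hns : dl θ ≠ θ) (ht : Irr τ) (ht1 : τ 1 = 2) :
    ip (θ * θ) τ = 0 := by
  by_contra hne
  have hd := (deg2 hP ht ht1).1
  obtain ⟨s1, s2, s3⟩ := sigma_irr hP ht ht1
  set σ := τ * τ - 1 with hσ
  have hy := irr_dl h
  have y1 : dl θ 1 = 3 := by rw [dl_at_one, h1]
  have e0 : ip (θ * dl θ) 1 = 1 := by rw [ip_mul_left, mul_one, dl_dl, ip_irr_self h]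
  have eκ : ip (τ * θ) (dl θ) = ip (θ * θ) τ := by
    rw [ip_mul_left, ← dl_mul]; conv_lhs => rw [← hd]
    rw [ip_dl, ip_comm]
  have hκ : IsChar (τ * θ - dl θ) := peel (ht.ischar.mul h.ischar) hy (by rwa [eκ])
  have hκ1 : (τ * θ - dl θ) 1 = 3 := by rw [Pi.sub_apply, Pi.mul_apply, y1, h1, ht1]; norm_num
  have hκi : Irr (τ * θ - dl θ) := irr3_of hP hκ hκ1 (by
    rw [ip_sub_left, ip_mul_left, mul_one, ip_deg ht hy (by rw [ht1, y1]; norm_num),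
      ip_ne_one hy (by rw [y1]; norm_num), sub_self])
  have hσne : ip (θ * dl θ) σ ≠ 0 := by
    intro h0
    have hn : ip (θ * τ) (θ * τ) = 1 := by
      rw [ip_mul_mul, hd]
      have : τ * τ = σ + 1 := by rw [hσ]; ring
      rw [this, ip_add_right, h0, e0, zero_add]
    have hi := irr_of_norm (h.ischar.mul ht.ischar) hn
    rw [mul_comm] at hi
    apply hne
    rw [← eκ]
    exact ip_deg hi hy (by rw [Pi.mul_apply, y1, h1, ht1]; norm_num)
  have hfun : (σ - 1 - τ) * (θ * dl θ - θ * θ) = 0 := by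
    have key : ∀ g, τ g ^ 2 * θ g⁻¹ + θ g ^ 2 - 2 * θ g⁻¹ + θ g⁻¹ ^ 2 - τ g * θ g * θ g⁻¹
        - τ g * θ g⁻¹ = 0 := by
      intro g
      have a1 := deg3 hP hκi hκ1 g
      have a2 := deg3 hP h h1 g
      have a3 := deg3 hP h h1 g⁻¹
      have a4 := (deg2 hP ht ht1).2 g
      have a5 : τ g⁻¹ = τ g := congrFun hd g
      simp only [Pi.sub_apply, Pi.mul_apply, dl, mul_inv_rev, inv_inv] at a1 a3
      rw [a2, a3, a4, a5] at a1
      linear_combination -a1 / 2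
    funext g
    have k1 := key g
    have k2 := key g⁻¹
    have a5 : τ g⁻¹ = τ g := congrFun hd g
    rw [inv_inv, a5] at k2
    simp only [hσ, Pi.mul_apply, Pi.sub_apply, Pi.one_apply, Pi.zero_apply, dl]
    linear_combination θ g * (k1 - k2)
  have hE : ip _ 1 = ip _ 1 := congrArg (fun f => ip f 1) hfun
  have e : (σ - 1 - τ) * (θ * dl θ - θ * θ) = θ * dl θ * σ - θ * θ * σ - θ * dl θ + θ * θ
      - θ * dl θ * τ + θ * θ * τ := by ring
  rw [e, ip_zero_left] at hE
  have zθθ : ip (θ * θ) 1 = 0 := by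
    rw [ip_mul_left, mul_one, ip_irr_ne h hy (Ne.symm hns)]
  simp only [ip_add_left, ip_sub_left] at hE
  rw [ip_mul_left (θ * dl θ) σ, ip_mul_left (θ * dl θ) τ, ip_mul_left (θ * θ) σ,
    ip_mul_left (θ * θ) τ, mul_one, mul_one, s3, hd, e0, zθθ, lemP hP h h1 ht ht1] at hE
  obtain ⟨r, hr⟩ := ip_nat_irr (h.ischar.mul hy.ischar) s1
  obtain ⟨k, hk⟩ := ip_nat_irr (h.ischar.mul h.ischar) s1
  obtain ⟨m, hm⟩ := ip_nat_irr (h.ischar.mul h.ischar) ht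
  rw [hr] at hσne
  rw [hm] at hne
  rw [hr, hk, hm] at hE
  have hE' : r + m = k + 1 := by
    have : ((r + m : ℕ) : ℂ) = (k + 1 : ℕ) := by push_cast; linear_combination hE
    exact_mod_cast this
  have hr0 : r ≠ 0 := by exact_mod_cast hσne
  have hm0 : m ≠ 0 := by exact_mod_cast hne
  have hk0 : (k : ℂ) ≠ 0 := by
    have : k ≠ 0 := by omega
    exact_mod_cast this
  have zyτ : ip (dl θ) τ = 0 := ip_deg hy ht (by rw [y1, ht1]; norm_num)
  have zyσ : ip (dl θ) σ = 0 := ip_irr_ne hy s1 (by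
    intro hh; rw [← hh, dl_dl] at s3; exact hns s3.symm)
  have zτσ : ip τ σ = 0 := ip_deg ht s1 (by rw [ht1, s2]; norm_num)
  have p1 := peel (h.ischar.mul h.ischar) hy (lemmaX hP h h1)
  have p2 := peel p1 ht (by rw [ip_sub_left, hm, zyτ, sub_zero]; exact hne)
  have p3 := peel p2 s1 (by rw [ip_sub_left, ip_sub_left, hk, zyσ, zτσ, sub_zero, sub_zero]; exact hk0)
  refine deg_one_false hP p3 ?_ ?_
  · simp only [Pi.sub_apply, Pi.mul_apply, h1, y1, ht1, s2]; norm_num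
  · rw [ip_sub_left, ip_sub_left, ip_sub_left, zθθ, ip_ne_one hy (by rw [y1]; norm_num),
      ip_ne_one ht (by rw [ht1]; norm_num), ip_ne_one s1 (by rw [s2]; norm_num)]; norm_num

/-- the exceptional configuration `θθ = 2θ* + σ` is impossible -/
lemma nsd3 (hP : commutator G = ⊤) {θ σ X : G → ℂ} (h : Irr θ) (h1 : θ 1 = 3) (hns : dl θ ≠ θ) (hs : Irr σ) (hs1 : σ 1 = 3)
    (hsy : σ ≠ dl θ) (hX : Irr X) (hX1 : X 1 = 4) (hXd : dl X = X)
    (e1 : θ * θ = dl θ + (dl θ + σ)) (e2 : θ * dl θ - 1 = X + X) : False := by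
  have hy := irr_dl h
  have y1 : dl θ 1 = 3 := by rw [dl_at_one, h1]
  have hs' := irr_dl hs
  have s1' : dl σ 1 = 3 := by rw [dl_at_one, hs1]
  have e1' : dl θ * dl θ = θ + (θ + dl σ) := by
    have := congrArg dl e1
    simpa using this
  have e3 : (2 : ℂ) • (θ * X) = (3 : ℂ) • θ + (2 : ℂ) • dl σ + dl θ * σ := by
    funext g
    have a1 := congrFun e1 g
    have a1' := congrFun e1' g
    have a2 := congrFun e2 g
    simp only [Pi.mul_apply, Pi.add_apply, Pi.sub_apply, Pi.smul_apply, smul_eq_mul, Pi.one_apply] at *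
    linear_combination -θ g * a2 + dl θ g * a1 + 2 * a1'
  have eφθ : ip (dl θ * σ) θ = 1 := by
    rw [mul_comm, ip_mul_left, dl_dl, e1, ip_add_right, ip_add_right, ip_irr_ne hs hy hsy,
      ip_irr_self hs]; norm_num
  have hIs : IsChar (θ * X) := h.ischar.mul hX.ischar
  have hΦ : IsChar (θ * X - θ - θ - dl σ) := by
    apply ischar_of_ip
    · exact cls_sub (cls_sub (cls_sub hIs.cls h.ischar.cls) h.ischar.cls) hs'.ischar.cls
    · intro ζ hζ
      obtain ⟨n, hn⟩ := ip_nat_irr hIs hζ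
      obtain ⟨m, hm⟩ := ip_nat_irr hs'.ischar hζ
      obtain ⟨k, hk⟩ := ip_nat_irr (hy.ischar.mul hs.ischar) hζ
      have e4 : ip _ ζ = ip _ ζ := congrArg (fun f => ip f ζ) e3
      rw [ip_smul_left, ip_add_left, ip_add_left, ip_smul_left, ip_smul_left, hn, hm, hk] at e4
      rw [ip_sub_left, ip_sub_left, ip_sub_left, hn, hm]
      by_cases hθζ : θ = ζ
      · subst hθζ
        rw [ip_irr_self h] at *
        rw [eφθ] at hk
        refine ⟨0, ?_⟩
        rw [← hk] at e4
        push_cast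
        linear_combination e4 / 2
      · rw [ip_irr_ne h hζ hθζ] at *
        have : 2 * n = 2 * m + k := by
          have : ((2 * n : ℕ) : ℂ) = (2 * m + k : ℕ) := by push_cast; linear_combination e4
          exact_mod_cast this
        refine ⟨n - m, ?_⟩
        rw [Nat.cast_sub (by omega)]; ring
  have v : (θ * X - θ - θ - dl σ) 1 = 3 := by
    simp only [Pi.sub_apply, Pi.mul_apply, h1, hX1, s1']; norm_num
  have hΦi := irr3_of hP hΦ v (by
    rw [ip_sub_left, ip_sub_left, ip_sub_left, ip_mul_left, mul_one, hXd, ip_deg h hX (by rw [h1, hX1]; norm_num),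
      ip_ne_one h (by rw [h1]; norm_num), ip_ne_one hs' (by rw [s1']; norm_num)]; norm_num)
  have dec : θ * X = θ + (θ + (dl σ + (θ * X - θ - θ - dl σ))) := by ring
  have n1 : ip (θ * X) (θ * X) = 1 + 2 * ip X (X * X) := by
    rw [ip_mul_mul, hXd]
    have : θ * dl θ = 1 + (X + X) := by rw [← e2]; ring
    rw [this, ip_add_left, ip_add_left, ip_comm 1, ip_mul_left, hXd, mul_one, ip_irr_self hX]; ring
  obtain ⟨q, hq⟩ := ip_nat_irr (hX.ischar.mul hX.ischar) hX
  rw [ip_comm X, hq] at n1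
  generalize θ * X - θ - θ - dl σ = Φ at *
  rw [dec] at n1
  obtain ⟨a, ha⟩ := ip_nat_irr h.ischar hs'
  obtain ⟨b, hb⟩ := ip_nat_irr h.ischar hΦi
  obtain ⟨c, hc⟩ := ip_nat_irr hs'.ischar hΦi
  simp only [ip_add_left, ip_add_right, ip_comm (dl σ) θ, ip_comm Φ θ, ip_comm Φ (dl σ), ha, hb, hc,
    ip_irr_self h, ip_irr_self hs', ip_irr_self hΦi] at n1
  have : 6 + 4 * a + 4 * b + 2 * c = 1 + 2 * q := by
    have : ((6 + 4 * a + 4 * b + 2 * c : ℕ) : ℂ) = (1 + 2 * q : ℕ) := by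
      push_cast; linear_combination n1
    exact_mod_cast this
  omega

lemma nsd (hP : commutator G = ⊤) {θ : G → ℂ} (h : Irr θ) (h1 : θ 1 = 3) (hns : dl θ ≠ θ) : Irr (θ * dl θ - 1) := by
  have hy := irr_dl h
  have y1 : dl θ 1 = 3 := by rw [dl_at_one, h1]
  obtain ⟨hδ, hδc⟩ := delta_cases hP h h1
  have e0 : ip (θ * dl θ) 1 = 1 := by rw [ip_mul_left, mul_one, dl_dl, ip_irr_self h]
  have hnorm : ip (θ * θ) (θ * θ) = 1 + ip (θ * dl θ - 1) (θ * dl θ - 1) := by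
    rw [ip_mul_mul, mul_comm (dl θ)]
    rw [ip_sub_left, ip_sub_right, ip_sub_right, e0, ip_comm 1, e0, ip_irr_self irr_one]; ring
  have hS := peel (h.ischar.mul h.ischar) hy (lemmaX hP h h1)
  have v : (θ * θ - dl θ) 1 = 6 := by simp only [Pi.sub_apply, Pi.mul_apply, h1, y1]; norm_num
  have z1 : ip (θ * θ - dl θ) 1 = 0 := by
    rw [ip_sub_left, ip_mul_left, mul_one, ip_irr_ne h hy (Ne.symm hns),
      ip_ne_one hy (by rw [y1]; norm_num), sub_self]
  have z2 : ∀ τ, Irr τ → τ 1 = 2 → ip (θ * θ - dl θ) τ = 0 := by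
    intro τ ht ht1
    rw [ip_sub_left, nsd2 hP h h1 hns ht ht1, ip_deg hy ht (by rw [y1, ht1]; norm_num), sub_self]
  have dec : θ * θ = dl θ + (θ * θ - dl θ) := by ring
  rcases hS.split (by intro h0; rw [h0] at v; norm_num at v) with hi | ⟨A, B, a, b, hA, hB, e, ha, hb, ha0, hab⟩
  · apply irr_of_norm hδ
    have z : ip (dl θ) (θ * θ - dl θ) = 0 := ip_deg hy hi (by rw [y1, v]; norm_num)
    generalize θ * θ - dl θ = S at *
    rw [dec, ip_add_left, ip_add_right, ip_add_right, ip_comm S (dl θ), z, ip_irr_self hy, ip_irr_self hi] at hnorm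
    linear_combination -hnorm
  have hab6 : a + b = 6 := by rw [e, Pi.add_apply, ha, hb] at v; exact_mod_cast v
  have mA : ∀ χ, IsChar χ → ip (θ * θ - dl θ) χ = 0 → ip A χ = 0 := fun χ hχ h0 =>
    ip_mono (φ := θ * θ - dl θ) (by rw [e, add_sub_cancel_left]; exact hB) hA.ischar hχ h0
  have mB : ∀ χ, IsChar χ → ip (θ * θ - dl θ) χ = 0 → ip B χ = 0 := fun χ hχ h0 =>
    ip_mono (φ := θ * θ - dl θ) (by rw [e, add_sub_cancel_right]; exact hA.ischar) hB hχ h0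
  have ha1 : a ≠ 1 := by
    rintro rfl
    exact deg_one_false hP hA.ischar (by exact_mod_cast ha) (mA 1 irr_one.ischar z1)
  have ha2 : a ≠ 2 := by
    rintro rfl
    exact ip_self_ne hA (mA A hA.ischar (z2 A hA (by exact_mod_cast ha)))
  have ha3 : a = 3 := by omega
  have hb3 : b = 3 := by omega
  subst ha3 hb3
  have hA1 : A 1 = 3 := by exact_mod_cast ha
  have hB1 : B 1 = 3 := by exact_mod_cast hb
  have hBi := irr3_of hP hB hB1 (mB _ irr_one.ischar z1)
  rw [e] at dec
  exfalso
  have dec' : dl θ * dl θ = θ + (dl A + dl B) := by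
    have := congrArg dl dec
    simpa using this
  have hpt : ∀ g, (A - dl θ) g * (B - dl θ) g = 0 := by
    intro g
    have a1 := congrFun dec g
    have a2 := congrFun dec (g * g)
    have a3 := congrFun dec' g
    have b1 := deg3 hP h h1 g
    have b2 := deg3 hP h h1 g⁻¹
    have b3 := deg3 hP hA hA1 g
    have b4 := deg3 hP hBi hB1 g
    simp only [Pi.mul_apply, Pi.add_apply, Pi.sub_apply, dl, mul_inv_rev, inv_inv] at *
    rw [b1, b2, b3, b4] at a2
    generalize θ g = x at *
    generalize θ g⁻¹ = y at *
    linear_combination a2 / 2 - (1/2 : ℂ) * (x ^ 2 - 3 * y + A g + B g) * a1 + a3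
  by_cases hAy : A = dl θ
  · by_cases hBy : B = dl θ
    · rw [dec, hAy, hBy] at hnorm
      simp only [ip_add_left, ip_add_right, ip_irr_self hy] at hnorm
      rcases hδc with h0 | h0 | ⟨X, hX, -, -, h0⟩
      · rw [ip_irr_self h0] at hnorm; norm_num at hnorm
      · rw [h0] at hnorm; norm_num at hnorm
      · rw [h0] at hnorm
        simp only [ip_add_left, ip_add_right, ip_irr_self hX] at hnorm; norm_num at hnorm
    · have hn := hnorm
      rw [dec, hAy] at hn
      simp only [ip_add_left, ip_add_right, ip_irr_self hy, ip_irr_self hBi, ip_irr_ne hBi hy hBy,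
        ip_irr_ne hy hBi (Ne.symm hBy)] at hn
      rcases hδc with h0 | h0 | ⟨X, hX, hX1, hXd, h0⟩
      · rw [ip_irr_self h0] at hn; norm_num at hn
      · rw [h0] at hn; norm_num at hn
      · exact nsd3 hP h h1 hns hBi hB1 hBy hX hX1 hXd (by rw [dec, hAy]) h0
  · by_cases hBy : B = dl θ
    · have hn := hnorm
      rw [dec, hBy] at hn
      simp only [ip_add_left, ip_add_right, ip_irr_self hy, ip_irr_self hA, ip_irr_ne hA hy hAy,
        ip_irr_ne hy hA (Ne.symm hAy)] at hn
      rcases hδc with h0 | h0 | ⟨X, hX, hX1, hXd, h0⟩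
      · rw [ip_irr_self h0] at hn; norm_num at hn
      · rw [h0] at hn; norm_num at hn
      · exact nsd3 hP h h1 hns hA hA1 hAy hX hX1 hXd (by rw [dec, hBy, add_comm A]) h0
    · have hz := ip_zero_of_mul_zero (a := A - dl θ) (b := B - dl θ) (by
        intro g
        simp only [Pi.sub_apply, map_sub, irr_inv_conj hBi, irr_inv_conj hy]) hpt
      simp only [ip_sub_left, ip_sub_right, ip_irr_self hy, ip_irr_ne hy hBi (Ne.symm hBy),
        ip_irr_ne hA hy hAy] at hz
      obtain ⟨n, hn⟩ := ip_nat_irr hA.ischar hBi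
      rw [hn] at hz
      have : n + 1 = 0 := by
        have : ((n + 1 : ℕ) : ℂ) = (0 : ℕ) := by push_cast; linear_combination hz
        exact_mod_cast this
      omega

end perf3
end ACD

set_option linter.unusedSectionVars false
set_option linter.unusedVariables false
namespace ACD
open Module

section perf4
variable {G : Type} [Group G] [Fintype G]

lemma ip_big {φ χ : G → ℂ} (h : IsChar φ) (hχ : Irr χ) (m n : ℕ) (hm : φ 1 = m) (hn : χ 1 = n)
    (hmn : m < n) : ip φ χ = 0 := by
  by_contra hne
  obtain ⟨k, hk⟩ := (peel h hχ hne).deg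
  rw [Pi.sub_apply, hm, hn] at hk
  have : m = k + n := by
    have : (m : ℂ) = (k + n : ℕ) := by push_cast; linear_combination hk
    exact_mod_cast this
  omega

lemma ip_common {a b c : G → ℂ} (ha : IsChar a) (hb : IsChar b) (hc : Irr c)
    (h1 : ip a c ≠ 0) (h2 : ip b c ≠ 0) : ip a b ≠ 0 := by
  intro h0
  have := ip_mono (φ := a) (peel ha hc h1 |> fun h => by simpa using h) hc.ischar hb h0
  rw [ip_comm] at this
  exact h2 this


/-! ### case (i) -/

lemma ci_tau (hP : commutator G = ⊤) {θ τ : G → ℂ} (h : Irr θ) (h1 : θ 1 = 3) (hδ : Irr (θ * dl θ - 1)) (ht : Irr τ)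
    (ht1 : τ 1 = 2) : Irr (θ * τ) := by
  have hd := (deg2 hP ht ht1).1
  obtain ⟨s1, s2, s3⟩ := sigma_irr hP ht ht1
  have v : (θ * dl θ - 1) 1 = 8 := by simp [h1, dl_at_one]; norm_num
  apply irr_of_norm (h.ischar.mul ht.ischar)
  rw [ip_mul_mul, hd]
  have e : θ * dl θ = (θ * dl θ - 1) + 1 := by ring
  have e' : τ * τ = (τ * τ - 1) + 1 := by ring
  rw [e, e', ip_add_left, ip_add_right, ip_add_right, ip_deg hδ s1 (by rw [v, s2]; norm_num),
    ip_ne_one hδ (by rw [v]; norm_num), ip_comm, ip_ne_one s1 (by rw [s2]; norm_num),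
    ip_irr_self irr_one]; norm_num

lemma ci_orth (hP : commutator G = ⊤) {θ a b : G → ℂ} (h : Irr θ) (h1 : θ 1 = 3) (hδ : Irr (θ * dl θ - 1)) (ha : Irr a)
    (hb : Irr b) (m n : ℕ) (ha1 : a 1 = m) (hb1 : b 1 = n) (hm : m ≤ 3) (hn : n ≤ 3) (hne : a ≠ b) :
    ip (θ * a) (θ * b) = 0 := by
  have v : (θ * dl θ - 1) 1 = 8 := by simp [h1, dl_at_one]; norm_num
  have e : θ * dl θ = (θ * dl θ - 1) + 1 := by ring
  have ha' := irr_dl ha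
  have z : ip (dl a * b) 1 = 0 := by
    rw [mul_comm, ip_mul_left, mul_one, dl_dl, ip_comm, ip_irr_ne ha hb hne]
  rw [ip_mul_mul, e, ip_add_left, ip_comm 1, z, add_zero, ip_comm]
  by_contra h0
  have p := peel (ha'.ischar.mul hb.ischar) hδ h0
  obtain ⟨k, hk⟩ := p.deg
  rw [Pi.sub_apply, v, Pi.mul_apply, dl_at_one, ha1, hb1] at hk
  have hk' : m * n = k + 8 := by
    have : ((m * n : ℕ) : ℂ) = (k + 8 : ℕ) := by push_cast; linear_combination hk
    exact_mod_cast this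
  have : m * n ≤ 9 := by nlinarith
  have z2 : ip (dl a * b - (θ * dl θ - 1)) 1 = 0 := by
    rw [ip_sub_left, z, ip_ne_one hδ (by rw [v]; norm_num), sub_zero]
  have : k = 0 ∨ k = 1 := by omega
  rcases this with rfl | rfl
  · interval_cases m <;> interval_cases n <;> omega
  · refine deg_one_false hP p ?_ z2
    rw [Pi.sub_apply, v, Pi.mul_apply, dl_at_one, ha1, hb1]
    have : (m * n : ℂ) = (9 : ℕ) := by rw [← Nat.cast_mul, hk']
    rw [this]; norm_num

lemma ci_theta (hP : commutator G = ⊤) {θ b : G → ℂ} (h : Irr θ) (h1 : θ 1 = 3) (hδ : Irr (θ * dl θ - 1)) (hb : Irr b)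
    (hb1 : b 1 = 3) : ∃ (c : G → ℂ) (n : ℕ), Irr c ∧ c 1 = n ∧ 5 ≤ n ∧ ip (θ * b) c = 1 ∧
      ∀ B, Irr B → B 1 = c 1 → B ≠ c → ip (θ * b) B = 0 := by
  have v : (θ * dl θ - 1) 1 = 8 := by simp [h1, dl_at_one]; norm_num
  have e : θ * dl θ = (θ * dl θ - 1) + 1 := by ring
  have e' : b * dl b = (b * dl b - 1) + 1 := by ring
  have vφ : (θ * b) 1 = 9 := by simp [h1, hb1]; norm_num
  have hφ := h.ischar.mul hb.ischar
  obtain ⟨hδb, -⟩ := delta_cases hP hb hb1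
  have vb : (b * dl b - 1) 1 = 8 := by simp [hb1, dl_at_one]; norm_num
  have eb : ip (b * dl b) 1 = 1 := by rw [ip_mul_left, mul_one, dl_dl, ip_irr_self hb]
  have hnorm : ip (θ * b) (θ * b) = 1 + ip (b * dl b - 1) (θ * dl θ - 1) := by
    rw [ip_mul_mul, mul_comm (dl b), e, ip_add_left, ip_comm 1, eb, add_sub_cancel_right, e',
      ip_add_right, ip_ne_one hδ (by rw [v]; norm_num), add_zero, ip_comm, add_comm,
      add_sub_cancel_right]
  have hle : ip (b * dl b - 1) (θ * dl θ - 1) = 0 ∨ ip (b * dl b - 1) (θ * dl θ - 1) = 1 := by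
    by_cases h0 : ip (b * dl b - 1) (θ * dl θ - 1) = 0
    · exact Or.inl h0
    · right
      have p := (peel hδb hδ h0).eq_zero (by rw [Pi.sub_apply, v, vb]; norm_num)
      rw [sub_eq_zero.1 p, ip_irr_self hδ]
  have hirr : ∀ φ : G → ℂ, Irr φ → φ 1 = 9 → ∃ (c : G → ℂ) (n : ℕ), Irr c ∧ c 1 = n ∧ 5 ≤ n ∧ ip φ c = 1 ∧
      ∀ B, Irr B → B 1 = c 1 → B ≠ c → ip φ B = 0 := fun φ hφ h9 =>
    ⟨φ, 9, hφ, by exact_mod_cast h9, by norm_num, ip_irr_self hφ, fun B hB _ hne =>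
      ip_irr_ne hφ hB (Ne.symm hne)⟩
  rcases hφ.split (by intro h0; rw [h0] at vφ; norm_num at vφ) with hi | ⟨A, B, a, b', hA, hB, e2, ha, hb', ha0, hab⟩
  · exact hirr _ hi vφ
  have hab9 : a + b' = 9 := by rw [e2, Pi.add_apply, ha, hb'] at vφ; exact_mod_cast vφ
  rcases hle with h0 | h0
  · rw [h0, add_zero] at hnorm
    exact hirr _ (irr_of_norm hφ hnorm) vφ
  rw [h0, e2] at hnorm
  obtain ⟨x, hx⟩ := ip_nat_irr hB hA
  obtain ⟨y, hy⟩ := ip_nat hB hB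
  simp only [ip_add_left, ip_add_right, ip_comm A B, hx, hy, ip_irr_self hA] at hnorm
  have hxy : 2 * x + y = 1 := by
    have : ((2 * x + y : ℕ) : ℂ) = (1 : ℕ) := by push_cast; linear_combination hnorm
    exact_mod_cast this
  have hBi : Irr B := irr_of_norm hB (by
    rw [hy]
    have : y = 1 := by omega
    rw [this]; norm_num)
  have hAB : A 1 ≠ B 1 := by
    rw [ha, hb']
    intro hh
    have : a = b' := by exact_mod_cast hh
    omega
  refine ⟨B, b', hBi, hb', by omega, ?_, ?_⟩
  · rw [e2, ip_add_left, ip_irr_self hBi, ip_deg hA hBi hAB, zero_add]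
  · intro C hC hC1 hCne
    rw [e2, ip_add_left, ip_irr_ne hBi hC (Ne.symm hCne), ip_deg hA hC (by rw [hC1]; exact hAB), zero_add]

/-! ### case (ii) -/

/-- the degree five companion -/
noncomputable def eta (σ : G → ℂ) : G → ℂ := σ * σ - 1 - σ

lemma fib_mul (hP : commutator G = ⊤) {σ ρ : G → ℂ} (h : Irr σ) (h1 : σ 1 = 3) (hd : dl σ = σ) (h' : Irr ρ) (h1' : ρ 1 = 3)
    (hd' : dl ρ = ρ) (he : eta σ = eta ρ) : eta σ * σ = eta σ * ρ := by
  funext g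
  have a1 := congrFun he g
  have a2 := congrFun he (g * g)
  have b1 := deg3 hP h h1 g
  have b2 := deg3 hP h' h1' g
  have d1 : σ g⁻¹ = σ g := congrFun hd g
  have d2 : ρ g⁻¹ = ρ g := congrFun hd' g
  simp only [eta, Pi.mul_apply, Pi.sub_apply, Pi.one_apply] at *
  rw [b1, b2, d1, d2] at a2
  generalize σ g = x at *
  generalize ρ g = y at *
  have h1 : (x - y) * (x + y - 1) = 0 := by linear_combination a1
  rcases mul_eq_zero.1 h1 with h0 | h0
  · rw [sub_eq_zero.1 h0]
  · have : y = 1 - x := by linear_combination h0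
    subst this
    linear_combination -a2/2

lemma norm33 (hP : commutator G = ⊤) {σ ρ : G → ℂ} (h : Irr σ) (h1 : σ 1 = 3) (hd : dl σ = σ) (h' : Irr ρ) (h1' : ρ 1 = 3)
    (hd' : dl ρ = ρ) (hne : σ ≠ ρ) : ip (σ * ρ) (σ * ρ) = 1 + ip (eta σ) (eta ρ) := by
  obtain ⟨n1, n2, n3, n4⟩ := eta_irr hP h h1 hd
  obtain ⟨n1', n2', n3', n4'⟩ := eta_irr hP h' h1' hd'
  rw [ip_mul_mul, hd, hd']
  have e : σ * σ = eta σ + σ + 1 := by unfold eta; ring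
  have e' : ρ * ρ = eta ρ + ρ + 1 := by unfold eta; ring
  rw [← eta] at n1 n2 n1' n2'
  rw [e, e']
  simp only [ip_add_left, ip_add_right]
  rw [ip_comm 1 (eta ρ), ip_comm 1 ρ, ip_ne_one n1 (by rw [n2]; norm_num),
    ip_ne_one n1' (by rw [n2']; norm_num), ip_ne_one h (by rw [h1]; norm_num),
    ip_ne_one h' (by rw [h1']; norm_num), ip_irr_self irr_one, ip_irr_ne h h' hne,
    ip_deg n1 h' (by rw [n2, h1']; norm_num), ip_deg h n1' (by rw [n2', h1]; norm_num)]
  ring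

lemma mul33_irr (hP : commutator G = ⊤) {σ ρ : G → ℂ} (h : Irr σ) (h1 : σ 1 = 3) (hd : dl σ = σ) (h' : Irr ρ) (h1' : ρ 1 = 3)
    (hd' : dl ρ = ρ) (hne : eta σ ≠ eta ρ) : Irr (σ * ρ) := by
  apply irr_of_norm (h.ischar.mul h'.ischar)
  rw [norm33 hP h h1 hd h' h1' hd' (by rintro rfl; exact hne rfl),
    show ip (eta σ) (eta ρ) = 0 from
      ip_irr_ne (eta_irr hP h h1 hd).1 (eta_irr hP h' h1' hd').1 hne, add_zero]

lemma fib_X (hP : commutator G = ⊤) {σ ρ : G → ℂ} (h : Irr σ) (h1 : σ 1 = 3) (hd : dl σ = σ) (h' : Irr ρ) (h1' : ρ 1 = 3)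
    (hd' : dl ρ = ρ) (hne : σ ≠ ρ) (he : eta σ = eta ρ) :
    ip (σ * ρ) (eta σ) = 1 ∧ Irr (σ * ρ - eta σ) ∧ (σ * ρ - eta σ) 1 = 4 := by
  obtain ⟨n1, n2, n3, n4⟩ := eta_irr hP h h1 hd
  rw [← eta] at n1 n2 n3
  have e : σ * σ = eta σ + σ + 1 := by unfold eta; ring
  have f1 : ip (σ * ρ) (eta σ) = 1 := by
    rw [ip_mul_left, hd', mul_comm, ← fib_mul hP h h1 hd h' h1' hd' he, mul_comm, ip_mul_right, hd,
      e, ip_add_left, ip_add_left, ip_irr_self n1, ip_deg h n1 (by rw [h1, n2]; norm_num), ip_comm,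
      ip_ne_one n1 (by rw [n2]; norm_num)]; norm_num
  refine ⟨f1, irr_of_norm (peel (h.ischar.mul h'.ischar) n1 (by rw [f1]; exact one_ne_zero)) ?_, ?_⟩
  · have := norm33 hP h h1 hd h' h1' hd' hne
    rw [← he, ip_irr_self n1] at this
    rw [ip_sub_left, ip_sub_right, ip_sub_right, this, ip_comm (eta σ) (σ * ρ), f1, ip_irr_self n1]; norm_num
  · rw [Pi.sub_apply, Pi.mul_apply, n2, h1, h1']; norm_num

lemma fib_two (hP : commutator G = ⊤) {a b c : G → ℂ} (h : Irr a) (h1 : a 1 = 3) (hd : dl a = a) (h' : Irr b) (h1' : b 1 = 3)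
    (hd' : dl b = b) (h'' : Irr c) (h1'' : c 1 = 3) (hd'' : dl c = c) (hab : a ≠ b) (hac : a ≠ c)
    (hbc : b ≠ c) (e1 : eta a = eta b) (e2 : eta a = eta c) : False := by
  obtain ⟨n1, n2, n3, n4⟩ := eta_irr hP h h1 hd
  rw [← eta] at n1 n2 n3
  obtain ⟨x1, x2, x3⟩ := fib_X hP h h1 hd h' h1' hd' hab e1
  obtain ⟨y1, y2, y3⟩ := fib_X hP h h1 hd h'' h1'' hd'' hac e2
  obtain ⟨w1, w2, w3⟩ := fib_X hP h' h1' hd' h'' h1'' hd'' hbc (e1.symm.trans e2)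
  rw [← e1] at w1 w2 w3
  have gen : ∀ r : G → ℂ, Irr r → r 1 = 3 → dl r = r → eta a = eta r →
      ip (eta a * a) r = 1 ∧ (a ≠ r → ip (eta a * a) (a * r - eta a) = 1) := by
    intro r hr hr1 hrd er
    have em := fib_mul hP h h1 hd hr hr1 hrd er
    have err : r * r = eta a + r + 1 := by rw [er]; unfold eta; ring
    have g1 : ip (eta a * a) r = 1 := by
      rw [em, ip_mul_left, hrd, err, ip_add_right, ip_add_right, ip_irr_self n1,
        ip_deg n1 hr (by rw [n2, hr1]; norm_num), ip_ne_one n1 (by rw [n2]; norm_num)]; norm_num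
    refine ⟨g1, fun hne => ?_⟩
    have : ip (eta a * a) (a * r) = ip (eta a * a) (r * r) := by
      rw [ip_mul_left, hd]
      have e5 : a * (a * r) = r * (a * a) := by ring
      have e6 : ip (eta a) (a * (a * r)) = ip (eta a * a) (a * r) := by rw [ip_mul_right, hd]
      rw [e6, em, ip_mul_right, hd, mul_assoc, mul_comm r, ← mul_assoc, em, ip_mul_right, hrd]
    rw [ip_sub_right, this, err, ip_add_right, ip_add_right, g1, ip_mul_left (eta a) a 1, mul_one, hd,
      ip_deg n1 h (by rw [n2, h1]; norm_num)]; ring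
  have ga := (gen a h h1 hd rfl).1
  obtain ⟨gb, gb'⟩ := gen b h' h1' hd' e1
  obtain ⟨gc, gc'⟩ := gen c h'' h1'' hd'' e2
  have gb' := gb' hab
  have gc' := gc' hac
  have zX : ip (a * b - eta a) (a * c - eta a) = 0 := by
    have eaa : a * a = eta a + a + 1 := by unfold eta; ring
    have ebc : b * c = eta a + (b * c - eta a) := by ring
    have z := ip_deg h w2 (by rw [h1, w3]; norm_num)
    have z5 := ip_deg h n1 (by rw [h1, n2]; norm_num)
    rw [ip_sub_left, ip_sub_right, ip_sub_right, ip_mul_mul, hd, hd', x1, ip_comm (eta a) (a * c), y1,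
      ip_irr_self n1, eaa, ip_add_left, ip_add_left, ip_comm (eta a), w1, ip_comm 1, ip_mul_left, mul_one,
      hd'', ip_irr_ne h' h'' hbc]
    have : ip a (b * c) = 0 := by rw [ebc, ip_add_right, z, z5, add_zero]
    rw [this]; ring
  have zd : ∀ r : G → ℂ, Irr r → r 1 = 3 → ∀ X, Irr X → X 1 = 4 → ip r X = 0 := fun r hr hr1 X hX hX1 =>
    ip_deg hr hX (by rw [hr1, hX1]; norm_num)
  set X := a * b - eta a
  set Y := a * c - eta a
  have p0 := (n1.ischar.mul h.ischar)
  have p1 := peel p0 h (by rw [ga]; exact one_ne_zero)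
  have p2 := peel p1 h' (by rw [ip_sub_left, gb, ip_irr_ne h h' hab, sub_zero]; exact one_ne_zero)
  have p3 := peel p2 h'' (by
    rw [ip_sub_left, ip_sub_left, gc, ip_irr_ne h h'' hac, ip_irr_ne h' h'' hbc, sub_zero, sub_zero]
    exact one_ne_zero)
  have p4 := peel p3 x2 (by
    rw [ip_sub_left, ip_sub_left, ip_sub_left, gb', zd a h h1 X x2 x3, zd b h' h1' X x2 x3,
      zd c h'' h1'' X x2 x3]; norm_num)
  have p5 := peel p4 y2 (by
    rw [ip_sub_left, ip_sub_left, ip_sub_left, ip_sub_left, gc', zd a h h1 Y y2 y3, zd b h' h1' Y y2 y3,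
      zd c h'' h1'' Y y2 y3, zX]; norm_num)
  obtain ⟨k, hk⟩ := p5.deg
  simp only [Pi.sub_apply, Pi.mul_apply, h1, h1', h1'', n2, x3, y3] at hk
  have : k + 2 = 0 := by
    have : ((k + 2 : ℕ) : ℂ) = (0 : ℕ) := by push_cast; linear_combination -hk
    exact_mod_cast this
  omega

end perf4
end ACD

set_option linter.unusedSectionVars false
set_option linter.unusedVariables false
namespace ACD
open Module

section perf5
variable {G : Type} [Group G] [Fintype G]

/-- excess of a character -/
noncomputable def wt (θ : G → ℂ) : ℝ := 8 * (θ 1).re - 29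

lemma wt_of {θ : G → ℂ} {n : ℕ} (h : θ 1 = n) : wt θ = 8 * n - 29 := by
  rw [wt, h]; simp


lemma deg_ge_two (hP : commutator G = ⊤) {θ : G → ℂ} (h : Irr θ) (hne : θ ≠ 1) : ∃ n : ℕ, 2 ≤ n ∧ θ 1 = n := by
  obtain ⟨n, hn0, hn⟩ := h.deg
  refine ⟨n, ?_, hn⟩
  by_contra hlt
  have : n = 1 := by omega
  subst this
  exact hne (lin_triv hP h (by exact_mod_cast hn))

/-- sets of irreducible characters closed under suitable constituents of products -/
structure Clo (E : Finset (G → ℂ)) : Prop where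
  irr : ∀ θ ∈ E, Irr θ ∧ θ ≠ 1
  clo : ∀ a ∈ E, ∀ b ∈ E, ∀ A, Irr A → A ≠ 1 → ip (a * b) A = 1 →
    (∀ B, Irr B → B 1 = A 1 → B ≠ A → ip (a * b) B = 0) → A ∈ E

lemma Clo.irr_mem (hP : commutator G = ⊤) {E : Finset (G → ℂ)} (hE : Clo E) {a b : G → ℂ} (ha : a ∈ E) (hb : b ∈ E)
    (h : Irr (a * b)) (hne : (a * b) 1 ≠ 1) : a * b ∈ E :=
  hE.clo a ha b hb _ h (by intro h; rw [h] at hne; exact hne rfl) (ip_irr_self h)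
    fun B hB _ hne => ip_irr_ne h hB (Ne.symm hne)

lemma Clo.sum_mem (hP : commutator G = ⊤) {E : Finset (G → ℂ)} (hE : Clo E) {a b A R : G → ℂ} (ha : a ∈ E) (hb : b ∈ E)
    (h : Irr A) (hne : A 1 ≠ 1) (e : a * b = A + R)
    (hR : ∀ B, Irr B → B 1 = A 1 → ip R B = 0) : A ∈ E :=
  hE.clo a ha b hb _ h (by intro h; rw [h] at hne; exact hne rfl)
    (by rw [e, ip_add_left, ip_irr_self h, hR A h rfl, add_zero])
    fun B hB h1 hne => by rw [e, ip_add_left, ip_irr_ne h hB (Ne.symm hne), hR B hB h1, add_zero]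

lemma sum_bound (hP : commutator G = ⊤) {E T : Finset (G → ℂ)} (hE : Clo E) (hT : T ⊆ E)
    (hT4 : ∀ θ ∈ T, ∃ n : ℕ, 4 ≤ n ∧ θ 1 = n) :
    ∑ θ ∈ T, wt θ - 13 * (E.filter (fun θ => θ 1 = 2)).card - 5 * (E.filter (fun θ => θ 1 = 3)).card
      ≤ ∑ θ ∈ E, wt θ := by
  have h1 : ∑ θ ∈ T, wt θ = ∑ θ ∈ E, if θ ∈ T then wt θ else 0 := by
    rw [Finset.sum_ite_mem, Finset.inter_eq_right.2 hT]
  rw [h1, Finset.card_filter, Finset.card_filter]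
  push_cast
  rw [Finset.mul_sum, Finset.mul_sum, ← Finset.sum_sub_distrib, ← Finset.sum_sub_distrib]
  refine Finset.sum_le_sum fun θ hθ => ?_
  obtain ⟨n, hn2, hn⟩ := deg_ge_two hP (hE.irr θ hθ).1 (hE.irr θ hθ).2
  rw [wt_of hn, hn]
  have c2 : ((n : ℂ) = 2) ↔ n = 2 := by norm_cast
  have c3 : ((n : ℂ) = 3) ↔ n = 3 := by norm_cast
  rw [if_congr c2 rfl rfl, if_congr c3 rfl rfl]
  by_cases hθT : θ ∈ T
  · obtain ⟨m, hm4, hm⟩ := hT4 θ hθT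
    have : n = m := by rw [hn] at hm; exact_mod_cast hm
    rw [if_pos hθT, if_neg (by omega), if_neg (by omega)]; simp
  · rw [if_neg hθT]
    by_cases e2 : n = 2
    · subst e2; norm_num
    · by_cases e3 : n = 3
      · subst e3; norm_num
      · rw [if_neg e2, if_neg e3]
        have : 4 ≤ n := by omega
        have : (4 : ℝ) ≤ n := by exact_mod_cast this
        linarith

lemma sigma_mem (hP : commutator G = ⊤) {E : Finset (G → ℂ)} (hE : Clo E) {τ : G → ℂ} (ht : τ ∈ E) (h1 : τ 1 = 2) :
    τ * τ - 1 ∈ E := by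
  obtain ⟨s1, s2, s3⟩ := sigma_irr hP (hE.irr τ ht).1 h1
  refine hE.sum_mem hP ht ht s1 (by rw [s2]; norm_num) (R := 1) (by ring) ?_
  intro B hB hB1
  rw [ip_comm]; exact ip_ne_one hB (by rw [hB1, s2]; norm_num)

lemma chi3_mem (hP : commutator G = ⊤) {E : Finset (G → ℂ)} (hE : Clo E) {τ : G → ℂ} (ht : τ ∈ E) (h1 : τ 1 = 2) :
    τ * (τ * τ - 1) - τ ∈ E := by
  obtain ⟨s1, s2⟩ := chi3_irr hP (hE.irr τ ht).1 h1
  refine hE.sum_mem hP ht (sigma_mem hP hE ht h1) s1 (by rw [s2]; norm_num) (R := τ) (by ring) ?_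
  intro B hB hB1
  exact ip_deg (hE.irr τ ht).1 hB (by rw [hB1, s2, h1]; norm_num)

lemma eta_mem (hP : commutator G = ⊤) {E : Finset (G → ℂ)} (hE : Clo E) {σ : G → ℂ} (hs : σ ∈ E) (h1 : σ 1 = 3)
    (hd : dl σ = σ) : eta σ ∈ E := by
  obtain ⟨s1, s2, -⟩ := eta_irr hP (hE.irr σ hs).1 h1 hd
  rw [← eta] at s1 s2
  refine hE.sum_mem hP hs hs s1 (by rw [s2]; norm_num) (R := 1 + σ) (by unfold eta; ring) ?_
  intro B hB hB1
  rw [ip_add_left, ip_comm 1, ip_ne_one hB (by rw [hB1, s2]; norm_num),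
    ip_deg (hE.irr σ hs).1 hB (by rw [hB1, s2, h1]; norm_num), add_zero]

lemma psi_mem (hP : commutator G = ⊤) {E : Finset (G → ℂ)} (hE : Clo E) {τ : G → ℂ} (ht : τ ∈ E) (h1 : τ 1 = 2) :
    τ * eta (τ * τ - 1) - (τ * (τ * τ - 1) - τ) ∈ E := by
  obtain ⟨c1, c2⟩ := chi3_irr hP (hE.irr τ ht).1 h1
  obtain ⟨s1, s2, s3⟩ := sigma_irr hP (hE.irr τ ht).1 h1
  obtain ⟨p1, p2⟩ := psi_irr hP (hE.irr τ ht).1 h1 _ rfl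
  rw [← eta] at p1 p2
  refine hE.sum_mem hP ht (eta_mem hP hE (sigma_mem hP hE ht h1) s2 s3) p1 (by rw [p2]; norm_num)
    (R := τ * (τ * τ - 1) - τ) (by unfold eta; ring) ?_
  intro B hB hB1
  exact ip_deg c1 hB (by rw [hB1, p2, c2]; norm_num)

lemma EB_i (hP : commutator G = ⊤) {E : Finset (G → ℂ)} (hE : Clo E) {θ : G → ℂ} (hθ : θ ∈ E) (h1 : θ 1 = 3)
    (hδ : Irr (θ * dl θ - 1)) : 0 ≤ ∑ θ ∈ E, wt θ := by
  have hi := (hE.irr θ hθ).1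
  set E2 := E.filter (fun θ => θ 1 = 2) with hE2
  set E3 := E.filter (fun θ => θ 1 = 3) with hE3
  have m2 : ∀ τ, τ ∈ E2 ↔ τ ∈ E ∧ τ 1 = 2 := by simp [hE2]
  have m3 : ∀ τ, τ ∈ E3 ↔ τ ∈ E ∧ τ 1 = 3 := by simp [hE3]
  have hc : ∀ b, ∃ (c : G → ℂ) (n : ℕ), b ∈ E3 → Irr c ∧ c 1 = n ∧ 5 ≤ n ∧ ip (θ * b) c = 1 ∧
      ∀ B, Irr B → B 1 = c 1 → B ≠ c → ip (θ * b) B = 0 := by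
    intro b
    by_cases hb : b ∈ E3
    · obtain ⟨c, n, h⟩ := ci_theta hP hi h1 hδ (hE.irr b ((m3 b).1 hb).1).1 ((m3 b).1 hb).2
      exact ⟨c, n, fun _ => h⟩
    · exact ⟨b, 0, fun h => absurd h hb⟩
  choose c n hcn using hc
  have inj1 : Set.InjOn c E3 := by
    intro a ha b hb hab
    have ha := Finset.mem_coe.1 ha
    have hb := Finset.mem_coe.1 hb
    by_contra hne
    obtain ⟨a1, -, -, a2, -⟩ := hcn a ha
    obtain ⟨b1, -, -, b2, -⟩ := hcn b hb
    rw [m3] at ha hb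
    have ia := (hE.irr a ha.1).1
    have ib := (hE.irr b hb.1).1
    refine ip_common (hi.ischar.mul ia.ischar) (hi.ischar.mul ib.ischar) a1
      (by rw [a2]; exact one_ne_zero) (by rw [hab, b2]; exact one_ne_zero) ?_
    exact ci_orth hP hi h1 hδ ia ib 3 3 (by exact_mod_cast ha.2) (by exact_mod_cast hb.2) le_rfl le_rfl hne
  have inj2 : Set.InjOn (fun τ => θ * τ) E2 := by
    intro a ha b hb hab
    have ha := Finset.mem_coe.1 ha
    have hb := Finset.mem_coe.1 hb
    by_contra hne
    rw [m2] at ha hb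
    have ia := (hE.irr a ha.1).1
    have ib := (hE.irr b hb.1).1
    have := ci_orth hP hi h1 hδ ia ib 2 2 (by exact_mod_cast ha.2) (by exact_mod_cast hb.2) (by norm_num) (by norm_num) hne
    simp only at hab
    rw [← hab, ip_irr_self (ci_tau hP hi h1 hδ ia ha.2)] at this
    exact one_ne_zero this
  have hdisj : Disjoint (E3.image c) (E2.image (fun τ => θ * τ)) := by
    rw [Finset.disjoint_left]
    intro x hx hx'
    obtain ⟨b, hb, rfl⟩ := Finset.mem_image.1 hx
    obtain ⟨τ, ht, e⟩ := Finset.mem_image.1 hx'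
    obtain ⟨b1, -, -, b2, -⟩ := hcn b hb
    rw [m3] at hb; rw [m2] at ht
    have ib := (hE.irr b hb.1).1
    have it := (hE.irr τ ht.1).1
    have := ci_orth hP hi h1 hδ ib it 3 2 (by exact_mod_cast hb.2) (by exact_mod_cast ht.2) (by norm_num) (by norm_num)
      (by rintro rfl; have := hb.2; rw [ht.2] at this; norm_num at this)
    rw [e, b2] at this
    exact one_ne_zero this
  have d6 : ∀ τ, τ ∈ E2 → (θ * τ) 1 = (6 : ℕ) := by
    intro τ ht; rw [m2] at ht; rw [Pi.mul_apply, h1, ht.2]; norm_num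
  have hb := sum_bound hP (T := E3.image c ∪ E2.image (fun τ => θ * τ)) hE (by
    intro x hx
    rcases Finset.mem_union.1 hx with hx | hx
    · obtain ⟨b, hb, rfl⟩ := Finset.mem_image.1 hx
      obtain ⟨b1, b3, b4, b2, b5⟩ := hcn b hb
      refine hE.clo θ hθ b ((m3 b).1 hb).1 _ b1 ?_ b2 b5
      intro h0
      rw [h0, Pi.one_apply] at b3
      have : n b = 1 := by exact_mod_cast b3.symm
      omega
    · obtain ⟨τ, ht, rfl⟩ := Finset.mem_image.1 hx
      have d := d6 τ ht
      rw [m2] at ht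
      exact hE.irr_mem hP hθ ht.1 (ci_tau hP hi h1 hδ (hE.irr τ ht.1).1 ht.2) (by rw [d]; norm_num)) (by
    intro x hx
    rcases Finset.mem_union.1 hx with hx | hx
    · obtain ⟨b, hb, rfl⟩ := Finset.mem_image.1 hx
      obtain ⟨b1, b3, b4, b2, b5⟩ := hcn b hb
      exact ⟨n b, by omega, b3⟩
    · obtain ⟨τ, ht, rfl⟩ := Finset.mem_image.1 hx
      exact ⟨6, by norm_num, d6 τ ht⟩)
  rw [Finset.sum_union hdisj, Finset.sum_image inj1, Finset.sum_image inj2] at hb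
  have s1 : (E3.card : ℝ) * 11 ≤ ∑ x ∈ E3, wt (c x) := by
    rw [← nsmul_eq_mul]
    apply Finset.card_nsmul_le_sum
    intro b hb
    obtain ⟨b1, b3, b4, b2, b5⟩ := hcn b hb
    rw [wt_of b3]
    have : (5 : ℝ) ≤ n b := by exact_mod_cast b4
    linarith
  have s2 : (E2.card : ℝ) * 19 ≤ ∑ x ∈ E2, wt (θ * x) := by
    rw [← nsmul_eq_mul]
    apply Finset.card_nsmul_le_sum
    intro b hb
    rw [wt_of (d6 b hb)]
    norm_num
  have p2 : (0 : ℝ) ≤ E2.card := Nat.cast_nonneg _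
  have p3 : (0 : ℝ) ≤ E3.card := Nat.cast_nonneg _
  rw [← hE2, ← hE3] at hb
  linarith

lemma EB_fib (hP : commutator G = ⊤) {E : Finset (G → ℂ)} (hE : Clo E) (hsd : ∀ θ ∈ E, θ 1 = 3 → dl θ = θ)
    {σ : G → ℂ} (hσ : σ ∈ E) (h1 : σ 1 = 3) (F B : Finset (G → ℂ))
    (hF : ∀ ρ, ρ ∈ F ↔ ρ ∈ E ∧ ρ 1 = 3 ∧ eta ρ = eta σ)
    (hB : ∀ τ, τ ∈ B ↔ τ ∈ E ∧ τ 1 = 2 ∧ eta (τ * τ - 1) = eta σ) :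
    ∃ T : Finset (G → ℂ), T ⊆ E ∧ (∀ θ ∈ T, ∃ n : ℕ, 4 ≤ n ∧ n ≤ 6 ∧ θ 1 = n) ∧
      13 * (B.card : ℝ) + 5 * F.card ≤ ∑ θ ∈ T, wt θ := by
  have hi := (hE.irr σ hσ).1
  have hd := hsd σ hσ h1
  obtain ⟨n1, n2, n3, -⟩ := eta_irr hP hi h1 hd
  rw [← eta] at n1 n2 n3
  have hηE := eta_mem hP hE hσ h1 hd
  have hFc : F.card ≤ 2 := by
    by_contra hcon
    obtain ⟨a, b, c, ha, hb, hc, hab, hac, hbc⟩ := Finset.two_lt_card_iff.1 (by omega : 2 < F.card)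
    rw [hF] at ha hb hc
    exact fib_two hP (hE.irr a ha.1).1 ha.2.1 (hsd a ha.1 ha.2.1) (hE.irr b hb.1).1 hb.2.1
      (hsd b hb.1 hb.2.1) (hE.irr c hc.1).1 hc.2.1 (hsd c hc.1 hc.2.1) hab hac hbc
      (ha.2.2.trans hb.2.2.symm) (ha.2.2.trans hc.2.2.symm)
  have hBF : B.card ≤ F.card := by
    apply Finset.card_le_card_of_injOn (fun τ => τ * τ - 1)
    · intro τ ht
      have ht := (hB τ).1 (Finset.mem_coe.1 ht)
      exact Finset.mem_coe.2 ((hF _).2 ⟨sigma_mem hP hE ht.1 ht.2.1, (sigma_irr hP (hE.irr τ ht.1).1 ht.2.1).2.1, ht.2.2⟩)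
    · intro a ha b hb hab
      have ha := (hB a).1 (Finset.mem_coe.1 ha)
      have hb := (hB b).1 (Finset.mem_coe.1 hb)
      exact sigma_inj hP (hE.irr a ha.1).1 ha.2.1 (hE.irr b hb.1).1 hb.2.1 hab
  have hFr : (F.card : ℝ) ≤ 2 := by exact_mod_cast hFc
  have n2' : eta σ 1 = (5 : ℕ) := by rw [n2]; norm_num
  have hBc : B.card = 0 ∨ B.card = 1 ∨ B.card = 2 := by omega
  rcases hBc with h0 | h0 | h0
  · refine ⟨{eta σ}, by simpa using hηE, ?_, ?_⟩
    · intro θ hθ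
      rw [Finset.mem_singleton.1 hθ]
      exact ⟨5, by norm_num, by norm_num, n2'⟩
    · rw [h0, Finset.sum_singleton, wt_of n2']; push_cast; linarith
  · obtain ⟨τ, hτ⟩ := Finset.card_eq_one.1 h0
    have ht := (hB τ).1 (by rw [hτ]; simp)
    obtain ⟨p1, p2⟩ := psi_irr hP (hE.irr τ ht.1).1 ht.2.1 _ rfl
    have hψE := psi_mem hP hE ht.1 ht.2.1
    have p2' : (τ * eta (τ * τ - 1) - (τ * (τ * τ - 1) - τ) : G → ℂ) 1 = (6 : ℕ) := by
      unfold eta; rw [p2]; norm_num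
    set ψ := τ * eta (τ * τ - 1) - (τ * (τ * τ - 1) - τ)
    have hne : eta σ ≠ ψ := by intro h; rw [← h, n2'] at p2'; norm_num at p2'
    refine ⟨{eta σ, ψ}, ?_, ?_, ?_⟩
    · intro θ hθ
      simp only [Finset.mem_insert, Finset.mem_singleton] at hθ
      rcases hθ with rfl | rfl
      exacts [hηE, hψE]
    · intro θ hθ
      simp only [Finset.mem_insert, Finset.mem_singleton] at hθ
      rcases hθ with rfl | rfl
      exacts [⟨5, by norm_num, by norm_num, n2'⟩, ⟨6, by norm_num, by norm_num, p2'⟩]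
    · rw [h0, Finset.sum_pair hne, wt_of n2', wt_of p2']; push_cast; linarith
  · obtain ⟨τ, τ', hττ, hτ⟩ := Finset.card_eq_two.1 h0
    have ht := (hB τ).1 (by rw [hτ]; simp)
    have ht' := (hB τ').1 (by rw [hτ]; simp)
    have it := (hE.irr τ ht.1).1
    have it' := (hE.irr τ' ht'.1).1
    obtain ⟨s1, s2, s3⟩ := sigma_irr hP it ht.2.1
    obtain ⟨p1, p2⟩ := psi_irr hP it ht.2.1 _ rfl
    obtain ⟨c1, c2⟩ := chi3_irr hP it ht.2.1
    have hψE := psi_mem hP hE ht.1 ht.2.1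
    have hχE := chi3_mem hP hE ht.1 ht.2.1
    have hm := mul22_irr hP it ht.2.1 it' ht'.2.1 hττ
    have hm1 : (τ * τ') 1 = (4 : ℕ) := by rw [Pi.mul_apply, ht.2.1, ht'.2.1]; norm_num
    have hmE := hE.irr_mem hP ht.1 ht'.1 hm (by rw [hm1]; norm_num)
    have hχm : τ * (τ * τ - 1) - τ ≠ τ * τ' := by
      intro h
      have : ip (τ * (τ * τ - 1) - τ) (τ * τ') = 0 := by
        have e : (τ * (τ * τ - 1) - τ) * τ = (τ * τ - 1) + eta (τ * τ - 1) := by unfold eta; ring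
        rw [ip_mul_right, (deg2 hP it ht.2.1).1, e, ip_add_left,
          ip_deg s1 it' (by rw [s2, ht'.2.1]; norm_num), ht.2.2, ip_deg n1 it' (by rw [n2, ht'.2.1]; norm_num), add_zero]
      rw [h, ip_irr_self hm] at this
      exact one_ne_zero this
    have p2' : (τ * eta (τ * τ - 1) - (τ * (τ * τ - 1) - τ) : G → ℂ) 1 = (6 : ℕ) := by
      unfold eta; rw [p2]; norm_num
    set ψ := τ * eta (τ * τ - 1) - (τ * (τ * τ - 1) - τ)
    have c2' : (τ * (τ * τ - 1) - τ) 1 = (4 : ℕ) := by rw [c2]; norm_num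
    set χ := τ * (τ * τ - 1) - τ
    have hne : eta σ ≠ ψ := by intro h; rw [← h, n2'] at p2'; norm_num at p2'
    have hne2 : χ ≠ eta σ := by intro h; rw [h, n2'] at c2'; norm_num at c2'
    have hne3 : χ ≠ ψ := by intro h; rw [h, p2'] at c2'; norm_num at c2'
    have hne4 : τ * τ' ≠ eta σ := by intro h; rw [h, n2'] at hm1; norm_num at hm1
    have hne5 : τ * τ' ≠ ψ := by intro h; rw [h, p2'] at hm1; norm_num at hm1
    refine ⟨{τ * τ', χ, eta σ, ψ}, ?_, ?_, ?_⟩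
    · intro θ hθ
      simp only [Finset.mem_insert, Finset.mem_singleton] at hθ
      rcases hθ with rfl | rfl | rfl | rfl
      exacts [hmE, hχE, hηE, hψE]
    · intro θ hθ
      simp only [Finset.mem_insert, Finset.mem_singleton] at hθ
      rcases hθ with rfl | rfl | rfl | rfl
      exacts [⟨4, by norm_num, by norm_num, hm1⟩, ⟨4, by norm_num, by norm_num, c2'⟩,
        ⟨5, by norm_num, by norm_num, n2'⟩, ⟨6, by norm_num, by norm_num, p2'⟩]
    · rw [h0, Finset.sum_insert (by simp [hne4, hne5, Ne.symm hχm]),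
        Finset.sum_insert (by simp [hne2, hne3]), Finset.sum_pair hne, wt_of n2', wt_of p2',
        wt_of c2', wt_of hm1]; push_cast; linarith

lemma EB_ii (hP : commutator G = ⊤) {E : Finset (G → ℂ)} (hE : Clo E) (hsd : ∀ θ ∈ E, θ 1 = 3 → dl θ = θ)
    {σ : G → ℂ} (hσ : σ ∈ E) (h1 : σ 1 = 3) : 0 ≤ ∑ θ ∈ E, wt θ := by
  have hi := (hE.irr σ hσ).1
  have hd := hsd σ hσ h1
  set E2 := E.filter (fun θ => θ 1 = 2) with hE2
  set E3 := E.filter (fun θ => θ 1 = 3) with hE3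
  have m2 : ∀ τ, τ ∈ E2 ↔ τ ∈ E ∧ τ 1 = 2 := by simp [hE2]
  have m3 : ∀ τ, τ ∈ E3 ↔ τ ∈ E ∧ τ 1 = 3 := by simp [hE3]
  set F := E3.filter (fun ρ => eta ρ = eta σ) with hF
  set R := E3.filter (fun ρ => ¬ eta ρ = eta σ) with hR
  set B := E2.filter (fun τ => eta (τ * τ - 1) = eta σ) with hB
  set C := E2.filter (fun τ => ¬ eta (τ * τ - 1) = eta σ) with hC
  have c3 : F.card + R.card = E3.card := Finset.card_filter_add_card_filter_not _
  have c2 : B.card + C.card = E2.card := Finset.card_filter_add_card_filter_not _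
  have mR : ∀ ρ, ρ ∈ R ↔ ρ ∈ E ∧ ρ 1 = 3 ∧ eta ρ ≠ eta σ := by
    intro ρ; rw [hR, Finset.mem_filter, m3, and_assoc]
  have mC : ∀ ρ, ρ ∈ C ↔ ρ ∈ E ∧ ρ 1 = 2 ∧ eta (ρ * ρ - 1) ≠ eta σ := by
    intro ρ; rw [hC, Finset.mem_filter, m2, and_assoc]
  have hCR : C.card ≤ R.card := by
    apply Finset.card_le_card_of_injOn (fun τ => τ * τ - 1)
    · intro τ ht
      have ht := (mC τ).1 (Finset.mem_coe.1 ht)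
      exact Finset.mem_coe.2 ((mR _).2 ⟨sigma_mem hP hE ht.1 ht.2.1, (sigma_irr hP (hE.irr τ ht.1).1 ht.2.1).2.1, ht.2.2⟩)
    · intro a ha b hb hab
      have ha := (mC a).1 (Finset.mem_coe.1 ha)
      have hb := (mC b).1 (Finset.mem_coe.1 hb)
      exact sigma_inj hP (hE.irr a ha.1).1 ha.2.1 (hE.irr b hb.1).1 hb.2.1 hab
  obtain ⟨T, hTE, hT4, hTs⟩ := EB_fib hP hE hsd hσ h1 F B
    (by intro ρ; rw [hF, Finset.mem_filter, m3, and_assoc])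
    (by intro ρ; rw [hB, Finset.mem_filter, m2, and_assoc])
  have d9 : ∀ ρ, ρ ∈ R → (σ * ρ) 1 = (9 : ℕ) := by
    intro ρ hρ; rw [mR] at hρ; rw [Pi.mul_apply, h1, hρ.2.1]; norm_num
  have iR : ∀ ρ, ρ ∈ R → Irr (σ * ρ) := by
    intro ρ hρ; rw [mR] at hρ
    exact mul33_irr hP hi h1 hd (hE.irr ρ hρ.1).1 hρ.2.1 (hsd ρ hρ.1 hρ.2.1) (Ne.symm hρ.2.2)
  have inj : Set.InjOn (fun ρ => σ * ρ) R := by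
    intro a ha b hb hab
    have ha := Finset.mem_coe.1 ha
    have hb := Finset.mem_coe.1 hb
    have iab := iR a ha
    simp only at hab
    rw [mR] at ha hb
    by_contra hne
    have ia := (hE.irr a ha.1).1
    have ib := (hE.irr b hb.1).1
    have hda := hsd a ha.1 ha.2.1
    obtain ⟨n1, n2, n3, -⟩ := eta_irr hP hi h1 hd
    rw [← eta] at n1 n2 n3
    have hn := ip_irr_self iab
    nth_rw 2 [hab] at hn
    have e : σ * σ = eta σ + σ + 1 := by unfold eta; ring
    rw [ip_mul_mul, hd, hda, e, ip_add_left, ip_add_left, ip_comm 1, ip_mul_left a b, mul_one,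
      hsd b hb.1 hb.2.1, ip_irr_ne ia ib hne, add_zero] at hn
    -- `ab` contains either `η_σ` or `σ`
    have hz : ip σ (a * b) = 0 := by
      rw [mul_comm, ip_mul_right, hsd b hb.1 hb.2.1]
      exact ip_deg (iR b ((mR b).2 hb)) ia (by rw [d9 b ((mR b).2 hb), ha.2.1]; norm_num)
    rw [hz, add_zero] at hn
    -- then `ησ` contains `a*σ`-like pieces; use degrees
    have hn2 : ip (a * b) (eta σ) ≠ 0 := by rw [ip_comm, hn]; exact one_ne_zero
    by_cases hη : eta a = eta b
    · obtain ⟨x1, x2, x3⟩ := fib_X hP ia ha.2.1 hda ib hb.2.1 (hsd b hb.1 hb.2.1) hne hη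
      obtain ⟨k1, k2, -⟩ := eta_irr hP ia ha.2.1 hda
      rw [← eta] at k1 k2
      have e2 : a * b = eta a + (a * b - eta a) := by ring
      rw [e2, ip_add_left, ip_irr_ne k1 n1 ha.2.2, ip_deg x2 n1 (by rw [x3, n2]; norm_num), add_zero] at hn2
      exact hn2 rfl
    · have := mul33_irr hP ia ha.2.1 hda ib hb.2.1 (hsd b hb.1 hb.2.1) hη
      exact hn2 (ip_deg this n1 (by rw [Pi.mul_apply, ha.2.1, hb.2.1, n2]; norm_num))
  have hdisj : Disjoint T (R.image (fun ρ => σ * ρ)) := by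
    rw [Finset.disjoint_left]
    intro x hx hx'
    obtain ⟨n, -, hn6, hn⟩ := hT4 x hx
    obtain ⟨ρ, hρ, rfl⟩ := Finset.mem_image.1 hx'
    rw [d9 ρ hρ] at hn
    have : 9 = n := by exact_mod_cast hn
    omega
  have hb := sum_bound hP (T := T ∪ R.image (fun ρ => σ * ρ)) hE (by
    intro x hx
    rcases Finset.mem_union.1 hx with hx | hx
    · exact hTE hx
    · obtain ⟨ρ, hρ, rfl⟩ := Finset.mem_image.1 hx
      exact hE.irr_mem hP hσ ((mR ρ).1 hρ).1 (iR ρ hρ) (by rw [d9 ρ hρ]; norm_num)) (by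
    intro x hx
    rcases Finset.mem_union.1 hx with hx | hx
    · obtain ⟨n, a, b, c⟩ := hT4 x hx
      exact ⟨n, a, c⟩
    · obtain ⟨ρ, hρ, rfl⟩ := Finset.mem_image.1 hx
      exact ⟨9, by norm_num, d9 ρ hρ⟩)
  rw [Finset.sum_union hdisj, Finset.sum_image inj] at hb
  have s1 : (R.card : ℝ) * 43 ≤ ∑ x ∈ R, wt (σ * x) := by
    rw [← nsmul_eq_mul]
    apply Finset.card_nsmul_le_sum
    intro b hb
    rw [wt_of (d9 b hb)]; norm_num
  have p : (0 : ℝ) ≤ R.card := Nat.cast_nonneg _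
  rw [← hE2, ← hE3, ← c2, ← c3] at hb
  push_cast at hb
  have : (C.card : ℝ) ≤ R.card := by exact_mod_cast hCR
  linarith

theorem EB (hP : commutator G = ⊤) {E : Finset (G → ℂ)} (hE : Clo E) (h : ∃ θ ∈ E, θ 1 = 2 ∨ θ 1 = 3) :
    (∃ θ ∈ E, θ 1 = 3) ∧ 0 ≤ ∑ θ ∈ E, wt θ := by
  have h3 : ∃ θ ∈ E, θ 1 = 3 := by
    obtain ⟨θ, hθ, h | h⟩ := h
    · exact ⟨_, sigma_mem hP hE hθ h, (sigma_irr hP (hE.irr θ hθ).1 h).2.1⟩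
    · exact ⟨θ, hθ, h⟩
  refine ⟨h3, ?_⟩
  by_cases hns : ∃ θ ∈ E, θ 1 = 3 ∧ dl θ ≠ θ
  · obtain ⟨θ, hθ, h1, h2⟩ := hns
    exact EB_i hP hE hθ h1 (nsd hP (hE.irr θ hθ).1 h1 h2)
  · push Not at hns
    obtain ⟨θ, hθ, h1⟩ := h3
    exact EB_ii hP hE hns hθ h1

end perf5
end ACD

set_option linter.unusedSectionVars false
set_option linter.unusedVariables false
namespace ACD
open Module

section gal
variable {G : Type} [Group G] [Fintype G] (N : Subgroup G) [hN : N.Normal]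

lemma Q2_zero {φ : G → ℂ} (h : IsChar φ) (h0 : ip (rs N φ) 1 = 0) {β : G → ℂ} (hβ : Irr β)
    (ht : Tr N β) : ip φ β = 0 := by
  have hq := Q2 N (φ := φ)
  rw [h0] at hq
  have hn : ∀ γ, ∃ k : ℕ, γ ∈ IN N → γ 1 * ip φ γ = k := by
    intro γ
    by_cases hγ : γ ∈ IN N
    · obtain ⟨a, -, ha⟩ := ((mem_IN N).1 hγ).1.deg
      obtain ⟨b, hb⟩ := ip_nat_irr h ((mem_IN N).1 hγ).1
      exact ⟨a * b, fun _ => by rw [ha, hb]; push_cast; ring⟩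
    · exact ⟨0, fun h => absurd h hγ⟩
  choose k hk using hn
  rw [Finset.sum_congr rfl hk] at hq
  have hq' : ∑ x ∈ IN N, k x = 0 := by exact_mod_cast hq
  have hm : β ∈ IN N := (mem_IN N).2 ⟨hβ, ht⟩
  have := Finset.sum_eq_zero_iff.1 hq' β hm
  have h2 := hk β hm
  rw [this, Nat.cast_zero] at h2
  obtain ⟨a, ha0, ha⟩ := hβ.deg
  rcases mul_eq_zero.1 h2 with h | h
  · rw [ha] at h
    have : a = 0 := by exact_mod_cast h
    omega
  · exact h

lemma tr_one : Tr N (1 : G → ℂ) := fun _ _ => rfl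

lemma tr_const {K ψ : G → ℂ} (hK : IsChar K) (hc : ∀ n ∈ N, K n = K 1) (hψ : Irr ψ)
    (ht : ¬ Tr N ψ) : ip K ψ = 0 := by
  have h1 : rs N (ψ * dl K) = (K 1) • rs N ψ := by
    funext n
    show ψ n * K (n : G)⁻¹ = K 1 * ψ n
    rw [hc _ (N.inv_mem n.2)]; ring
  have h2 := Q2_zero N (hψ.ischar.mul (ischar_dl hK))
    (by rw [h1, ip_smul_left, not_tr_ip N hψ ht, mul_zero]) irr_one (tr_one N)
  rw [ip_mul_left, dl_dl, mul_one, ip_comm] at h2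
  exact h2

lemma gal_zero {χ χ' : G → ℂ} (h : Irr χ) (h' : Irr χ') (hr : Irr (rs N χ)) (hr' : Irr (rs N χ'))
    (hne : rs N χ ≠ rs N χ') {β : G → ℂ} (hβ : Irr β) (ht : Tr N β) : ip (χ * dl χ') β = 0 := by
  refine Q2_zero N (h.ischar.mul (ischar_dl h'.ischar)) ?_ hβ ht
  rw [rs_mul, rs_dl, ip_mul_left, dl_dl, mul_one]
  exact ip_irr_ne hr hr' hne

lemma gal_one {χ : G → ℂ} (h : Irr χ) (hr : Irr (rs N χ)) {β : G → ℂ} (hβ : Irr β) (ht : Tr N β)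
    (hne : β ≠ 1) : ip (χ * dl χ) β = 0 := by
  have hi : ip (χ * dl χ) 1 = 1 := by rw [ip_mul_left, dl_dl, mul_one, ip_irr_self h]
  have hp := peel (h.ischar.mul (ischar_dl h.ischar)) irr_one (by rw [hi]; exact one_ne_zero)
  have := Q2_zero N hp (by
    rw [rs_sub, ip_sub_left, rs_mul, rs_dl, ip_mul_left, dl_dl, mul_one, ip_irr_self hr, rs_one,
      ip_irr_self irr_one, sub_self]) hβ ht
  rw [ip_sub_left, ip_irr_ne irr_one hβ (Ne.symm hne), sub_zero] at this
  exact this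

lemma gal_K {J K : G → ℂ} (hK : IsChar K) (hc : ∀ n ∈ N, K n = K 1)
    (hJ : ∀ β, Irr β → Tr N β → β ≠ 1 → ip J β = 0) : ip J K = ip K 1 * ip J 1 := by
  conv_lhs => rw [expand hK.cls]
  rw [ip_sum_right, Finset.sum_eq_single 1]
  · rw [ip_smul_right]
  · intro β hβ hne
    rw [ip_smul_right]
    by_cases ht : Tr N β
    · rw [hJ β (mem_IF.1 hβ) ht hne, mul_zero]
    · rw [tr_const N hK hc (mem_IF.1 hβ) ht, zero_mul]
  · intro h; exact absurd (mem_IF.2 irr_one) h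

lemma gal_ip_ne {χ χ' μ μ' : G → ℂ} (h : Irr χ) (h' : Irr χ') (hr : Irr (rs N χ)) (hr' : Irr (rs N χ'))
    (hne : rs N χ ≠ rs N χ') (hμ : Irr μ) (hμ' : Irr μ') (t : Tr N μ) (t' : Tr N μ') :
    ip (χ * μ) (χ' * μ') = 0 := by
  rw [ip_mul_mul, gal_K N ((ischar_dl hμ.ischar).mul hμ'.ischar) _
    (fun β hβ ht _ => gal_zero N h h' hr hr' hne hβ ht), gal_zero N h h' hr hr' hne irr_one (tr_one N), mul_zero]
  intro n hn
  show μ n⁻¹ * μ' n = μ 1⁻¹ * μ' 1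
  rw [t _ (N.inv_mem hn), t' _ hn, inv_one]

lemma gal_ip_eq {χ μ μ' : G → ℂ} (h : Irr χ) (hr : Irr (rs N χ)) (hμ : Irr μ) (hμ' : Irr μ')
    (t : Tr N μ) (t' : Tr N μ') : ip (χ * μ) (χ * μ') = ip μ μ' := by
  rw [ip_mul_mul, gal_K N ((ischar_dl hμ.ischar).mul hμ'.ischar) _
    (fun β hβ ht hne => gal_one N h hr hβ ht hne), ip_mul_left, ip_mul_left, dl_dl, mul_one,
    mul_one, ip_irr_self h, mul_one, ip_dl]
  intro n hn
  show μ n⁻¹ * μ' n = μ 1⁻¹ * μ' 1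
  rw [t _ (N.inv_mem hn), t' _ hn, inv_one]

lemma gal_irr {χ μ : G → ℂ} (h : Irr χ) (hr : Irr (rs N χ)) (hμ : Irr μ) (t : Tr N μ) : Irr (χ * μ) :=
  irr_of_norm (h.ischar.mul hμ.ischar) (by rw [gal_ip_eq N h hr hμ hμ t t, ip_irr_self hμ])

lemma gal_cover {χ χ' : G → ℂ} (h : Irr χ) (h' : Irr χ') (hr : Irr (rs N χ))
    (he : rs N χ' = rs N χ) : ∃ μ, Irr μ ∧ Tr N μ ∧ χ' = χ * μ := by
  have hq := Q2 N (φ := χ' * dl χ)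
  rw [rs_mul, rs_dl, ip_mul_left, dl_dl, mul_one, he, ip_irr_self hr] at hq
  obtain ⟨μ, hμ, hne⟩ := Finset.exists_ne_zero_of_sum_ne_zero (by rw [hq]; exact one_ne_zero)
  rw [mem_IN] at hμ
  refine ⟨μ, hμ.1, hμ.2, eq_of_ip h' (gal_irr N h hr hμ.1 hμ.2) ?_⟩
  have := right_ne_zero_of_mul hne
  rwa [ip_mul_left, dl_dl] at this

lemma rs_irr_small (hP : commutator N = ⊤) {χ : G → ℂ} (h : Irr χ) (ht : ¬ Tr N χ)
    (hd : χ 1 = 1 ∨ χ 1 = 2 ∨ χ 1 = 3) : Irr (rs N χ) ∧ rs N χ ≠ 1 ∧ χ 1 ≠ 1 := by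
  have h0 := not_tr_ip N h ht
  have hch := ischar_rs N h.ischar
  have hne0 : rs N χ ≠ 1 := by
    intro h1; rw [h1, ip_irr_self irr_one] at h0; exact one_ne_zero h0
  have key : Irr (rs N χ) := by
    have : ∃ d : ℕ, 0 < d ∧ d ≤ 3 ∧ χ 1 = d := by
      rcases hd with h | h | h
      exacts [⟨1, by norm_num, by norm_num, by rw [h]; norm_num⟩,
        ⟨2, by norm_num, by norm_num, by rw [h]; norm_num⟩,
        ⟨3, by norm_num, by norm_num, by rw [h]; norm_num⟩]
    obtain ⟨d, d0, d3, hd'⟩ := this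
    refine irr_of_no_small d hch (by rw [rs_at_one, hd']) d0 ?_
    intro ψ k hψ hk hkd
    obtain ⟨k', hk0, hk'⟩ := hψ.deg
    have e : k = k' := by rw [hk] at hk'; exact_mod_cast hk'
    have : k = 1 := by omega
    subst this
    rw [lin_triv hP hψ (by exact_mod_cast hk)]
    exact h0
  refine ⟨key, hne0, fun h1 => hne0 (lin_triv hP key (by rw [rs_at_one, h1]))⟩

/-- Case B: some non-`N`-trivial character of degree two or three. -/
theorem caseB (hP : commutator N = ⊤)
    (hdeg : ∃ χ : G → ℂ, Irr χ ∧ ¬ Tr N χ ∧ (χ 1 = 2 ∨ χ 1 = 3)) :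
    0 ≤ ∑ χ ∈ (IF G).filter (fun χ => χ 1 ≠ 1), wt χ := by
  set E : Finset (N → ℂ) := (IF N).filter (fun θ => θ ≠ 1 ∧ ∃ χ, Irr χ ∧ rs N χ = θ) with hE
  have mE : ∀ θ, θ ∈ E ↔ Irr θ ∧ θ ≠ 1 ∧ ∃ χ, Irr χ ∧ rs N χ = θ := by
    intro θ; rw [hE, Finset.mem_filter, mem_IF]
  have hclo : Clo E := by
    constructor
    · intro θ hθ; exact ⟨((mE θ).1 hθ).1, ((mE θ).1 hθ).2.1⟩
    · intro a ha b hb A hA hA1 h1 h2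
      obtain ⟨-, -, χa, ca, rfl⟩ := (mE a).1 ha
      obtain ⟨-, -, χb, cb, rfl⟩ := (mE b).1 hb
      rw [← rs_mul] at h1 h2
      exact (mE A).2 ⟨hA, hA1, ext_irr N (ca.ischar.mul cb.ischar) hA h1 h2⟩
  obtain ⟨⟨θ0, hθ0, hθ3⟩, hsum⟩ := EB hP hclo (by
    obtain ⟨χ, h, ht, hd⟩ := hdeg
    obtain ⟨k1, k2, k3⟩ := rs_irr_small N hP h ht (Or.inr hd)
    exact ⟨rs N χ, (mE _).2 ⟨k1, k2, χ, h, rfl⟩, by rw [rs_at_one]; exact hd⟩)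
  have hex : ∀ θ, ∃ χ, θ ∈ E → Irr χ ∧ rs N χ = θ := by
    intro θ
    by_cases h : θ ∈ E
    · obtain ⟨-, -, χ, h1⟩ := (mE θ).1 h
      exact ⟨χ, fun _ => h1⟩
    · exact ⟨0, fun h' => absurd h' h⟩
  choose e he using hex
  have her : ∀ θ, θ ∈ E → Irr (rs N (e θ)) := fun θ h => by
    rw [(he θ h).2]; exact ((mE θ).1 h).1
  have he1 : ∀ θ, θ ∈ E → e θ 1 = θ 1 := fun θ h => by
    rw [← rs_at_one N (e θ), (he θ h).2]
  set M := (IF G).filter (fun χ => ¬ Tr N χ) with hM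
  set A1 := (IN N).filter (fun χ => χ 1 = 1) with hA1
  set A2 := (IN N).filter (fun χ => ¬ χ 1 = 1) with hA2
  have hsplit : (IF G).filter (fun χ => χ 1 ≠ 1) = A2 ∪ M := by
    ext χ
    rw [Finset.mem_union, hA2, hM, Finset.mem_filter, Finset.mem_filter, Finset.mem_filter, mem_IN, mem_IF]
    constructor
    · rintro ⟨h1, h2⟩
      by_cases t : Tr N χ
      exacts [Or.inl ⟨⟨h1, t⟩, h2⟩, Or.inr ⟨h1, t⟩]
    · rintro (⟨⟨h1, t⟩, h2⟩ | ⟨h1, t⟩)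
      · exact ⟨h1, h2⟩
      · refine ⟨h1, fun h2 => (rs_irr_small N hP h1 t (Or.inl h2)).2.2 h2⟩
  have hd1 : Disjoint A2 M := by
    rw [Finset.disjoint_left]
    intro χ h1 h2
    rw [hA2, Finset.mem_filter, mem_IN] at h1
    rw [hM, Finset.mem_filter] at h2
    exact h2.2 h1.1.2
  rw [hsplit, Finset.sum_union hd1]
  set P := E ×ˢ IN N with hPd
  set f : (N → ℂ) × (G → ℂ) → (G → ℂ) := fun p => e p.1 * p.2 with hf
  have finj : Set.InjOn f P := by
    rintro ⟨θ, μ⟩ h1 ⟨θ', μ'⟩ h2 heq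
    have h1 := Finset.mem_product.1 (Finset.mem_coe.1 h1)
    have h2 := Finset.mem_product.1 (Finset.mem_coe.1 h2)
    simp only [mem_IN] at h1 h2
    obtain ⟨a1, b1, c1⟩ := h1
    obtain ⟨a2, b2, c2⟩ := h2
    have heq : e θ * μ = e θ' * μ' := heq
    have hi := ip_irr_self (gal_irr N (he θ a1).1 (her θ a1) b1 c1)
    nth_rw 2 [heq] at hi
    have hθ : θ = θ' := by
      by_contra hne
      rw [gal_ip_ne N (he θ a1).1 (he θ' a2).1 (her θ a1) (her θ' a2)
        (by rw [(he θ a1).2, (he θ' a2).2]; exact hne) b1 b2 c1 c2] at hi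
      exact zero_ne_one hi
    subst hθ
    rw [gal_ip_eq N (he θ a1).1 (her θ a1) b1 b2 c1 c2] at hi
    rw [eq_of_ip b1 b2 (by rw [hi]; exact one_ne_zero)]
  have fM : P.image f ⊆ M := by
    intro χ hχ
    obtain ⟨⟨θ, μ⟩, hp, rfl⟩ := Finset.mem_image.1 hχ
    have hp := Finset.mem_product.1 hp
    simp only [mem_IN] at hp
    obtain ⟨a1, b1, c1⟩ := hp
    have hirr := gal_irr N (he θ a1).1 (her θ a1) b1 c1
    rw [hM, Finset.mem_filter, mem_IF]
    refine ⟨hirr, fun t => ?_⟩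
    have h1 := gal_ip_ne N (he θ a1).1 irr_one (her θ a1) (by rw [rs_one]; exact irr_one)
      (by rw [rs_one, (he θ a1).2]; exact ((mE θ).1 a1).2.1) b1 hirr c1 t
    rw [one_mul, ip_irr_self hirr] at h1
    exact one_ne_zero h1
  have hge4 : ∀ χ : G → ℂ, Irr χ → χ 1 ≠ 1 → χ 1 ≠ 2 → χ 1 ≠ 3 → 0 ≤ wt χ := by
    intro χ h h1 h2 h3
    obtain ⟨n, hn0, hn⟩ := h.deg
    rw [hn] at h1 h2 h3
    have : n ≠ 1 := by exact_mod_cast h1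
    have : n ≠ 2 := by exact_mod_cast h2
    have : n ≠ 3 := by exact_mod_cast h3
    rw [wt_of hn]
    have : (4 : ℝ) ≤ n := by exact_mod_cast (by omega : 4 ≤ n)
    linarith
  have s1 : ∑ χ ∈ P.image f, wt χ ≤ ∑ χ ∈ M, wt χ := by
    apply Finset.sum_le_sum_of_subset_of_nonneg fM
    intro χ hχ hnot
    rw [hM, Finset.mem_filter, mem_IF] at hχ
    have aux : ∀ _ : χ 1 = 1 ∨ χ 1 = 2 ∨ χ 1 = 3, False := by
      intro hd
      obtain ⟨k1, k2, k3⟩ := rs_irr_small N hP hχ.1 hχ.2 hd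
      have hm : rs N χ ∈ E := (mE _).2 ⟨k1, k2, χ, hχ.1, rfl⟩
      obtain ⟨μ, hμ, t, heq⟩ := gal_cover N (he _ hm).1 hχ.1 (her _ hm) (he _ hm).2.symm
      exact hnot (Finset.mem_image.2 ⟨(rs N χ, μ), Finset.mem_product.2 ⟨hm, (mem_IN N).2 ⟨hμ, t⟩⟩, heq.symm⟩)
    exact hge4 χ hχ.1 (fun h => aux (Or.inl h)) (fun h => aux (Or.inr (Or.inl h)))
      (fun h => aux (Or.inr (Or.inr h)))
  rw [Finset.sum_image finj, hPd, Finset.sum_product_right] at s1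
  rw [← Finset.sum_filter_add_sum_filter_not (IN N) (fun χ => χ 1 = 1), ← hA1, ← hA2] at s1
  have s2 : 0 ≤ ∑ μ ∈ A1, ∑ θ ∈ E, wt (f (θ, μ)) := by
    apply Finset.sum_nonneg
    intro μ hμ
    rw [hA1, Finset.mem_filter] at hμ
    have : ∑ θ ∈ E, wt (f (θ, μ)) = ∑ θ ∈ E, wt θ := by
      refine Finset.sum_congr rfl fun θ hθ => ?_
      simp only [hf, wt, Pi.mul_apply, hμ.2, mul_one, he1 θ hθ]
    rw [this]; exact hsum
  have s3 : 0 ≤ ∑ χ ∈ A2, wt χ + ∑ μ ∈ A2, ∑ θ ∈ E, wt (f (θ, μ)) := by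
    rw [← Finset.sum_add_distrib]
    apply Finset.sum_nonneg
    intro μ hμ
    rw [hA2, Finset.mem_filter, mem_IN] at hμ
    obtain ⟨m, hm0, hm⟩ := hμ.1.1.deg
    have hm2 : 2 ≤ m := by
      by_contra hlt
      have : m = 1 := by omega
      subst this
      exact hμ.2 (by rw [hm]; norm_num)
    have hm2' : (2 : ℝ) ≤ m := by exact_mod_cast hm2
    have hall : ∀ θ ∈ E, ∃ k : ℕ, 2 ≤ k ∧ θ 1 = k ∧ wt (f (θ, μ)) = 8 * (k * m) - 29 := by
      intro θ hθ
      obtain ⟨k, hk2, hk⟩ := deg_ge_two hP (hclo.irr θ hθ).1 (hclo.irr θ hθ).2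
      refine ⟨k, hk2, hk, ?_⟩
      have : f (θ, μ) 1 = (k * m : ℕ) := by
        simp only [hf, Pi.mul_apply, he1 θ hθ, hk, hm]; push_cast; rfl
      rw [wt_of this]; push_cast; rfl
    have h1 : wt (f (θ0, μ)) ≤ ∑ θ ∈ E, wt (f (θ, μ)) := by
      apply Finset.single_le_sum (f := fun θ => wt (f (θ, μ))) _ hθ0
      intro θ hθ
      obtain ⟨k, hk2, hk, hw⟩ := hall θ hθ
      simp only [hw]
      have : (2 : ℝ) ≤ k := by exact_mod_cast hk2
      nlinarith
    obtain ⟨k, hk2, hk, hw⟩ := hall θ0 hθ0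
    rw [hθ3] at hk
    have hk3 : k = 3 := by exact_mod_cast hk.symm
    subst hk3
    rw [hw] at h1
    rw [wt_of hm]
    push_cast at h1
    linarith
  linarith

end gal
end ACD

set_option linter.unusedSectionVars false
set_option linter.unusedVariables false
namespace ACD
open Module

lemma charge {ι κ : Type*} (A : Finset ι) (M : Finset κ) (b : ι → ℕ) (d : κ → ℕ) (a : ι → κ → ℕ)
    (r : ℝ) (hr : 9 ≤ r) (hb : ∀ i ∈ A, 2 ≤ b i) (hd : ∀ j ∈ M, 4 ≤ d j)
    (F1 : ∀ i ∈ A, ∑ j ∈ M, (a i j : ℝ) * d j = r * b i)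
    (F2 : ∀ j ∈ M, ∑ i ∈ A, (b i : ℝ) * a i j + 2 ≤ d j) :
    0 ≤ ∑ i ∈ A, (8 * (b i : ℝ) - 29) + ∑ j ∈ M, (8 * (d j : ℝ) - 29) := by
  set c : ι → ℝ := fun i => max 0 (29 - 8 * b i) with hc
  have c0 : ∀ i, 0 ≤ c i := fun i => le_max_left _ _
  have hbr : ∀ i ∈ A, (2 : ℝ) ≤ b i := fun i hi => by exact_mod_cast hb i hi
  have c1 : ∀ i ∈ A, c i ≤ 13 / 4 * (b i : ℝ) ^ 2 := by
    intro i hi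
    have := hbr i hi
    apply max_le <;> nlinarith
  have c2 : ∀ i ∈ A, c i ≤ 13 / 2 * (b i : ℝ) := by
    intro i hi
    have := hbr i hi
    apply max_le <;> nlinarith
  have key : ∑ i ∈ A, c i = ∑ j ∈ M, ∑ i ∈ A, c i * ((a i j : ℝ) * d j / (r * b i)) := by
    rw [Finset.sum_comm]
    refine Finset.sum_congr rfl fun i hi => ?_
    have h2 := hbr i hi
    rw [← Finset.mul_sum, ← Finset.sum_div, F1 i hi, div_self, mul_one]
    positivity
  have load : ∀ j ∈ M, ∑ i ∈ A, c i * ((a i j : ℝ) * d j / (r * b i)) ≤ 8 * (d j : ℝ) - 29 := by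
    intro j hj
    have hd4 : (4 : ℝ) ≤ d j := by exact_mod_cast hd j hj
    have hF2 := F2 j hj
    have B1 : ∑ i ∈ A, c i * ((a i j : ℝ) * d j / (r * b i)) ≤ 13 / 36 * d j * (d j - 2) := by
      have : ∑ i ∈ A, c i * ((a i j : ℝ) * d j / (r * b i)) ≤ ∑ i ∈ A, 13 / 36 * d j * ((b i : ℝ) * a i j) := by
        refine Finset.sum_le_sum fun i hi => ?_
        have h2 := hbr i hi
        have e : c i * ((a i j : ℝ) * d j / (r * b i)) = (c i * (a i j * d j)) / (r * b i) := by ring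
        rw [e, div_le_iff₀ (by positivity)]
        have p : (0 : ℝ) ≤ (a i j : ℝ) * d j := by positivity
        have q1 := mul_le_mul_of_nonneg_right (c1 i hi) p
        have q2 : (0 : ℝ) ≤ (b i : ℝ) ^ 2 * ((a i j : ℝ) * d j) := by positivity
        have q3 := mul_le_mul_of_nonneg_right hr q2
        nlinarith
      rw [← Finset.mul_sum] at this
      refine this.trans ?_
      apply mul_le_mul_of_nonneg_left _ (by positivity)
      linarith
    have B2 : ∑ i ∈ A, c i * ((a i j : ℝ) * d j / (r * b i)) ≤ 13 / 2 * (d j - 2) := by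
      have : ∑ i ∈ A, c i * ((a i j : ℝ) * d j / (r * b i)) ≤ ∑ i ∈ A, 13 / 2 * ((b i : ℝ) * a i j) := by
        refine Finset.sum_le_sum fun i hi => ?_
        have h2 := hbr i hi
        by_cases h0 : a i j = 0
        · rw [h0]; simp
        · have ha1 : (1 : ℝ) ≤ a i j := by exact_mod_cast Nat.one_le_iff_ne_zero.2 h0
          have hw : (a i j : ℝ) * d j / (r * b i) ≤ 1 := by
            rw [div_le_one (by positivity), ← F1 i hi]
            exact Finset.single_le_sum (f := fun j => (a i j : ℝ) * d j) (fun _ _ => by positivity) hj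
          calc c i * ((a i j : ℝ) * d j / (r * b i)) ≤ c i * 1 := mul_le_mul_of_nonneg_left hw (c0 i)
            _ ≤ 13 / 2 * (b i : ℝ) := by rw [mul_one]; exact c2 i hi
            _ ≤ 13 / 2 * ((b i : ℝ) * a i j) := by nlinarith
      rw [← Finset.mul_sum] at this
      linarith
    rcases le_total (d j : ℝ) 11 with h | h
    · nlinarith
    · linarith
  have h1 : ∑ i ∈ A, c i ≤ ∑ j ∈ M, (8 * (d j : ℝ) - 29) := by
    rw [key]; exact Finset.sum_le_sum load
  have h2 : -∑ i ∈ A, (8 * (b i : ℝ) - 29) ≤ ∑ i ∈ A, c i := by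
    rw [← Finset.sum_neg_distrib]
    refine Finset.sum_le_sum fun i hi => ?_
    have := le_max_right (0 : ℝ) (29 - 8 * b i)
    simp only [hc]; linarith
  linarith

section mat
open Matrix
variable {d : ℕ}

lemma idem_one {f : Matrix (Fin d) (Fin d) ℂ} (h : f * f = f) (ht : f.trace = 1) :
    ∃ u v, f = vecMulVec u v := by
  have hi : IsIdempotentElem (toLin' f) := by
    unfold IsIdempotentElem
    rw [Module.End.mul_eq_comp, ← toLin'_mul, h]
  have hp := LinearMap.IsIdempotentElem.isProj_range _ hi
  have h1 := hp.trace
  rw [trace_toLin'_eq, ht] at h1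
  have h2 : finrank ℂ (LinearMap.range (toLin' f)) = 1 := by exact_mod_cast h1.symm
  obtain ⟨u, -, hu⟩ := finrank_eq_one_iff'.1 h2
  have hc : ∀ j, ∃ c : ℂ, ∀ i, f i j = u.1 i * c := by
    intro j
    obtain ⟨c, hc⟩ := hu ⟨toLin' f (Pi.single j 1), ⟨_, rfl⟩⟩
    refine ⟨c, fun i => ?_⟩
    have := congrArg (fun x => x.1 i) hc
    simp at this
    rw [← this]; ring
  choose v hv using hc
  refine ⟨u.1, v, ?_⟩
  ext i j
  rw [hv j i, vecMulVec_apply]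

lemma idem_zero {f : Matrix (Fin d) (Fin d) ℂ} (h : f * f = f) (ht : f.trace = 0) : f = 0 := by
  have hi : IsIdempotentElem (toLin' f) := by
    unfold IsIdempotentElem
    rw [Module.End.mul_eq_comp, ← toLin'_mul, h]
  have := LinearMap.IsIdempotentElem.eq_zero_of_trace_eq_zero hi (by rw [trace_toLin'_eq, ht])
  simpa using this

lemma trace_of_det {X f : Matrix (Fin d) (Fin d) ℂ} (h : f * f = f) (ht : f.trace = 1)
    (hX : X * (1 - f) = 1 - f) (hdet : X.det = 1) : X.trace = d := by
  obtain ⟨u, v, hf⟩ := idem_one h ht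
  have e : X = 1 + vecMulVec ((X - 1) *ᵥ u) v := by
    rw [← mul_vecMulVec, ← hf]
    rw [mul_sub, mul_one] at hX
    rw [sub_mul, one_mul]
    have : X = 1 - f + X * f := by rw [← hX]; abel
    nth_rw 1 [this]; abel
  set w := (X - 1) *ᵥ u
  rw [e, vecMulVec_eq Unit, det_one_add_replicateCol_mul_replicateRow] at hdet
  have : v ⬝ᵥ w = 0 := by linear_combination hdet
  rw [e, trace_add, trace_vecMulVec, dotProduct_comm, this]
  simp

end mat

section caseA
variable {G : Type} [Group G] [Fintype G] (N : Subgroup G) [hN : N.Normal] (U : Subgroup G)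

/-- permutation character on the cosets of `U` -/
noncomputable def pc (g : G) : ℂ := (Nat.card U : ℂ)⁻¹ * ∑ x : G, if x⁻¹ * g * x ∈ U then 1 else 0

lemma cls_conj {f : G → ℂ} (h : Cls f) (x g : G) : f (x * g * x⁻¹) = f g := by
  rw [h (x * g) x⁻¹]; congr 1; group

lemma cls_pc : Cls (pc U) := by
  intro g h
  unfold pc
  congr 1
  refine Fintype.sum_equiv (Equiv.mulLeft g⁻¹) _ _ fun x => ?_
  have : (g⁻¹ * x)⁻¹ * (h * g) * (g⁻¹ * x) = x⁻¹ * (g * h) * x := by group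
  simp only [Equiv.coe_mulLeft, this]

lemma pc_one : pc U 1 = (Nat.card U : ℂ)⁻¹ * Nat.card G := by
  unfold pc
  simp [Nat.card_eq_fintype_card]

lemma frob {f : G → ℂ} (hf : Cls f) : ip (f * pc U) 1 = ip (rs U f) 1 := by
  rw [ip_rs_one, sum_sub]
  unfold ip pc
  have e : ∑ g : G, (f * fun g => (Nat.card U : ℂ)⁻¹ * ∑ x : G, if x⁻¹ * g * x ∈ U then (1 : ℂ) else 0) g * (1 : G → ℂ) g⁻¹
      = (Nat.card U : ℂ)⁻¹ * ∑ x : G, ∑ g : G, if x⁻¹ * g * x ∈ U then f g else 0 := by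
    rw [Finset.sum_comm, Finset.mul_sum]
    refine Finset.sum_congr rfl fun g _ => ?_
    simp only [Pi.mul_apply, Pi.one_apply, mul_one]
    rw [mul_left_comm, Finset.mul_sum]
    simp only [mul_ite, mul_one, mul_zero]
  rw [e]
  have e2 : ∀ x : G, ∑ g : G, (if x⁻¹ * g * x ∈ U then f g else 0) = ∑ g : G, if g ∈ U then f g else 0 := by
    intro x
    refine Fintype.sum_equiv (MulAut.conj x⁻¹).toEquiv _ _ fun g => ?_
    have : (MulAut.conj x⁻¹).toEquiv g = x⁻¹ * g * x := by simp
    rw [this]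
    have h2 := cls_conj hf x⁻¹ g
    rw [inv_inv] at h2
    rw [h2]
  rw [Finset.sum_congr rfl fun x _ => e2 x, Finset.sum_const, nsmul_eq_mul, Finset.card_univ,
    ← Nat.card_eq_fintype_card, mul_left_comm, ← mul_assoc (Nat.card G : ℂ)⁻¹, inv_mul_cancel₀ cardne, one_mul]

lemma frob2 {F ψ : G → ℂ} (hF : Cls F) (hψ : Cls ψ) :
    ip (F * pc U) ψ = ip (rs U F) (rs U ψ) := by
  have h := frob U (f := F * dl ψ) (cls_mul hF (by
    intro a b; show ψ (a * b)⁻¹ = ψ (b * a)⁻¹; rw [mul_inv_rev, mul_inv_rev]; exact hψ _ _))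
  rw [rs_mul, rs_dl, mul_right_comm, ip_mul_left (rs U F), ip_mul_left (F * pc U), dl_dl, dl_dl, mul_one, mul_one] at h
  exact h

lemma avg {f : G → ℂ} (hU : U ⊔ N = ⊤) (hf : ∀ n ∈ N, ∀ g, f (n * g) = f g) :
    (Nat.card G : ℂ) * ∑ u : U, f u = Nat.card U * ∑ g, f g := by
  have h1 : ∀ g : G, ∑ u : U, f (g * u) = ∑ u : U, f u := by
    intro g
    have hg : g ∈ U ⊔ N := by rw [hU]; trivial
    rw [sup_comm] at hg
    obtain ⟨n, hn, v, hv, rfl⟩ := Subgroup.mem_sup_of_normal_left.1 hg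
    simp only [mul_assoc, hf n hn]
    exact Fintype.sum_equiv (Equiv.mulLeft (⟨v, hv⟩ : U)) _ _ fun u => rfl
  have h2 : ∑ g : G, ∑ u : U, f (g * u) = (Nat.card G : ℂ) * ∑ u : U, f u := by
    rw [Finset.sum_congr rfl fun g _ => h1 g, Finset.sum_const, nsmul_eq_mul, Finset.card_univ,
      Nat.card_eq_fintype_card]
  have h3 : ∀ u : U, ∑ g : G, f (g * u) = ∑ g, f g := by
    intro u
    exact Fintype.sum_equiv (Equiv.mulRight (u : G)) _ _ fun g => rfl
  rw [← h2, Finset.sum_comm, Finset.sum_congr rfl fun u _ => h3 u, Finset.sum_const, nsmul_eq_mul,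
    Finset.card_univ, Nat.card_eq_fintype_card]

lemma ip_avg {F ψ : G → ℂ} (hU : U ⊔ N = ⊤) (hF : ∀ n ∈ N, ∀ g, F (n * g) = F g)
    (hψ : ∀ n ∈ N, ∀ g, ψ (n * g) = ψ g) (hc : Cls ψ) : ip (rs U F) (rs U ψ) = ip F ψ := by
  have h := avg N U (f := F * dl ψ) hU (by
    intro n hn g
    show F (n * g) * ψ (n * g)⁻¹ = F g * ψ g⁻¹
    rw [hF n hn, mul_inv_rev, hc, hψ _ (N.inv_mem hn)])
  unfold ip
  have hu : (Nat.card U : ℂ) ≠ 0 := cardne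
  have hg : (Nat.card G : ℂ) ≠ 0 := cardne
  have e : ∑ g : U, rs U F g * rs U ψ g⁻¹ = ∑ u : U, (F * dl ψ) u := rfl
  have e2 : ∑ g : G, F g * ψ g⁻¹ = ∑ u : G, (F * dl ψ) u := rfl
  rw [e, e2]
  field_simp
  linear_combination h

lemma card_eq (hU : U ⊔ N = ⊤) : (Nat.card G : ℂ) * Nat.card (U ⊓ N : Subgroup G) = Nat.card U * Nat.card N := by
  have h := avg N U (f := fun g => if g ∈ N then 1 else 0) hU (by
    intro n hn g
    simp only [N.mul_mem_cancel_left hn])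
  rw [sum_sub U (fun g => if g ∈ N then 1 else 0), ← sum_sub N (fun _ => 1)] at h
  have : (∑ g : G, if g ∈ U then if g ∈ N then (1 : ℂ) else 0 else 0) = ∑ g : G, if g ∈ U ⊓ N then 1 else 0 := by
    refine Finset.sum_congr rfl fun g _ => ?_
    rw [← ite_and]; simp only [Subgroup.mem_inf]
  rw [this, ← sum_sub (U ⊓ N) (fun _ => 1)] at h
  simpa [Nat.card_eq_fintype_card] using h

/-- `F1` -/
lemma f1 (hU : U ⊔ N = ⊤) {β : G → ℂ} (hβ : Irr β) (t : Tr N β) :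
    ∑ ψ ∈ (IF G).filter (fun ψ => ¬ Tr N ψ), ip (rs U β) (rs U ψ) * ψ 1 = (pc U 1 - 1) * β 1 := by
  have hb := hβ.ischar.cls
  have h := congrFun (expand (cls_mul hb (cls_pc U))) 1
  rw [Finset.sum_apply] at h
  have e : ∀ ψ ∈ IF G, (ip (β * pc U) ψ • ψ) 1 = ip (rs U β) (rs U ψ) * ψ 1 := by
    intro ψ hψ
    rw [frob2 U hb (mem_IF.1 hψ).ischar.cls]; rfl
  rw [Finset.sum_congr rfl e, ← Finset.sum_filter_add_sum_filter_not (IF G) (fun ψ => Tr N ψ)] at h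
  have e2 : ∑ ψ ∈ (IF G).filter (fun ψ => Tr N ψ), ip (rs U β) (rs U ψ) * ψ 1 = β 1 := by
    rw [Finset.sum_eq_single β]
    · rw [ip_avg N U hU (tr_coset N hβ t) (tr_coset N hβ t) hb, ip_irr_self hβ, one_mul]
    · intro ψ hψ hne
      rw [Finset.mem_filter, mem_IF] at hψ
      rw [ip_avg N U hU (tr_coset N hβ t) (tr_coset N hψ.1 hψ.2) hψ.1.ischar.cls,
        ip_irr_ne hβ hψ.1 (Ne.symm hne), zero_mul]
    · intro hn
      exact absurd (Finset.mem_filter.2 ⟨mem_IF.2 hβ, t⟩) hn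
  rw [e2, Pi.mul_apply] at h
  linear_combination -h

/-- `F2` -/
lemma f2 (hU : U ⊔ N = ⊤) {ψ : G → ℂ} (hψ : Irr ψ) :
    ∑ β ∈ IN N, β 1 * ip (rs U β) (rs U ψ) = ip (rs (U ⊓ N) ψ) 1 := by
  have hc := hψ.ischar.cls
  have e : ∀ β ∈ IN N, β 1 * ip (rs U β) (rs U ψ) = β 1 * ip (ψ * pc U) β := by
    intro β hβ
    rw [frob2 U hc ((mem_IN N).1 hβ).1.ischar.cls, ip_comm]
  rw [Finset.sum_congr rfl e, Q2, ip_rs_one, sum_sub, ip_rs_one, sum_sub]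
  have hf := frob U (f := fun g => if g ∈ N then ψ g else 0) (by
    intro a b
    simp only [hc a b]
    have : a * b ∈ N ↔ b * a ∈ N := hN.mem_comm_iff
    simp only [this])
  rw [ip_rs_one, sum_sub U (fun g => if g ∈ N then ψ g else 0)] at hf
  unfold ip at hf
  have e1 : ∑ g : G, ((fun g => if g ∈ N then ψ g else 0) * pc U) g * (1 : G → ℂ) g⁻¹
      = ∑ g : G, if g ∈ N then (ψ * pc U) g else 0 := by
    refine Finset.sum_congr rfl fun g _ => ?_
    simp only [Pi.mul_apply, Pi.one_apply, mul_one, ite_mul, zero_mul]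
  have e2 : (∑ g : G, if g ∈ U then (if g ∈ N then ψ g else 0) else 0)
      = ∑ g : G, if g ∈ U ⊓ N then ψ g else 0 := by
    refine Finset.sum_congr rfl fun g _ => ?_
    rw [← ite_and]; simp only [Subgroup.mem_inf]
  rw [e1, e2] at hf
  have hu : (Nat.card U : ℂ) ≠ 0 := cardne
  have hg : (Nat.card G : ℂ) ≠ 0 := cardne
  have hn : (Nat.card N : ℂ) ≠ 0 := cardne
  have hd : (Nat.card (U ⊓ N : Subgroup G) : ℂ) ≠ 0 := cardne
  have hcd := card_eq N U hU
  set X := ∑ g : G, if g ∈ N then (ψ * pc U) g else 0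
  set Y := ∑ g : G, if g ∈ U ⊓ N then ψ g else 0
  field_simp at hf ⊢
  have : Nat.card U * (Nat.card (U ⊓ N : Subgroup G) * X - Nat.card N * Y) = 0 := by
    linear_combination Nat.card (U ⊓ N : Subgroup G) * hf + Y * hcd
  rcases mul_eq_zero.1 this with h | h
  · exact absurd h hu
  · linear_combination h


open Matrix in
/-- multiplicity of the trivial character on a subgroup `D ≤ N` -/
lemma mult_bound (hP : commutator N = ⊤) (D : Subgroup G) (hD : D ≤ N)
    (hmax : ∀ K : Subgroup G, K.Normal → D ≤ K → K ≤ N → K = N)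
    {ψ : G → ℂ} (hψ : Irr ψ) (ht : ¬ Tr N ψ) {d m : ℕ} (hd : ψ 1 = d) (hm : ip (rs D ψ) 1 = m) :
    m ≠ d ∧ m + 1 ≠ d := by
  obtain ⟨n, ρ, htr, hn, -⟩ := hψ.mat
  have : n = d := by rw [hn] at hd; exact_mod_cast hd
  subst this
  set e : Matrix (Fin n) (Fin n) ℂ := (Nat.card D : ℂ)⁻¹ • ∑ x : D, ρ x with he
  have hDc : (Nat.card D : ℂ) ≠ 0 := cardne
  have hρe : ∀ x : D, ρ x * e = e := by
    intro x
    rw [he, Matrix.mul_smul, Finset.mul_sum]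
    congr 1
    refine Fintype.sum_equiv (Equiv.mulLeft x) _ _ fun y => ?_
    simp [map_mul]
  have hee : e * e = e := by
    conv_lhs => rw [he]
    rw [Matrix.smul_mul, Finset.sum_mul, Finset.sum_congr rfl fun x _ => hρe x, Finset.sum_const,
      Finset.card_univ, ← Nat.card_eq_fintype_card, ← Nat.cast_smul_eq_nsmul ℂ, smul_smul,
      inv_mul_cancel₀ hDc, one_smul]
  have hte : e.trace = m := by
    rw [← hm, ip_rs_one, he, trace_smul, trace_sum, smul_eq_mul]
    congr 1
    exact Finset.sum_congr rfl fun x _ => (htr x).symm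
  have hff : (1 - e) * (1 - e) = 1 - e := by
    rw [mul_sub, sub_mul, sub_mul, one_mul, mul_one, one_mul, hee]; simp
  have htf : (1 - e).trace = n - m := by
    rw [trace_sub, hte]; simp
  have hA : m ≠ n := by
    intro h
    have h0 := idem_zero hff (by rw [htf, h, sub_self])
    have he1 : e = 1 := (sub_eq_zero.1 h0).symm
    have hK := hmax (ρ.ker ⊓ N) inferInstance (by
      intro x hx
      refine ⟨?_, hD hx⟩
      have := hρe ⟨x, hx⟩
      rw [he1, mul_one] at this
      exact this) inf_le_right
    apply ht
    intro x hx
    rw [← hK] at hx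
    rw [htr, htr, hx.1, map_one]
  refine ⟨hA, fun h => hA ?_⟩
  have h1 : (1 - e).trace = 1 := by rw [htf, ← h]; push_cast; ring
  have hψD : ∀ x : D, ψ x = n := by
    intro x
    rw [htr]
    refine trace_of_det hff h1 (by rw [sub_sub_cancel]; exact hρe x) ?_
    exact det_one hP (ρ.comp N.subtype) ⟨x, hD x.2⟩
  rw [ip_rs_one, Finset.sum_congr rfl fun x _ => hψD x, Finset.sum_const, Finset.card_univ,
    ← Nat.card_eq_fintype_card, nsmul_eq_mul, ← mul_assoc, inv_mul_cancel₀ hDc, one_mul] at hm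
  exact_mod_cast hm.symm

lemma ip_one_le (D : Subgroup G) {ψ : G → ℂ} (hψ : Irr ψ) {d m : ℕ} (hd : ψ 1 = d)
    (hm : ip (rs D ψ) 1 = m) : m ≤ d := by
  have : ∀ k : ℕ, k ≤ m → IsChar (rs D ψ - (k : ℂ) • 1) := by
    intro k
    induction k with
    | zero => intro _; simpa using ischar_rs D hψ.ischar
    | succ k ih =>
      intro hk
      have h1 := peel (ih (by omega)) irr_one (by
        rw [ip_sub_left, ip_smul_left, ip_irr_self irr_one, hm, mul_one, ← Nat.cast_sub (by omega)]
        have : m - k ≠ 0 := by omega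
        exact_mod_cast this)
      have e : rs D ψ - ((k + 1 : ℕ) : ℂ) • (1 : D → ℂ) = rs D ψ - (k : ℂ) • 1 - 1 := by
        push_cast; rw [add_smul, one_smul]; abel
      rw [e]; exact h1
  obtain ⟨j, hj⟩ := (this m le_rfl).deg
  have hj' : (d : ℂ) - m = j := by
    rw [← hj, Pi.sub_apply, rs_at_one, hd]; simp
  have : d = m + j := by
    have : (d : ℂ) = m + j := by rw [← hj']; ring
    exact_mod_cast this
  omega

/-- Case A. -/
theorem caseA (hP : commutator N = ⊤) (hU : U ⊔ N = ⊤)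
    (hmax : ∀ K : Subgroup G, K.Normal → U ⊓ N ≤ K → K ≤ N → K = N)
    (hidx : 10 * Nat.card U ≤ Nat.card G)
    (hdeg : ∀ χ : G → ℂ, Irr χ → ¬ Tr N χ → χ 1 ≠ 2 ∧ χ 1 ≠ 3) :
    0 ≤ ∑ χ ∈ (IF G).filter (fun χ => χ 1 ≠ 1), wt χ := by
  set M := (IF G).filter (fun χ => ¬ Tr N χ) with hM
  set A2 := (IN N).filter (fun χ => ¬ χ 1 = 1) with hA2
  have mM : ∀ χ, χ ∈ M ↔ Irr χ ∧ ¬ Tr N χ := by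
    intro χ; rw [hM, Finset.mem_filter, mem_IF]
  have mA : ∀ χ, χ ∈ A2 ↔ (Irr χ ∧ Tr N χ) ∧ χ 1 ≠ 1 := by
    intro χ; rw [hA2, Finset.mem_filter, mem_IN]
  have hsplit : (IF G).filter (fun χ => χ 1 ≠ 1) = A2 ∪ M := by
    ext χ
    rw [Finset.mem_union, mA, mM, Finset.mem_filter, mem_IF]
    constructor
    · rintro ⟨h1, h2⟩
      by_cases t : Tr N χ
      exacts [Or.inl ⟨⟨h1, t⟩, h2⟩, Or.inr ⟨h1, t⟩]
    · rintro (⟨⟨h1, t⟩, h2⟩ | ⟨h1, t⟩)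
      · exact ⟨h1, h2⟩
      · refine ⟨h1, fun h2 => (rs_irr_small N hP h1 t (Or.inl h2)).2.2 h2⟩
  have hd1 : Disjoint A2 M := by
    rw [Finset.disjoint_left]
    intro χ h1 h2
    exact ((mM χ).1 h2).2 ((mA χ).1 h1).1.2
  rw [hsplit, Finset.sum_union hd1]
  have hdg : ∀ χ : G → ℂ, ∃ n : ℕ, Irr χ → 0 < n ∧ χ 1 = n := by
    intro χ
    by_cases h : Irr χ
    · obtain ⟨n, h1⟩ := h.deg; exact ⟨n, fun _ => h1⟩
    · exact ⟨0, fun h' => absurd h' h⟩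
  choose b hb using hdg
  have hip : ∀ β ψ : G → ℂ, ∃ k : ℕ, Irr β → Irr ψ → ip (rs U β) (rs U ψ) = k := by
    intro β ψ
    by_cases h : Irr β ∧ Irr ψ
    · obtain ⟨k, hk⟩ := ip_nat (ischar_rs U h.1.ischar) (ischar_rs U h.2.ischar)
      exact ⟨k, fun _ _ => hk⟩
    · exact ⟨0, fun h1 h2 => absurd ⟨h1, h2⟩ h⟩
  choose a ha using hip
  have hr : pc U 1 - 1 = (((Nat.card U : ℝ)⁻¹ * Nat.card G - 1 : ℝ) : ℂ) := by
    rw [pc_one]; push_cast; rfl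
  have hmul : ∀ ψ ∈ M, 4 ≤ b ψ := by
    intro ψ hψ
    rw [mM] at hψ
    obtain ⟨p0, p1⟩ := hb ψ hψ.1
    obtain ⟨h2, h3⟩ := hdeg ψ hψ.1 hψ.2
    have h1 : ψ 1 ≠ 1 := fun h => (rs_irr_small N hP hψ.1 hψ.2 (Or.inl h)).2.2 h
    rw [p1] at h1 h2 h3
    have : b ψ ≠ 1 := by exact_mod_cast h1
    have : b ψ ≠ 2 := by exact_mod_cast h2
    have : b ψ ≠ 3 := by exact_mod_cast h3
    omega
  have hmain := charge A2 M b b a ((Nat.card U : ℝ)⁻¹ * Nat.card G - 1) (by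
    have h1 : (10 : ℝ) * Nat.card U ≤ Nat.card G := by exact_mod_cast hidx
    have h2 : (0 : ℝ) < Nat.card U := by exact_mod_cast Nat.card_pos
    have : (10 : ℝ) ≤ (Nat.card U : ℝ)⁻¹ * Nat.card G := by
      rw [inv_mul_eq_div, le_div_iff₀ h2]; exact h1
    linarith) (by
    intro β hβ
    rw [mA] at hβ
    obtain ⟨p0, p1⟩ := hb β hβ.1.1
    have h1 := hβ.2
    rw [p1] at h1
    have : b β ≠ 1 := by exact_mod_cast h1
    omega) hmul (by
    intro β hβ
    rw [mA] at hβ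
    have h := f1 N U hU hβ.1.1 hβ.1.2
    rw [hr, (hb β hβ.1.1).2] at h
    have e : ∀ ψ ∈ M, ip (rs U β) (rs U ψ) * ψ 1 = (((a β ψ : ℝ) * b ψ : ℝ) : ℂ) := by
      intro ψ hψ
      rw [mM] at hψ
      rw [ha β ψ hβ.1.1 hψ.1, (hb ψ hψ.1).2]; push_cast; rfl
    rw [← hM, Finset.sum_congr rfl e] at h
    exact_mod_cast h) (by
    intro ψ hψ
    have hd4 := hmul ψ hψ
    rw [mM] at hψ
    have h := f2 N U hU hψ.1
    obtain ⟨m, hm⟩ := ip_nat (ischar_rs (U ⊓ N) hψ.1.ischar) irr_one.ischar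
    have k1 := ip_one_le (U ⊓ N) hψ.1 (hb ψ hψ.1).2 hm
    obtain ⟨k2, k3⟩ := mult_bound N hP (U ⊓ N) inf_le_right hmax hψ.1 hψ.2 (hb ψ hψ.1).2 hm
    have e : ∀ β ∈ IN N, β 1 * ip (rs U β) (rs U ψ) = ((b β * a β ψ : ℕ) : ℂ) := by
      intro β hβ
      rw [mem_IN] at hβ
      rw [ha β ψ hβ.1 hψ.1, (hb β hβ.1).2]; push_cast; rfl
    rw [Finset.sum_congr rfl e, hm] at h
    have h' : ∑ β ∈ IN N, b β * a β ψ = m := by exact_mod_cast h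
    have h'' : ∑ β ∈ A2, b β * a β ψ ≤ m := by
      rw [← h']
      exact Finset.sum_le_sum_of_subset (Finset.filter_subset _ _)
    have : ∑ β ∈ A2, b β * a β ψ + 2 ≤ b ψ := by omega
    exact_mod_cast this)
  refine le_of_le_of_eq hmain ?_
  congr 1
  · refine Finset.sum_congr rfl fun β hβ => ?_
    rw [wt_of (hb β ((mA β).1 hβ).1.1).2]
  · refine Finset.sum_congr rfl fun β hβ => ?_
    rw [wt_of (hb β ((mM β).1 hβ).1).2]

end caseA
end ACD

set_option linter.unusedSectionVars false
set_option linter.unusedVariables false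
namespace ACD

lemma perf_range_le {H K : Type*} [Group H] [Group K] (hP : commutator H = ⊤) (f : H →* K) :
    f.range ≤ commutator K := by
  rw [MonoidHom.range_eq_map, ← hP, commutator_def, Subgroup.map_commutator, commutator_def]
  exact Subgroup.commutator_mono le_top le_top

lemma perf_hom_one {H K : Type*} [Group H] [Group K] (hP : commutator H = ⊤) (f : H →* K)
    (hc : ∀ a b : K, a * b = b * a) (h : H) : f h = 1 := by
  have h1 := perf_range_le hP f ⟨h, rfl⟩
  have h2 : commutator K = ⊥ := by
    rw [commutator_eq_bot_iff_center_eq_top, eq_top_iff]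
    intro x _
    exact Subgroup.mem_center_iff.2 fun y => hc _ _
  rw [h2] at h1
  simpa using h1

section
variable {H : Type*} [Group H] [Finite H]

structure Good (H : Type*) [Group H] : Prop where
  perf : commutator H = ⊤
  nt : Nontrivial H
  char : ∀ K : Subgroup H, K.Characteristic → K = ⊥ ∨ K = ⊤

lemma Good.not_solv (h : Good H) : ¬ Group.IsSolvable H := by
  intro hs
  haveI := h.nt
  exact (Group.IsSolvable.commutator_lt_top_of_nontrivial H).ne h.perf

lemma ker_char (p : ℕ) : (MulAction.toPermHom H (Sylow p H)).ker.Characteristic := by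
  rw [Subgroup.characteristic_iff_map_le]
  rintro φ _ ⟨g, hg, rfl⟩
  have hg' : ∀ Q : Sylow p H, g • Q = Q := fun Q => by
    have := DFunLike.congr_fun (MonoidHom.mem_ker.1 hg) Q
    simpa using this
  rw [MonoidHom.mem_ker]
  ext1 P
  simp only [MonoidHom.coe_coe, MulAction.toPermHom_apply, MulAction.toPerm_apply,
    Equiv.Perm.coe_one, id_eq]
  let ψ : MulAut H := φ
  have e : P = ψ • (ψ⁻¹ • P) := by rw [smul_inv_smul]
  have c : MulAut.conj (ψ g) * ψ = ψ * MulAut.conj g := by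
    ext x; simp
  change ψ g • P = P
  rw [Sylow.smul_def, e, ← mul_smul, c, mul_smul, ← Sylow.smul_def, hg']

lemma sup_char (p : ℕ) : (⨆ P : Sylow p H, (P : Subgroup H)).Characteristic := by
  rw [Subgroup.characteristic_iff_map_le]
  intro φ
  rw [Subgroup.map_iSup]
  refine iSup_le fun P => ?_
  let ψ : MulAut H := φ
  exact le_iSup (fun P : Sylow p H => (P : Subgroup H)) (ψ • P)

lemma Good.not_pgroup (h : Good H) {p : ℕ} [Fact p.Prime] (hp : IsPGroup p H) : False := by
  haveI := hp.isNilpotent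
  exact h.not_solv inferInstance

lemma sylow_ne_bot {p : ℕ} [Fact p.Prime] (hp : p ∣ Nat.card H) (P : Sylow p H) :
    (P : Subgroup H) ≠ ⊥ := P.ne_bot_of_dvd_card hp

lemma Good.not_normal (h : Good H) {p : ℕ} [Fact p.Prime] (hp : p ∣ Nat.card H) (P : Sylow p H) :
    ¬ (P : Subgroup H).Normal := by
  intro hn
  rcases h.char _ (P.characteristic_of_normal hn) with h1 | h1
  · exact sylow_ne_bot hp P h1
  · have := P.2
    rw [h1] at this
    exact h.not_pgroup (p := p) (this.of_equiv Subgroup.topEquiv)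

lemma Good.normalizer_ne_top (h : Good H) {p : ℕ} [Fact p.Prime] (hp : p ∣ Nat.card H)
    (P : Sylow p H) : Subgroup.normalizer (P : Set H) ≠ ⊤ := by
  intro hn
  exact h.not_normal hp P (Subgroup.normalizer_eq_top_iff.1 hn)

lemma Good.ker_bot (h : Good H) {p : ℕ} [Fact p.Prime] (hp : p ∣ Nat.card H) :
    (MulAction.toPermHom H (Sylow p H)).ker = ⊥ := by
  rcases h.char _ (ker_char p) with h1 | h1
  · exact h1
  · exfalso
    obtain ⟨P⟩ := Sylow.nonempty (p := p) (G := H)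
    apply h.normalizer_ne_top hp P
    rw [eq_top_iff]
    intro g _
    rw [← Sylow.smul_eq_iff_mem_normalizer]
    have hg : g ∈ (MulAction.toPermHom H (Sylow p H)).ker := by rw [h1]; trivial
    have := DFunLike.congr_fun (MonoidHom.mem_ker.1 hg) P
    simpa using this

/-- action into the alternating group -/
noncomputable def altHom (h : Good H) (p : ℕ) [Fintype (Sylow p H)] :
    H →* alternatingGroup (Sylow p H) :=
  (MulAction.toPermHom H (Sylow p H)).codRestrict _ (fun g => by
    rw [Equiv.Perm.mem_alternatingGroup]
    exact perf_hom_one h.perf (Equiv.Perm.sign.comp (MulAction.toPermHom H (Sylow p H)))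
      mul_comm g)

lemma altHom_inj (h : Good H) {p : ℕ} [Fact p.Prime] (hp : p ∣ Nat.card H)
    [Fintype (Sylow p H)] : Function.Injective (altHom h p) := by
  rw [injective_iff_map_eq_one]
  intro g hg
  have h1 : g ∈ (MulAction.toPermHom H (Sylow p H)).ker := congrArg Subtype.val hg
  rw [h.ker_bot hp] at h1
  simpa using h1

lemma Good.not_comm (h : Good H) (hc : ∀ a b : H, a * b = b * a) : False := by
  have := h.nt
  obtain ⟨x, hx⟩ := exists_ne (1 : H)
  exact hx (perf_hom_one h.perf (MonoidHom.id H) hc x)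

lemma Good.five_le (h : Good H) {p : ℕ} [Fact p.Prime] (hp : p ∣ Nat.card H) :
    5 ≤ Nat.card (Sylow p H) := by
  by_contra hlt
  have := Fintype.ofFinite (Sylow p H)
  have hinj := altHom_inj h hp
  apply h.not_comm
  intro a b
  apply hinj
  rw [map_mul, map_mul]
  rcases Nat.lt_or_ge 3 (Nat.card (Sylow p H)) with h4 | h3
  · have h4 : Nat.card (Sylow p H) = 4 := by omega
    have hr := perf_range_le h.perf (altHom h p)
    rw [← alternatingGroup.kleinFour_eq_commutator h4] at hr
    have k := alternatingGroup.kleinFour_isKleinFour h4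
    have := mul_comm_of_exponent_two k.exponent_two (⟨altHom h p a, hr ⟨a, rfl⟩⟩)
      ⟨altHom h p b, hr ⟨b, rfl⟩⟩
    exact congrArg Subtype.val this
  · exact (alternatingGroup.isMulCommutative_of_card_le_three h3).is_comm.comm _ _

lemma card_sylow_dvd {p : ℕ} [Fact p.Prime] : Nat.card (Sylow p H) ∣ Nat.card H := by
  obtain ⟨P⟩ := Sylow.nonempty (p := p) (G := H)
  exact P.card_dvd_index.trans (Subgroup.index_dvd_card _)

lemma Good.s3 (h : Good H) (h3 : 3 ∣ Nat.card H) (h9 : Nat.card (Sylow 3 H) = 7)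
    (h7 : Nat.card (Sylow 7 H) = 8) : False := by
  have : Fact (Nat.Prime 7) := ⟨by norm_num⟩
  have hd7 : 7 ∣ Nat.card H := h9 ▸ card_sylow_dvd
  obtain ⟨Q⟩ := Sylow.nonempty (p := 3) (G := H)
  obtain ⟨P, hP⟩ := Q.2.nonempty_fixed_point_of_prime_not_dvd_card (Sylow 7 H)
    (by rw [h7]; norm_num)
  rw [Subgroup.sylow_mem_fixedPoints_iff] at hP
  apply h.normalizer_ne_top hd7 P
  obtain ⟨k, hk⟩ := P.2.card_orbit Q
  have hle : Nat.card (MulAction.orbit P Q) ≤ 7 := by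
    refine (?_ : _ ≤ _).trans h9.le; exact Nat.card_le_card_of_injective _ (Subtype.val_injective (p := (· ∈ MulAction.orbit P Q)))
  have hk0 : k ≠ 0 := by
    rintro rfl
    rw [pow_zero] at hk
    have hQ : Q ∈ MulAction.fixedPoints P (Sylow 3 H) := by
      rw [← MulAction.subsingleton_orbit_iff_mem_fixedPoints, ← Set.subsingleton_coe]
      exact (Nat.card_eq_one_iff_unique.1 hk).1
    have hm := P.2.card_modEq_card_fixedPoints (Sylow 3 H)
    rw [h9] at hm
    have hpos : 0 < Nat.card (MulAction.fixedPoints P (Sylow 3 H)) := by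
      have : Nonempty (MulAction.fixedPoints P (Sylow 3 H)) := ⟨⟨Q, hQ⟩⟩
      exact Nat.card_pos
    have hle' : Nat.card (MulAction.fixedPoints P (Sylow 3 H)) ≤ 7 := by
      refine (?_ : _ ≤ _).trans h9.le; exact Nat.card_le_card_of_injective _
        (Subtype.val_injective (p := (· ∈ MulAction.fixedPoints P (Sylow 3 H))))
    have he : Nat.card (MulAction.fixedPoints P (Sylow 3 H)) = 7 := by
      have : (7 : ℕ) % 7 = Nat.card (MulAction.fixedPoints P (Sylow 3 H)) % 7 := hm
      omega
    have hall : MulAction.fixedPoints P (Sylow 3 H) = Set.univ := by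
      apply Set.eq_of_subset_of_ncard_le (Set.subset_univ _)
      · rw [Set.ncard_univ, h9, ← Nat.card_coe_set_eq, he]
    apply sylow_ne_bot hd7 P
    rw [eq_bot_iff, ← h.ker_bot h3]
    intro x hx
    rw [MonoidHom.mem_ker]
    ext1 R
    have hR : R ∈ MulAction.fixedPoints P (Sylow 3 H) := by rw [hall]; trivial
    exact hR ⟨x, hx⟩
  have hk1 : Nat.card (MulAction.orbit P Q) = 7 := by
    apply le_antisymm hle
    rw [hk]
    exact Nat.le_self_pow hk0 7
  have horb : MulAction.orbit P Q = Set.univ := by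
    apply Set.eq_of_subset_of_ncard_le (Set.subset_univ _)
    · rw [Set.ncard_univ, h9, ← Nat.card_coe_set_eq, hk1]
  rcases h.char _ (sup_char 3) with hb | ht
  · exfalso
    apply sylow_ne_bot h3 Q
    rw [eq_bot_iff, ← hb]
    exact le_iSup (fun P : Sylow 3 H => (P : Subgroup H)) Q
  · rw [eq_top_iff, ← ht]
    refine iSup_le fun R => ?_
    have hR : R ∈ MulAction.orbit P Q := by rw [horb]; trivial
    obtain ⟨x, rfl⟩ := hR
    exact Sylow.smul_le hP ⟨x, Subgroup.le_normalizer x.2⟩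

lemma Good.s4 (h : Good H) (h2 : Nat.card (Sylow 2 H) = 7)
    (h7 : Nat.card (Sylow 7 H) = 8) (h3 : ¬ 3 ∣ Nat.card H) (h5 : ¬ 5 ∣ Nat.card H) : False := by
  have : Fact (Nat.Prime 7) := ⟨by norm_num⟩
  have hd7 : 7 ∣ Nat.card H := h2 ▸ card_sylow_dvd
  have hd8 : 8 ∣ Nat.card H := h7 ▸ card_sylow_dvd
  have := Fintype.ofFinite (Sylow 2 H)
  have hd2 : 2 ∣ Nat.card H := by omega
  have hnt : Nontrivial (Sylow 2 H) := by
    rw [← Finite.one_lt_card_iff_nontrivial, h2]; norm_num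
  have hc : Nat.card H ∣ 2520 := by
    have := Subgroup.card_dvd_of_injective _ (altHom_inj h hd2)
    rw [nat_card_alternatingGroup, h2] at this
    simpa [Nat.factorial] using this
  have hc56 : Nat.card H ∣ 56 := by
    have c3 : Nat.Coprime (Nat.card H) 3 := ((Nat.Prime.coprime_iff_not_dvd (by norm_num)).2 h3).symm
    have c5 : Nat.Coprime (Nat.card H) 5 := ((Nat.Prime.coprime_iff_not_dvd (by norm_num)).2 h5).symm
    have c45 : Nat.Coprime (Nat.card H) (3 * 3 * 5) := (c3.mul_right c3).mul_right c5
    exact c45.dvd_of_dvd_mul_right (by simpa using hc)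
  have h56 : Nat.card H = 56 := by
    have := Nat.le_of_dvd (by norm_num) hc56
    have : 0 < Nat.card H := Nat.card_pos
    omega
  obtain ⟨P⟩ := Sylow.nonempty (p := 7) (G := H)
  have hi : 8 ∣ (P : Subgroup H).index := h7 ▸ P.card_dvd_index
  have hp : 7 ∣ Nat.card P := P.dvd_card_of_dvd_card hd7
  have hm := (P : Subgroup H).index_mul_card
  obtain ⟨a, ha⟩ := hi
  obtain ⟨b, hb⟩ := hp
  change _ * Nat.card P = _ at hm
  rw [ha, hb, h56] at hm
  have hab : a * b = 1 := by nlinarith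
  have hb1 : b = 1 := Nat.eq_one_of_mul_eq_one_left hab
  rw [hb1] at hb
  have hN : Subgroup.normalizer (P : Set H) = P := by
    symm
    apply Subgroup.eq_of_le_of_card_ge Subgroup.le_normalizer
    have h1 := (Subgroup.normalizer (P : Set H)).index_mul_card
    rw [← P.card_eq_index_normalizer, h7, h56] at h1
    change Nat.card (Subgroup.normalizer (P : Set H)) ≤ Nat.card P
    omega
  have hcyc : IsCyclic P := isCyclic_of_prime_card (p := 7) (by simpa using hb)
  have hNC : Subgroup.normalizer (P : Set H) ≤ Subgroup.centralizer (P : Set H) := by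
    rw [hN]
    intro x hx
    rw [Subgroup.mem_centralizer_iff]
    intro y hy
    have := hcyc.isMulCommutative.is_comm.comm (⟨y, hy⟩ : P) ⟨x, hx⟩
    exact congrArg Subtype.val this
  have hB := MonoidHom.ker_transferSylow_isComplement' P hNC
  have hk : (MonoidHom.transferSylow P hNC).ker = ⊤ := by
    rw [eq_top_iff]
    intro x _
    exact perf_hom_one h.perf _ hcyc.isMulCommutative.is_comm.comm x
  rw [hk, Subgroup.isComplement'_top_left] at hB
  exact sylow_ne_bot hd7 P hB

lemma Good.main (h : Good H) : ∃ p : ℕ, ∃ _ : Fact p.Prime, ∃ P : Sylow p H,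
    (P : Subgroup H) ≠ ⊥ ∧ 10 ≤ (Subgroup.normalizer (P : Set H)).index := by
  by_contra hcon
  push Not at hcon
  have key : ∀ p : ℕ, p.Prime → p ∣ Nat.card H →
      5 ≤ Nat.card (Sylow p H) ∧ Nat.card (Sylow p H) ≤ 9 ∧ Nat.card (Sylow p H) % p = 1 % p ∧
      Nat.card (Sylow p H) ∣ Nat.card H := by
    intro p hp hd
    have : Fact p.Prime := ⟨hp⟩
    obtain ⟨P⟩ := Sylow.nonempty (p := p) (G := H)
    refine ⟨h.five_le hd, ?_, card_sylow_modEq_one p H, card_sylow_dvd⟩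
    have := hcon p ⟨hp⟩ P (sylow_ne_bot hd P)
    rw [← P.card_eq_index_normalizer] at this
    omega
  have k7 : 7 ∣ Nat.card H → Nat.card (Sylow 7 H) = 8 := by
    intro hd
    have := key 7 (by norm_num) hd
    omega
  have k3 : ¬ 3 ∣ Nat.card H := by
    intro hd
    obtain ⟨a, b, c, d⟩ := key 3 (by norm_num) hd
    have e : Nat.card (Sylow 3 H) = 7 := by omega
    exact h.s3 hd e (k7 (e ▸ d))
  have k5 : ¬ 5 ∣ Nat.card H := by
    intro hd
    obtain ⟨a, b, c, d⟩ := key 5 (by norm_num) hd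
    have e : Nat.card (Sylow 5 H) = 6 := by omega
    rw [e] at d
    exact k3 (by omega)
  have k2 : 2 ∣ Nat.card H → Nat.card (Sylow 2 H) = 7 := by
    intro hd
    obtain ⟨a, b, c, d⟩ := key 2 (by norm_num) hd
    have : Nat.card (Sylow 2 H) ≠ 5 := fun e => k5 (e ▸ d)
    have : Nat.card (Sylow 2 H) ≠ 9 := fun e => k3 (by rw [e] at d; omega)
    omega
  have hnt := h.nt
  have hne : Nat.card H ≠ 1 := (Finite.one_lt_card (α := H)).ne'
  have hpr := Nat.minFac_prime hne
  have hpd := Nat.minFac_dvd (Nat.card H)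
  generalize (Nat.card H).minFac = p at hpr hpd
  obtain ⟨a, b, c, d⟩ := key p hpr hpd
  have h27 : 2 ∣ Nat.card H ∧ 7 ∣ Nat.card H := by
    have hp8 : p ≤ 8 := by
      by_contra hh
      by_cases h9 : p = 9
      · subst h9; revert hpr; norm_num
      · rw [Nat.mod_eq_of_lt (by omega), Nat.mod_eq_of_lt (by omega)] at c
        omega
    interval_cases p
    · exact absurd hpr (by norm_num)
    · exact absurd hpr (by norm_num)
    · exact ⟨hpd, (k2 hpd) ▸ d⟩
    · exact absurd hpd k3
    · exact absurd hpr (by norm_num)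
    · exact absurd hpd k5
    · exact absurd hpr (by norm_num)
    · refine ⟨?_, hpd⟩
      rw [k7 hpd] at d
      omega
    · exact absurd hpr (by norm_num)
  exact h.s4 (k2 h27.1) (k7 h27.2) k3 k5
end
end ACD

set_option linter.unusedSectionVars false
set_option linter.unusedVariables false
namespace ACD
section
variable {G : Type} [Group G] [Fintype G]

lemma exists_U (N : Subgroup G) [N.Normal] (hP : commutator N = ⊤) (hN : N ≠ ⊥) :
    ∃ U : Subgroup G, U ⊔ N = ⊤ ∧
      (∀ K : Subgroup G, K.Normal → U ⊓ N ≤ K → K ≤ N → K = N) ∧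
      10 * Nat.card U ≤ Nat.card G := by
  obtain ⟨L, hL⟩ := (Set.toFinite {K : Subgroup G | K.Normal ∧ K < N}).exists_maximal
    ⟨⊥, inferInstance, bot_lt_iff_ne_bot.2 hN⟩
  have hLn : L.Normal := hL.1.1
  have hLN : L < N := hL.1.2
  have hmax : ∀ K : Subgroup G, K.Normal → K ≤ N → K ≠ N → K ≤ L ∨ ¬ L ≤ K := by
    intro K h1 h2 h3
    by_cases h : L ≤ K
    · exact Or.inl (hL.2 ⟨h1, lt_of_le_of_ne h2 h3⟩ h)
    · exact Or.inr h
  let q := QuotientGroup.mk' L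
  have hq : Function.Surjective q := QuotientGroup.mk'_surjective L
  have hqk : q.ker = L := QuotientGroup.ker_mk' L
  let M := N.map q
  have hMn : M.Normal := Subgroup.Normal.map inferInstance q hq
  have hMc : M.comap q = N := Subgroup.comap_map_eq_self (by rw [hqk]; exact hLN.le)
  have hgood : Good M := by
    refine ⟨?_, ?_, ?_⟩
    · have := perf_range_le hP (q.subgroupMap N)
      rw [MonoidHom.range_eq_top.2 (q.subgroupMap_surjective N)] at this
      exact top_le_iff.1 this
    · rw [Subgroup.nontrivial_iff_ne_bot]
      intro h
      rw [Subgroup.map_eq_bot_iff, hqk] at h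
      exact absurd hLN (not_lt_of_ge h)
    · intro K hK
      have h1 : (K.map M.subtype).Normal := inferInstance
      have h2 : ((K.map M.subtype).comap q).Normal := inferInstance
      have h3 : (K.map M.subtype).comap q ≤ N := by
        rw [← hMc]; exact Subgroup.comap_mono (Subgroup.map_subtype_le K)
      have h4 : L ≤ (K.map M.subtype).comap q := by
        exact hqk.ge.trans (Subgroup.ker_le_comap _ _)
      by_cases h5 : (K.map M.subtype).comap q = N
      · right
        have h6 : K.map M.subtype = M := by
          rw [← Subgroup.map_comap_eq_self_of_surjective hq (K.map M.subtype), h5]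
        rw [eq_top_iff]
        intro x _
        have : (x : G ⧸ L) ∈ K.map M.subtype := by rw [h6]; exact x.2
        obtain ⟨y, hy, e⟩ := this
        have : y = x := Subtype.ext e
        exact this ▸ hy
      · left
        rcases hmax _ h2 h3 h5 with h6 | h6
        · have h7 : K.map M.subtype ≤ ⊥ := by
            rw [← Subgroup.map_comap_eq_self_of_surjective hq (K.map M.subtype),
              le_bot_iff, Subgroup.map_eq_bot_iff, hqk]
            exact h6
          rw [le_bot_iff, Subgroup.map_eq_bot_iff, Subgroup.ker_subtype, le_bot_iff] at h7
          exact h7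
        · exact absurd h4 h6
  obtain ⟨p, hp, P, hP0, hP10⟩ := hgood.main
  let A := Subgroup.normalizer ((P : Subgroup M).map M.subtype : Set (G ⧸ L))
  have hF : A ⊔ M = ⊤ := P.normalizer_sup_eq_top
  refine ⟨A.comap q, ?_, ?_, ?_⟩
  · rw [← hMc, Subgroup.comap_sup_eq _ _ _ hq, hF, Subgroup.comap_top]
  · intro K hK h1 h2
    by_contra h3
    have h4 : ((P : Subgroup M).map M.subtype).comap q ≤ K := by
      refine le_trans (le_inf ?_ ?_) h1
      · exact Subgroup.comap_mono Subgroup.le_normalizer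
      · conv_rhs => rw [← hMc]
        exact Subgroup.comap_mono (Subgroup.map_subtype_le _)
    have h5 : L ≤ K := (hqk.ge.trans (Subgroup.ker_le_comap _ _)).trans h4
    have h6 : K ≤ L := (hmax K hK h2 h3).resolve_right (not_not.2 h5)
    apply hP0
    have h7 : (P : Subgroup M).map M.subtype ≤ ⊥ := by
      rw [← Subgroup.map_comap_eq_self_of_surjective hq ((P : Subgroup M).map M.subtype),
        le_bot_iff, Subgroup.map_eq_bot_iff, hqk]
      exact h4.trans h6
    rw [le_bot_iff, Subgroup.map_eq_bot_iff, Subgroup.ker_subtype, le_bot_iff] at h7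
    exact h7
  · have h1 : A.subgroupOf M = Subgroup.normalizer (P : Set M) := by
      have h := Subgroup.subgroupOf_normalizer_eq (Subgroup.map_subtype_le (P : Subgroup M))
      have e : ((P : Subgroup M).map M.subtype).subgroupOf M = P :=
        Subgroup.comap_map_eq_self_of_injective M.subtype_injective _
      rw [e] at h
      exact h
    have h2 : (A.subgroupOf M).index ≤ A.index := by
      have := Subgroup.relIndex_le_of_le_right (H := A) (K := M) (L := ⊤) le_top
        (by rw [Subgroup.relIndex_top_right]; exact Subgroup.index_ne_zero_of_finite)
      rwa [Subgroup.relIndex_top_right] at this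
    have h3 : (A.comap q).index = A.index := Subgroup.index_comap_of_surjective _ hq
    rw [← (A.comap q).index_mul_card]
    apply Nat.mul_le_mul_right
    rw [h3]
    rw [h1] at h2
    omega

lemma exists_perfect (h : ¬ Group.IsSolvable G) :
    ∃ N : Subgroup G, N.Normal ∧ commutator N = ⊤ ∧ N ≠ ⊥ := by
  have hst : ∃ n, derivedSeries G n = derivedSeries G (n + 1) := by
    by_contra hcon
    push Not at hcon
    have hlt : ∀ n, Nat.card (derivedSeries G n) + n ≤ Nat.card G := by
      intro n
      induction n with
      | zero => simp
      | succ n ih =>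
        have h1 : derivedSeries G (n + 1) < derivedSeries G n :=
          lt_of_le_of_ne (derivedSeries_antitone G (Nat.le_succ n)) (hcon n).symm
        have h2 : Nat.card (derivedSeries G (n + 1)) < Nat.card (derivedSeries G n) := by
          by_contra h3
          exact h1.ne (Subgroup.eq_of_le_of_card_ge h1.le (not_lt.1 h3))
        omega
    have := hlt (Nat.card G)
    have h0 : 0 < Nat.card (derivedSeries G (Nat.card G)) := Nat.card_pos
    omega
  obtain ⟨n, hn⟩ := hst
  refine ⟨derivedSeries G n, inferInstance, ?_, ?_⟩
  · apply Subgroup.map_injective (derivedSeries G n).subtype_injective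
    rw [commutator_def, Subgroup.map_commutator, ← MonoidHom.range_eq_map, Subgroup.range_subtype]
    exact hn.symm
  · intro hb
    exact h ⟨n, hb⟩

lemma exists_not_Tr (N : Subgroup G) (hN : N ≠ ⊥) : ∃ χ : G → ℂ, Irr χ ∧ ¬ Tr N χ := by
  by_contra hcon
  push Not at hcon
  obtain ⟨⟨n, hn⟩, hn1⟩ := Subgroup.ne_bot_iff_exists_ne_one.1 hN
  have h1 : n ≠ 1 := fun h => hn1 (Subtype.ext h)
  have he := expand (ischar_reg (G := G)).cls
  have e1 := congrFun he n
  have e2 := congrFun he 1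
  simp only [Finset.sum_apply, Pi.smul_apply, if_true, if_neg h1] at e1 e2
  have : (0 : ℂ) = Nat.card G := by
    refine e1.trans (Eq.trans ?_ e2.symm)
    exact Finset.sum_congr rfl fun χ hχ => by rw [hcon χ (mem_IF.1 hχ) n hn]
  have h0 : Nat.card G ≠ 0 := Nat.card_pos.ne'
  exact h0 (by exact_mod_cast this.symm)

lemma main_ineq (h : ¬ Group.IsSolvable G) :
    0 ≤ ∑ χ ∈ (IF G).filter (fun χ => χ 1 ≠ 1), wt χ ∧
      ((IF G).filter (fun χ => χ 1 ≠ 1)).Nonempty := by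
  obtain ⟨N, hNn, hP, hN⟩ := exists_perfect h
  constructor
  · by_cases hd : ∃ χ : G → ℂ, Irr χ ∧ ¬ Tr N χ ∧ (χ 1 = 2 ∨ χ 1 = 3)
    · exact caseB N hP hd
    · obtain ⟨U, h1, h2, h3⟩ := exists_U N hP hN
      refine caseA N U hP h1 h2 h3 fun χ hi ht => ⟨fun e => hd ⟨χ, hi, ht, Or.inl e⟩,
        fun e => hd ⟨χ, hi, ht, Or.inr e⟩⟩
  · obtain ⟨χ, hi, ht⟩ := exists_not_Tr N hN
    exact ⟨χ, Finset.mem_filter.2 ⟨mem_IF.2 hi, fun e => (rs_irr_small N hP hi ht (Or.inl e)).2.2 e⟩⟩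
end
end ACD

/-- If `G` is a finite non-abelian group with `acd*(G) < 29/8` (the average degree of the
non-linear irreducible complex characters), then `G` is solvable. -/
theorem stmt9 (G : Type) [Group G] [Fintype G]
    (hnonab : ¬ ∀ a b : G, a * b = b * a)
    (S : Finset (G → ℂ))
    (hS : ∀ χ : G → ℂ, χ ∈ S ↔ (IsIrrChar G χ ∧ 1 < (χ 1).re))
    (havg : (∑ χ ∈ S, (χ 1).re) / S.card < 29 / 8) :
    IsSolvable G := by
  by_contra hns
  obtain ⟨h1, h2⟩ := ACD.main_ineq (G := G) hns
  have hSe : (ACD.IF G).filter (fun χ => χ 1 ≠ 1) = S := by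
    ext χ
    rw [Finset.mem_filter, ACD.mem_IF, hS]
    refine and_congr_right fun hi => ?_
    obtain ⟨n, hn, e⟩ := ACD.Irr.deg hi
    rw [e, Complex.natCast_re]
    norm_cast
    omega
  rw [hSe] at h1 h2
  have hc : (0 : ℝ) < S.card := by exact_mod_cast h2.card_pos
  rw [div_lt_iff₀ hc] at havg
  simp only [ACD.wt] at h1
  rw [Finset.sum_sub_distrib, ← Finset.mul_sum, Finset.sum_const, nsmul_eq_mul] at h1
  linarith
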